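/- Let Ω be a bounded simply connected domain in ℂ whose boundary ∂Ω is a simple closed C^∞-smooth curve (the image of a C^∞ embedding of the circle into ℂ with nonvanishing derivative). For h holomorphic and square-integrable on Ω, define a holomorphic function H on the exterior ℂ ∖ cl(Ω) by conj(H(w)) = ∬_{z ∈ Ω} h(z)/(\bar{z} − \bar{w}) dA_z. Then for every positive integer N there exist a positive integer M and a constant C > 0, depending only on Ω and N, such that: for every square-integrable holomorphic h on Ω, if the norm ‖H‖^M := sup over w ∈ ℂ ∖ cl(Ω) and 0 ≤ k ≤ M of ‖(iterated derivative of order k of H)(w)‖ is finite, then the norm ‖h‖_N := sup over z ∈ Ω and 0 ≤ k ≤ N of ‖(iterated derivative of order k of h)(z)‖ is finite and satisfies ‖h‖_N ≤ C ‖H‖^M. -/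

import Mathlib

/-!
By Green's identity, `∫_Ω conj h · ∂φ` depends only on the boundary values of the Lipschitz
function `φ`. For `φ = (z - w)⁻ᵐ⁻¹` with `w` outside `Ω` it is a multiple of the `(m + 1)`-st
derivative of `H` at `w`; for `φ` equal to `conj (z - a)⁻ᵐ⁻¹` near `∂Ω`, with `a` inside `Ω`, it is
a multiple of the conjugate of the `m`-th derivative of `h` at `a`. When `a` is close to `∂Ω`, let
`w` be its Schwarz reflection, or a Taylor approximation of it as the curve need not be analytic.
On the curve the first kernel is then a combination of the second ones of orders at most `m` up to a
remainder with Lipschitz constant independent of `a`, and the leading coefficient is bounded away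
from `0`. Induction on `m` bounds the derivatives of `h` by `‖H‖ + ∫_Ω |h|`.

The `L¹` norm is absorbed by duality. Pairing `H` with `∂` of `conj h` times a cutoff that vanishes
near `∂Ω` recovers `∫_Ω |h|²`. Only the boundary layer contributes; there the Cauchy transform,
being Hölder continuous, is close to its exterior values, so `∫_Ω |h|² ≤ C sup |h| · sup |H|`.
Together with the previous bound at order `0` and the Cauchy–Schwarz inequality this bounds
`∫_Ω |h|` by a multiple of `‖H‖`.
-/

open MeasureTheory Finset

namespace ExteriorCauchy

open Filter Topology Metric
open scoped ComplexConjugate NNReal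

/-! ### Lipschitz functions of compact support -/

section Lipschitz

lemma lipschitzWith_mul_of_norm_le {X R : Type*} [PseudoMetricSpace X]
    [NonUnitalSeminormedCommRing R] {f g : X → R} {Kf Kg A B : ℝ≥0} (hf : LipschitzWith Kf f)
    (hg : LipschitzWith Kg g) (hA : ∀ x, g x ≠ 0 → ‖f x‖ ≤ A) (hB : ∀ x, ‖g x‖ ≤ B) :
    LipschitzWith (A * Kg + B * Kf) fun x => f x * g x := by
  have key (x y : X) (hx : g x ≠ 0) :
      dist (f x * g x) (f y * g y) ≤ (A * Kg + B * Kf : ℝ≥0) * dist x y := by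
    have hfxy : ‖f x - f y‖ ≤ Kf * dist x y := by simpa [dist_eq_norm] using hf.dist_le_mul x y
    have hgxy : ‖g x - g y‖ ≤ Kg * dist x y := by simpa [dist_eq_norm] using hg.dist_le_mul x y
    calc dist (f x * g x) (f y * g y)
        = ‖f x * (g x - g y) + g y * (f x - f y)‖ := by
          rw [dist_eq_norm, mul_sub, mul_sub, mul_comm (g y), mul_comm (g y), sub_add_sub_cancel]
      _ ≤ ‖f x‖ * ‖g x - g y‖ + ‖g y‖ * ‖f x - f y‖ :=
        (norm_add_le _ _).trans (add_le_add (norm_mul_le _ _) (norm_mul_le _ _))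
      _ ≤ A * (Kg * dist x y) + B * (Kf * dist x y) := by
        gcongr
        exacts [hA x hx, hB y]
      _ = (A * Kg + B * Kf : ℝ≥0) * dist x y := by push_cast; ring
  refine LipschitzWith.of_dist_le_mul fun x y => ?_
  by_cases hx : g x = 0
  · by_cases hy : g y = 0
    · simpa [hx, hy] using mul_nonneg (A * Kg + B * Kf).2 (dist_nonneg (x := x) (y := y))
    · rw [dist_comm, dist_comm x]
      exact key y x hy
  · exact key x y hx

lemma exists_lipschitzWith_mul_of_hasCompactSupport {X R : Type*} [PseudoMetricSpace X]
    [NormedCommRing R] [NormedSpace ℝ R] [FiniteDimensional ℝ R] {f g : X → R} {K : ℝ≥0}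
    (hf : LocallyLipschitzOn (tsupport g) f) (hg : LipschitzWith K g)
    (hc : HasCompactSupport g) : ∃ K', LipschitzWith K' fun x => f x * g x := by
  obtain ⟨Kf, hKf⟩ := hf.exists_lipschitzOnWith_of_compact hc.isCompact
  obtain ⟨F, hF, hFf⟩ := hKf.extend_finite_dimension
  obtain ⟨A, hA⟩ := hc.isCompact.exists_bound_of_continuousOn hF.continuous.continuousOn
  obtain ⟨B, hB⟩ := hg.continuous.bounded_above_of_compact_support hc
  have hFg : (fun x => f x * g x) = fun x => F x * g x := by
    ext x
    by_cases hx : g x = 0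
    · simp [hx]
    · rw [hFf (subset_tsupport g hx)]
  rw [hFg]
  exact ⟨_, lipschitzWith_mul_of_norm_le (A := A.toNNReal) (B := B.toNNReal) hF hg
    (fun x hx => (hA x (subset_tsupport g hx)).trans (Real.le_coe_toNNReal A))
    fun x => (hB x).trans (Real.le_coe_toNNReal B)⟩

variable {E F : Type*} [NormedAddCommGroup E] [NormedSpace ℝ E] [MeasurableSpace E]
  [BorelSpace E] {μ : Measure E} [μ.IsAddHaarMeasure] [NormedAddCommGroup F] [NormedSpace ℝ F]
  [FiniteDimensional ℝ F] {f : E → F} {K : ℝ≥0}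

lemma integrable_fderiv_apply_of_lipschitzWith (hf : LipschitzWith K f)
    (hc : HasCompactSupport f) (v : E) : Integrable (fun x => fderiv ℝ f x v) μ := by
  borelize F
  have hcv : HasCompactSupport fun x => fderiv ℝ f x v := hc.fderiv_apply (𝕜 := ℝ) v
  refine (Measure.integrableOn_of_bounded (s := tsupport fun x => fderiv ℝ f x v)
    (M := K * ‖v‖) hcv.isCompact.measure_lt_top.ne
    (measurable_fderiv_apply_const ℝ f v).aestronglyMeasurable
    (ae_of_all _ fun x => ?_)).integrable_of_forall_notMem_eq_zero
      fun x hx => image_eq_zero_of_notMem_tsupport (f := fun x => fderiv ℝ f x v) hx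
  exact ((fderiv ℝ f x).le_opNorm v).trans
    (mul_le_mul_of_nonneg_right (norm_fderiv_le_of_lipschitz ℝ hf) (norm_nonneg v))

lemma integral_fderiv_apply_eq_zero_of_lipschitzWith [FiniteDimensional ℝ E]
    (hf : LipschitzWith K f) (hc : HasCompactSupport f) (v : E) : ∫ x, fderiv ℝ f x v ∂μ = 0 := by
  refine SeparatingDual.eq_zero_of_forall_dual_eq_zero (R := ℝ) fun φ => ?_
  have hφf : LipschitzWith (‖φ‖₊ * K) (φ ∘ f) := φ.lipschitz.comp hf
  have hline := LipschitzWith.integral_lineDeriv_mul_eq (μ := μ)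
    (LipschitzWith.const (1 : ℝ)) hφf (hc.comp_left (map_zero φ)) (-v)
  have hconst (x : E) : lineDeriv ℝ (fun _ : E => (1 : ℝ)) x (-v) = 0 := by simp [lineDeriv]
  simp only [hconst, zero_mul, integral_zero, neg_neg, mul_one] at hline
  rw [← φ.integral_comp_comm (integrable_fderiv_apply_of_lipschitzWith hf hc v), hline]
  refine integral_congr_ae ?_
  filter_upwards [hf.ae_differentiableAt (μ := μ)] with x hx
  have hφ : HasFDerivAt (φ ∘ f) (φ.comp (fderiv ℝ f x)) x :=
    φ.hasFDerivAt.comp x hx.hasFDerivAt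
  rw [(hφ.hasLineDerivAt v).lineDeriv, ContinuousLinearMap.comp_apply]

end Lipschitz

/-! ### The Wirtinger derivative and Green's identity -/

/-- The Wirtinger derivative `∂f/∂z = (∂f/∂x - i ∂f/∂y) / 2` of a function of a complex variable
which need only be differentiable over the reals; it is junk where `f` is not. -/
noncomputable def wirtingerDeriv (f : ℂ → ℂ) (z : ℂ) : ℂ :=
  (fderiv ℝ f z 1 - Complex.I * fderiv ℝ f z Complex.I) / 2

section WirtingerDeriv

variable {f g : ℂ → ℂ} {z : ℂ} {K : ℝ≥0}

lemma norm_wirtingerDeriv_le (f : ℂ → ℂ) (z : ℂ) : ‖wirtingerDeriv f z‖ ≤ ‖fderiv ℝ f z‖ := by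
  have h1 : ‖fderiv ℝ f z 1‖ ≤ ‖fderiv ℝ f z‖ := by simpa using (fderiv ℝ f z).le_opNorm 1
  have hI : ‖Complex.I * fderiv ℝ f z Complex.I‖ ≤ ‖fderiv ℝ f z‖ := by
    simpa using (fderiv ℝ f z).le_opNorm Complex.I
  rw [wirtingerDeriv, norm_div, Complex.norm_two, div_le_iff₀ two_pos]
  linarith [norm_sub_le (fderiv ℝ f z 1) (Complex.I * fderiv ℝ f z Complex.I)]

lemma norm_wirtingerDeriv_le_of_lipschitzWith (hf : LipschitzWith K f) :
    ‖wirtingerDeriv f z‖ ≤ K :=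
  (norm_wirtingerDeriv_le f z).trans (norm_fderiv_le_of_lipschitz ℝ hf)

lemma measurable_wirtingerDeriv (f : ℂ → ℂ) : Measurable (wirtingerDeriv f) :=
  ((measurable_fderiv_apply_const ℝ f 1).sub
    ((measurable_fderiv_apply_const ℝ f Complex.I).const_mul _)).div_const 2

lemma wirtingerDeriv_congr (h : f =ᶠ[𝓝 z] g) : wirtingerDeriv f z = wirtingerDeriv g z := by
  rw [wirtingerDeriv, h.fderiv_eq, wirtingerDeriv]

lemma wirtingerDeriv_mul (hf : DifferentiableAt ℝ f z) (hg : DifferentiableAt ℝ g z) :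
    wirtingerDeriv (fun w => f w * g w) z
      = f z * wirtingerDeriv g z + wirtingerDeriv f z * g z := by
  simp only [wirtingerDeriv, fderiv_fun_mul hf hg, add_apply,
    smul_apply, smul_eq_mul]
  ring

lemma wirtingerDeriv_sub (hf : DifferentiableAt ℝ f z) (hg : DifferentiableAt ℝ g z) :
    wirtingerDeriv (fun w => f w - g w) z = wirtingerDeriv f z - wirtingerDeriv g z := by
  simp only [wirtingerDeriv, fderiv_fun_sub hf hg, sub_apply]
  ring

lemma wirtingerDeriv_sum_const_mul {ι : Type*} {f : ι → ℂ → ℂ} (s : Finset ι) (c : ι → ℂ)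
    (hf : ∀ i ∈ s, DifferentiableAt ℝ (f i) z) :
    wirtingerDeriv (fun w => ∑ i ∈ s, c i * f i w) z = ∑ i ∈ s, c i * wirtingerDeriv (f i) z := by
  simp only [wirtingerDeriv]
  rw [fderiv_fun_sum fun i hi => (hf i hi).const_mul (c i), _root_.sum_apply, _root_.sum_apply,
    mul_sum, ← sum_sub_distrib, sum_div]
  refine sum_congr rfl fun i hi => ?_
  rw [fderiv_const_mul (hf i hi), smul_apply, smul_apply, smul_eq_mul, smul_eq_mul]
  ring

lemma wirtingerDeriv_of_notMem_tsupport (h : z ∉ tsupport f) : wirtingerDeriv f z = 0 := by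
  rw [wirtingerDeriv_congr (notMem_tsupport_iff_eventuallyEq.1 h)]
  simp [wirtingerDeriv]

lemma wirtingerDeriv_conj {f' : ℂ} (hf : HasDerivAt f f' z) :
    wirtingerDeriv (fun w => conj (f w)) z = 0 := by
  have hconj : HasFDerivAt (fun w => conj (f w)) _ z :=
    (Complex.conjCLE : ℂ →L[ℝ] ℂ).hasFDerivAt.comp z (hf.hasFDerivAt.restrictScalars ℝ)
  rw [wirtingerDeriv, hconj.fderiv]
  simp only [ContinuousLinearMap.comp_apply, ContinuousLinearEquiv.coe_coe,
    Complex.conjCLE_apply, ContinuousLinearMap.coe_restrictScalars',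
    ContinuousLinearMap.toSpanSingleton_apply, smul_eq_mul, map_mul, map_one, Complex.conj_I]
  linear_combination (conj f') / 2 * Complex.I_mul_I

lemma wirtingerDeriv_of_hasDerivAt {f' : ℂ} (hf : HasDerivAt f f' z) :
    wirtingerDeriv f z = f' := by
  rw [wirtingerDeriv, (hf.hasFDerivAt.restrictScalars ℝ).fderiv]
  simp only [ContinuousLinearMap.coe_restrictScalars',
    ContinuousLinearMap.toSpanSingleton_apply, smul_eq_mul]
  linear_combination (-(f' / 2)) * Complex.I_mul_I

lemma integral_wirtingerDeriv_eq_zero (hf : LipschitzWith K f) (hc : HasCompactSupport f) :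
    ∫ z, wirtingerDeriv f z = 0 := by
  simp only [wirtingerDeriv]
  rw [integral_div, integral_sub (integrable_fderiv_apply_of_lipschitzWith hf hc 1)
    ((integrable_fderiv_apply_of_lipschitzWith hf hc _).const_mul _), integral_const_mul,
    integral_fderiv_apply_eq_zero_of_lipschitzWith hf hc,
    integral_fderiv_apply_eq_zero_of_lipschitzWith hf hc]
  simp

end WirtingerDeriv

/-- The cutoff equal to `1` at distance at least `2ε` from the complement of `Ω` and to `0` at
distance at most `ε`; complex valued so that it can be multiplied with holomorphic functions. -/
noncomputable def innerCutoff (Ω : Set ℂ) (ε : ℝ) (z : ℂ) : ℂ :=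
  (max 0 (min 1 (infDist z Ωᶜ / ε - 1)) : ℝ)

section InnerCutoff

variable {Ω : Set ℂ} {ε : ℝ} {z : ℂ}

lemma lipschitzWith_innerCutoff (Ω : Set ℂ) (ε : ℝ) :
    LipschitzWith |ε⁻¹|.toNNReal (innerCutoff Ω ε) := by
  have hdist : LipschitzWith |ε⁻¹|.toNNReal fun z : ℂ => infDist z Ωᶜ / ε - 1 := by
    refine LipschitzWith.of_dist_le_mul fun z w => ?_
    rw [Real.dist_eq, Real.coe_toNNReal _ (abs_nonneg _), sub_sub_sub_cancel_right, ← sub_div,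
      div_eq_inv_mul, abs_mul]
    gcongr
    simpa [Real.dist_eq] using (lipschitz_infDist_pt Ωᶜ).dist_le_mul z w
  exact (Complex.isometry_ofReal.lipschitz.comp ((hdist.const_min 1).const_max 0)).weaken
    (one_mul _).le

lemma norm_innerCutoff_le_one : ‖innerCutoff Ω ε z‖ ≤ 1 := by
  rw [innerCutoff, Complex.norm_real, Real.norm_of_nonneg (le_max_left 0 _)]
  exact max_le zero_le_one (min_le_left 1 _)

lemma innerCutoff_eq_one (hε : 0 < ε) (h : 2 * ε ≤ infDist z Ωᶜ) : innerCutoff Ω ε z = 1 := by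
  have : 1 ≤ infDist z Ωᶜ / ε - 1 := by rw [le_sub_iff_add_le, le_div_iff₀ hε]; linarith
  simp [innerCutoff, this]

lemma innerCutoff_eq_zero (hε : 0 < ε) (h : infDist z Ωᶜ ≤ ε) : innerCutoff Ω ε z = 0 := by
  have : infDist z Ωᶜ / ε - 1 ≤ 0 := by rw [sub_nonpos, div_le_one hε]; exact h
  simp [innerCutoff, this]

lemma mem_of_infDist_compl_pos (h : 0 < infDist z Ωᶜ) : z ∈ Ω := by
  by_contra hz
  exact h.ne' (infDist_zero_of_mem hz)

lemma tsupport_innerCutoff_subset (hε : 0 < ε) : tsupport (innerCutoff Ω ε) ⊆ Ω := by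
  have hsub : tsupport (innerCutoff Ω ε) ⊆ {z | ε ≤ infDist z Ωᶜ} :=
    closure_minimal
      (fun z hz => not_lt.1 fun h => hz (innerCutoff_eq_zero hε h.le))
      (isClosed_le continuous_const (continuous_infDist_pt _))
  exact fun z hz => mem_of_infDist_compl_pos (hε.trans_le (hsub hz))

lemma hasCompactSupport_innerCutoff (hb : Bornology.IsBounded Ω) (hε : 0 < ε) :
    HasCompactSupport (innerCutoff Ω ε) :=
  isCompact_of_isClosed_isBounded (isClosed_tsupport _)
    (hb.subset (tsupport_innerCutoff_subset hε))

lemma innerCutoff_eventually_eq_one (hΩ : IsOpen Ω) (hΩ' : Ωᶜ.Nonempty) (hz : z ∈ Ω) :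
    ∀ᶠ ε in 𝓝[>] 0, innerCutoff Ω ε =ᶠ[𝓝 z] fun _ => 1 := by
  have hpos : 0 < infDist z Ωᶜ :=
    (hΩ.isClosed_compl.notMem_iff_infDist_pos hΩ').1 (Set.notMem_compl_iff.2 hz)
  filter_upwards [Ioo_mem_nhdsGT (half_pos hpos)] with ε hε
  have hlt : 2 * ε < infDist z Ωᶜ := by linarith [hε.2]
  filter_upwards [(isOpen_lt continuous_const (continuous_infDist_pt Ωᶜ)).mem_nhds hlt] with w hw
  exact innerCutoff_eq_one hε.1 hw.le

lemma norm_wirtingerDeriv_innerCutoff_le (hε : 0 < ε) :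
    ‖wirtingerDeriv (innerCutoff Ω ε) z‖ ≤ ε⁻¹ := by
  have hlip := norm_wirtingerDeriv_le_of_lipschitzWith (z := z) (lipschitzWith_innerCutoff Ω ε)
  rwa [Real.coe_toNNReal _ (abs_nonneg _), abs_of_pos (inv_pos.2 hε)] at hlip

lemma wirtingerDeriv_innerCutoff_eq_zero (hε : 0 < ε) (h : 2 * ε < infDist z Ωᶜ) :
    wirtingerDeriv (innerCutoff Ω ε) z = 0 := by
  have hone : innerCutoff Ω ε =ᶠ[𝓝 z] fun _ => 1 := by
    filter_upwards [(isOpen_lt continuous_const (continuous_infDist_pt Ωᶜ)).mem_nhds h] with w hw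
    exact innerCutoff_eq_one hε (le_of_lt hw)
  rw [wirtingerDeriv_congr hone, wirtingerDeriv_of_hasDerivAt (hasDerivAt_const z 1)]

lemma norm_wirtingerDeriv_innerCutoff_mul_le (hε : 0 < ε) :
    ‖wirtingerDeriv (innerCutoff Ω ε) z‖ * infDist z Ωᶜ ≤ 2 := by
  rcases le_or_gt (infDist z Ωᶜ) (2 * ε) with h | h
  · calc ‖wirtingerDeriv (innerCutoff Ω ε) z‖ * infDist z Ωᶜ ≤ ε⁻¹ * (2 * ε) :=
        mul_le_mul (norm_wirtingerDeriv_innerCutoff_le hε) h infDist_nonneg (inv_pos.2 hε).le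
      _ = 2 := by field_simp
  · simp [wirtingerDeriv_innerCutoff_eq_zero hε h]

end InnerCutoff

section Green

variable {Ω : Set ℂ} {h ψ : ℂ → ℂ} {K : ℝ≥0}

lemma norm_le_mul_infDist_compl (hΩ : Ω ≠ Set.univ) (hψ : LipschitzWith K ψ)
    (h0 : ∀ z ∈ frontier Ω, ψ z = 0) {z : ℂ} (hz : z ∈ Ω) : ‖ψ z‖ ≤ K * infDist z Ωᶜ := by
  obtain ⟨y, hy, hzy⟩ := exists_mem_frontier_infDist_compl_eq_dist hz hΩ
  simpa [h0 y hy, hzy] using hψ.dist_le_mul z y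

lemma locallyLipschitzOn_conj (hΩ : IsOpen Ω) (hh : DifferentiableOn ℂ h Ω) :
    LocallyLipschitzOn Ω fun z => conj (h z) := by
  intro z hz
  have hC1 : ContDiffAt ℝ 1 h z :=
    (hh.analyticAt (hΩ.mem_nhds hz)).contDiffAt.restrict_scalars ℝ
  obtain ⟨K, t, ht, hK⟩ :=
    ((Complex.conjCLE : ℂ →L[ℝ] ℂ).contDiff.contDiffAt.comp z hC1).exists_lipschitzOnWith
  exact ⟨K, t, mem_nhdsWithin_of_mem_nhds ht, hK⟩

lemma wirtingerDeriv_conj_mul (hΩ : IsOpen Ω) (hh : DifferentiableOn ℂ h Ω)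
    (hs : tsupport ψ ⊆ Ω) {z : ℂ} (hψ : DifferentiableAt ℝ ψ z) :
    wirtingerDeriv (fun w => conj (h w) * ψ w) z = conj (h z) * wirtingerDeriv ψ z := by
  by_cases hz : z ∈ tsupport ψ
  · have hd := (hh.differentiableAt (hΩ.mem_nhds (hs hz))).hasDerivAt
    have hconj : DifferentiableAt ℝ (fun w => conj (h w)) z :=
      (Complex.conjCLE : ℂ →L[ℝ] ℂ).differentiableAt.comp z
        (hd.differentiableAt.restrictScalars ℝ)
    rw [wirtingerDeriv_mul hconj hψ, wirtingerDeriv_conj hd, zero_mul, add_zero]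
  · rw [wirtingerDeriv_of_notMem_tsupport hz, mul_zero, wirtingerDeriv_of_notMem_tsupport]
    exact fun hz' => hz (tsupport_mul_subset_right hz')

lemma integral_conj_mul_wirtingerDeriv_of_hasCompactSupport (hΩ : IsOpen Ω)
    (hh : DifferentiableOn ℂ h Ω) (hψ : LipschitzWith K ψ) (hc : HasCompactSupport ψ)
    (hs : tsupport ψ ⊆ Ω) : ∫ z in Ω, conj (h z) * wirtingerDeriv ψ z = 0 := by
  obtain ⟨K', hK'⟩ := exists_lipschitzWith_mul_of_hasCompactSupport
    ((locallyLipschitzOn_conj hΩ hh).mono hs) hψ hc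
  rw [setIntegral_eq_integral_of_forall_compl_eq_zero fun z hz => ?_,
    ← integral_wirtingerDeriv_eq_zero hK' hc.mul_left]
  · refine integral_congr_ae ?_
    filter_upwards [hψ.ae_differentiableAt (μ := volume)] with z hz
    exact (wirtingerDeriv_conj_mul hΩ hh hs hz).symm
  · rw [wirtingerDeriv_of_notMem_tsupport fun h' => hz (hs h'), mul_zero]

lemma norm_wirtingerDeriv_mul_innerCutoff_le (hΩ : Ω ≠ Set.univ) (hψ : LipschitzWith K ψ)
    (h0 : ∀ z ∈ frontier Ω, ψ z = 0) {ε : ℝ} (hε : 0 < ε) {z : ℂ} (hz : z ∈ Ω)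
    (hψz : DifferentiableAt ℝ ψ z) (hηz : DifferentiableAt ℝ (innerCutoff Ω ε) z) :
    ‖wirtingerDeriv (fun w => ψ w * innerCutoff Ω ε w) z‖ ≤ 3 * K := by
  set η := innerCutoff Ω ε
  have h1 : ‖ψ z‖ * ‖wirtingerDeriv η z‖ ≤ 2 * K :=
    calc ‖ψ z‖ * ‖wirtingerDeriv η z‖ ≤ K * infDist z Ωᶜ * ‖wirtingerDeriv η z‖ := by
          gcongr; exact norm_le_mul_infDist_compl hΩ hψ h0 hz
      _ = ‖wirtingerDeriv η z‖ * infDist z Ωᶜ * K := by ring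
      _ ≤ 2 * K := by gcongr; exact norm_wirtingerDeriv_innerCutoff_mul_le hε
  have h2 : ‖wirtingerDeriv ψ z‖ * ‖η z‖ ≤ K * 1 :=
    mul_le_mul (norm_wirtingerDeriv_le_of_lipschitzWith hψ) norm_innerCutoff_le_one
      (norm_nonneg _) K.2
  calc ‖wirtingerDeriv (fun w => ψ w * η w) z‖
      ≤ ‖ψ z‖ * ‖wirtingerDeriv η z‖ + ‖wirtingerDeriv ψ z‖ * ‖η z‖ := by
        rw [wirtingerDeriv_mul hψz hηz, ← norm_mul, ← norm_mul]
        exact norm_add_le _ _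
    _ ≤ 3 * K := by linarith

theorem integral_conj_mul_wirtingerDeriv_eq_zero (hΩ : IsOpen Ω) (hb : Bornology.IsBounded Ω)
    (hh : DifferentiableOn ℂ h Ω) (hi : IntegrableOn h Ω) (hψ : LipschitzWith K ψ)
    (h0 : ∀ z ∈ frontier Ω, ψ z = 0) : ∫ z in Ω, conj (h z) * wirtingerDeriv ψ z = 0 := by
  have hne : Ω ≠ Set.univ := fun hΩ' => NormedSpace.unbounded_univ ℝ ℂ (hΩ' ▸ hb)
  have hlip (ε : ℝ) (hε : 0 < ε) : ∃ K', LipschitzWith K' fun z => ψ z * innerCutoff Ω ε z :=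
    exists_lipschitzWith_mul_of_hasCompactSupport
      (hψ.locallyLipschitz.locallyLipschitzOn) (lipschitzWith_innerCutoff Ω ε)
      (hasCompactSupport_innerCutoff hb hε)
  have hzero (ε : ℝ) (hε : 0 < ε) :
      ∫ z in Ω, conj (h z) * wirtingerDeriv (fun w => ψ w * innerCutoff Ω ε w) z = 0 :=
    integral_conj_mul_wirtingerDeriv_of_hasCompactSupport hΩ hh (hlip ε hε).choose_spec
      (hasCompactSupport_innerCutoff hb hε).mul_left
      (tsupport_mul_subset_right.trans (tsupport_innerCutoff_subset hε))
  have hlim : Tendsto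
      (fun ε => ∫ z in Ω, conj (h z) * wirtingerDeriv (fun w => ψ w * innerCutoff Ω ε w) z)
      (𝓝[>] 0) (𝓝 (∫ z in Ω, conj (h z) * wirtingerDeriv ψ z)) := by
    refine tendsto_integral_filter_of_dominated_convergence (fun z => ‖h z‖ * (3 * K)) ?_ ?_
      (hi.norm.mul_const _) ?_
    · exact Eventually.of_forall fun ε =>
        (Complex.continuous_conj.comp_aestronglyMeasurable hi.aestronglyMeasurable).mul
          (measurable_wirtingerDeriv _).aestronglyMeasurable
    · filter_upwards [self_mem_nhdsWithin] with ε hε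
      filter_upwards [ae_restrict_mem hΩ.measurableSet,
        ae_restrict_of_ae hψ.ae_differentiableAt,
        ae_restrict_of_ae (lipschitzWith_innerCutoff Ω ε).ae_differentiableAt] with z hz hψz hηz
      rw [norm_mul, RCLike.norm_conj]
      gcongr
      exact norm_wirtingerDeriv_mul_innerCutoff_le hne hψ h0 hε hz hψz hηz
    · filter_upwards [ae_restrict_mem hΩ.measurableSet] with z hz
      refine tendsto_const_nhds.congr' ?_
      filter_upwards [innerCutoff_eventually_eq_one hΩ (Set.nonempty_compl.2 hne) hz] with ε hε
      have hψε : ψ =ᶠ[𝓝 z] fun w => ψ w * innerCutoff Ω ε w := by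
        filter_upwards [hε] with w hw
        rw [hw, mul_one]
      rw [wirtingerDeriv_congr hψε]
  refine tendsto_nhds_unique hlim (tendsto_const_nhds.congr' ?_)
  filter_upwards [self_mem_nhdsWithin] with ε hε
  exact (hzero ε hε).symm

end Green

/-! ### Taylor coefficients as area integrals -/

section AreaIntegral

variable {E : Type*} [NormedAddCommGroup E] [NormedSpace ℝ E] {G : ℂ → E} {a : ℂ} {ρ : ℝ}

lemma integrableOn_smul_comp_circleMap (hG : ContinuousOn G (closedBall a ρ)) :
    IntegrableOn (fun p : ℝ × ℝ => p.1 • G (circleMap a p.1 p.2))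
      (Set.Ioo 0 ρ ×ˢ Set.Ioo (-Real.pi) Real.pi) := by
  have hcont : ContinuousOn (fun p : ℝ × ℝ => p.1 • G (circleMap a p.1 p.2))
      (Set.Icc 0 ρ ×ˢ Set.Icc (-Real.pi) Real.pi) := by
    refine continuous_fst.continuousOn.smul (hG.comp (by unfold circleMap; fun_prop) ?_)
    rintro ⟨r, θ⟩ ⟨hr, -⟩
    rw [mem_closedBall, dist_eq_norm, circleMap_sub_center, norm_circleMap_zero,
      abs_of_nonneg hr.1]
    exact hr.2
  exact (hcont.integrableOn_compact (isCompact_Icc.prod isCompact_Icc)).mono_set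
    (Set.prod_mono Set.Ioo_subset_Icc_self Set.Ioo_subset_Icc_self)

lemma polarCoord_indicator_ball {p : ℝ × ℝ} (hp : p ∈ Complex.polarCoord.target) :
    p.1 • (ball 0 ρ).indicator (fun u => G (a + u)) (Complex.polarCoord.symm p) =
      (Set.Ioo 0 ρ ×ˢ Set.Ioo (-Real.pi) Real.pi).indicator
        (fun p => p.1 • G (circleMap a p.1 p.2)) p := by
  obtain ⟨r, θ⟩ := p
  obtain ⟨hr, hθ⟩ := hp
  have hcircle : a + Complex.polarCoord.symm (r, θ) = circleMap a r θ := by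
    simp [Complex.polarCoord_symm_apply, circleMap, Complex.exp_mul_I]
  have hiff : Complex.polarCoord.symm (r, θ) ∈ ball (0 : ℂ) ρ
      ↔ (r, θ) ∈ Set.Ioo 0 ρ ×ˢ Set.Ioo (-Real.pi) Real.pi := by
    rw [mem_ball_zero_iff, Complex.norm_polarCoord_symm, abs_of_pos hr]
    exact ⟨fun h => ⟨⟨hr, h⟩, hθ⟩, fun h => h.1.2⟩
  by_cases h : Complex.polarCoord.symm (r, θ) ∈ ball (0 : ℂ) ρ
  · rw [Set.indicator_of_mem h, Set.indicator_of_mem (hiff.1 h), hcircle]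
  · rw [Set.indicator_of_notMem h, Set.indicator_of_notMem (mt hiff.2 h), smul_zero]

lemma integral_ball_eq_integral_circleMap (hρ : 0 ≤ ρ) (hG : ContinuousOn G (closedBall a ρ)) :
    ∫ z in ball a ρ, G z
      = ∫ r in (0 : ℝ)..ρ, ∫ θ in (-Real.pi)..Real.pi, r • G (circleMap a r θ) := by
  have hpi : -Real.pi ≤ Real.pi := by linarith [Real.pi_pos]
  have htranslate : ∫ z in ball a ρ, G z
      = ∫ u, (ball (0 : ℂ) ρ).indicator (fun u => G (a + u)) u := by
    rw [← integral_indicator measurableSet_ball, ← integral_add_left_eq_self _ a]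
    refine integral_congr_ae (ae_of_all _ fun u => ?_)
    simp [Set.indicator, dist_eq_norm]
  rw [htranslate, ← Complex.integral_comp_polarCoord_symm,
    setIntegral_congr_fun polarCoord.open_target.measurableSet
      fun p hp => polarCoord_indicator_ball hp,
    setIntegral_indicator (measurableSet_Ioo.prod measurableSet_Ioo), polarCoord_target,
    Set.inter_eq_right.2 (Set.prod_mono (fun x hx => hx.1) le_rfl), Measure.volume_eq_prod,
    setIntegral_prod _ (integrableOn_smul_comp_circleMap hG),
    intervalIntegral.integral_of_le hρ, integral_Ioc_eq_integral_Ioo]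
  simp only [intervalIntegral.integral_of_le hpi, integral_Ioc_eq_integral_Ioo]

variable {h : ℂ → ℂ} {r : ℝ}

lemma integral_circleMap_mul_conj_pow (hr : 0 < r) (m : ℕ)
    (hh : DifferentiableOn ℂ h (closedBall a r)) :
    ∫ θ in (-Real.pi)..Real.pi, h (circleMap a r θ) * conj (circleMap 0 r θ) ^ m =
      2 * Real.pi * r ^ (2 * m) / m.factorial * iteratedDeriv m h a := by
  have hcauchy := hh.circleIntegral_one_div_sub_center_pow_smul hr m
  have hper : Function.Periodic
      (fun θ => h (circleMap a r θ) * conj (circleMap 0 r θ) ^ m) (2 * Real.pi) := fun θ => by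
    simp only [periodic_circleMap a r θ, periodic_circleMap 0 r θ]
  have hr' : (r : ℂ) ≠ 0 := by exact_mod_cast hr.ne'
  have hkernel (θ : ℝ) : h (circleMap a r θ) * conj (circleMap 0 r θ) ^ m =
      (r ^ (2 * m) / Complex.I) * (deriv (circleMap a r) θ •
        ((1 / (circleMap a r θ - a) ^ (m + 1)) • h (circleMap a r θ))) := by
    have h0 : circleMap 0 r θ ≠ 0 := circleMap_ne_center hr.ne'
    have hconj : conj (circleMap 0 r θ) = r ^ 2 / circleMap 0 r θ := by
      rw [eq_div_iff h0, Complex.conj_mul', norm_circleMap_zero, abs_of_pos hr]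
    rw [circleMap_sub_center, hconj, deriv_circleMap]
    simp only [smul_eq_mul, div_pow]
    have := Complex.I_ne_zero
    field_simp
    ring
  have hshift := hper.intervalIntegral_add_eq (-Real.pi) 0
  rw [show -Real.pi + 2 * Real.pi = Real.pi by ring, zero_add] at hshift
  rw [circleIntegral] at hcauchy
  simp_rw [hshift, hkernel]
  rw [intervalIntegral.integral_const_mul, hcauchy, smul_eq_mul]
  have := Complex.I_ne_zero
  field_simp

lemma integral_ball_mul_conj_pow (hρ : 0 ≤ ρ) (m : ℕ)
    (hh : DifferentiableOn ℂ h (closedBall a ρ)) :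
    ∫ z in ball a ρ, h z * conj (z - a) ^ m =
      Real.pi * ρ ^ (2 * m + 2) / ((m + 1) * m.factorial) * iteratedDeriv m h a := by
  have hinner : ∀ r ∈ Set.Ioc 0 ρ,
      ∫ θ in (-Real.pi)..Real.pi,
        r • (h (circleMap a r θ) * conj (circleMap a r θ - a) ^ m) =
      ((r ^ (2 * m + 1) : ℝ) : ℂ) * (2 * Real.pi / m.factorial * iteratedDeriv m h a) := by
    intro r hr
    simp only [circleMap_sub_center]
    rw [intervalIntegral.integral_smul, integral_circleMap_mul_conj_pow hr.1 m
      (hh.mono (closedBall_subset_closedBall hr.2)), Complex.real_smul]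
    push_cast
    ring
  have hpow : ∫ r in (0 : ℝ)..ρ, r ^ (2 * m + 1) = ρ ^ (2 * m + 2) / (2 * (m + 1)) := by
    rw [integral_pow]
    push_cast
    ring
  have hcont : ContinuousOn (fun z => h z * conj (z - a) ^ m) (closedBall a ρ) :=
    hh.continuousOn.mul (Continuous.continuousOn (by fun_prop))
  rw [integral_ball_eq_integral_circleMap hρ hcont,
    intervalIntegral.integral_of_le hρ, setIntegral_congr_fun measurableSet_Ioc hinner,
    ← intervalIntegral.integral_of_le hρ, intervalIntegral.integral_mul_const,
    intervalIntegral.integral_ofReal, hpow]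
  have : (m : ℂ) + 1 ≠ 0 := m.cast_add_one_ne_zero
  push_cast
  field_simp

end AreaIntegral

/-- The function `u ↦ 1 / conj u` made Lipschitz by replacing it with `u / ρ²` on the disc of
radius `ρ`. Off that disc it is antiholomorphic, so its Wirtinger derivative lives on the disc. -/
noncomputable def truncInvConj (ρ : ℝ) (u : ℂ) : ℂ := u / ((max ‖u‖ ρ : ℝ) : ℂ) ^ 2

section TruncInvConj

variable {ρ : ℝ} {a u z : ℂ}

lemma truncInvConj_of_le (hu : ‖u‖ ≤ ρ) : truncInvConj ρ u = u / ρ ^ 2 := by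
  rw [truncInvConj, max_eq_right hu]

lemma truncInvConj_of_ge (hu : ρ ≤ ‖u‖) : truncInvConj ρ u = conj u⁻¹ := by
  rw [truncInvConj, max_eq_left hu, map_inv₀, ← Complex.conj_mul']
  rcases eq_or_ne u 0 with rfl | hu0
  · simp
  · rw [mul_comm, div_mul_cancel_left₀ hu0]

lemma norm_truncInvConj_le (hρ : 0 < ρ) (u : ℂ) : ‖truncInvConj ρ u‖ ≤ ρ⁻¹ := by
  have hM : 0 < max ‖u‖ ρ := lt_max_of_lt_right hρ
  rw [truncInvConj, norm_div, norm_pow, Complex.norm_real, Real.norm_of_nonneg hM.le, sq,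
    ← div_div, div_eq_mul_inv]
  exact (mul_le_of_le_one_left (inv_pos.2 hM).le (div_le_one_of_le₀ (le_max_left _ _) hM.le)).trans
    (inv_anti₀ hρ (le_max_right _ _))

lemma lipschitzWith_truncInvConj (hρ : 0 < ρ) :
    LipschitzWith (3 / ρ ^ 2).toNNReal (truncInvConj ρ) := by
  refine LipschitzWith.of_dist_le_mul fun u v => ?_
  rw [Real.coe_toNNReal _ (by positivity), dist_eq_norm, dist_eq_norm, truncInvConj, truncInvConj]
  set M := max ‖u‖ ρ
  set N := max ‖v‖ ρ
  have hM : ρ ≤ M := le_max_right _ _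
  have hN : ρ ≤ N := le_max_right _ _
  have hM0 : 0 < M := hρ.trans_le hM
  have hN0 : 0 < N := hρ.trans_le hN
  have hMN : |N - M| ≤ ‖u - v‖ := by
    rw [abs_sub_comm]
    exact (abs_max_sub_max_le_abs ‖u‖ ‖v‖ ρ).trans (abs_norm_sub_norm_le u v)
  have hMc : (M : ℂ) ≠ 0 := by exact_mod_cast hM0.ne'
  have hNc : (N : ℂ) ≠ 0 := by exact_mod_cast hN0.ne'
  calc ‖u / (M : ℂ) ^ 2 - v / (N : ℂ) ^ 2‖
      = ‖(u - v) / (M : ℂ) ^ 2 + v * (((N - M) * (N + M) / (M ^ 2 * N ^ 2) : ℝ) : ℂ)‖ := by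
        congr 1
        push_cast
        field_simp
        ring
    _ ≤ ‖u - v‖ / M ^ 2 + ‖v‖ * (|N - M| * (N + M) / (M ^ 2 * N ^ 2)) := by
        refine (norm_add_le _ _).trans_eq ?_
        rw [norm_div, norm_pow, norm_mul, Complex.norm_real, Complex.norm_real,
          Real.norm_of_nonneg hM0.le, Real.norm_eq_abs, abs_div, abs_mul,
          abs_of_pos (add_pos hN0 hM0), abs_of_pos (by positivity : 0 < M ^ 2 * N ^ 2)]
    _ ≤ ‖u - v‖ / M ^ 2 + N * (‖u - v‖ * (N + M) / (M ^ 2 * N ^ 2)) := by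
        gcongr
        exact le_max_left _ _
    _ = ‖u - v‖ * (1 / M ^ 2 + 1 / M ^ 2 + 1 / (M * N)) := by
        field_simp
        ring
    _ ≤ ‖u - v‖ * (1 / ρ ^ 2 + 1 / ρ ^ 2 + 1 / (ρ * ρ)) := by gcongr
    _ = 3 / ρ ^ 2 * ‖u - v‖ := by ring

lemma exists_lipschitzWith_truncInvConj_pow (hρ : 0 < ρ) (j : ℕ) :
    ∃ K : ℝ≥0, ∀ a, LipschitzWith K fun z => truncInvConj ρ (z - a) ^ j := by
  suffices ∃ K : ℝ≥0, LipschitzWith K fun u => truncInvConj ρ u ^ j by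
    obtain ⟨K, hK⟩ := this
    exact ⟨K, fun a => (hK.comp (LipschitzWith.of_dist_le_mul (K := 1) fun z w => by
      simp)).weaken (mul_one K).le⟩
  have hle (u : ℂ) : ‖truncInvConj ρ u‖ ≤ ρ⁻¹.toNNReal := by
    rw [Real.coe_toNNReal _ (inv_pos.2 hρ).le]
    exact norm_truncInvConj_le hρ u
  induction j with
  | zero => exact ⟨0, by simp⟩
  | succ j ih =>
    obtain ⟨K, hK⟩ := ih
    refine ⟨_, (lipschitzWith_mul_of_norm_le (f := fun u => truncInvConj ρ u ^ j)
      (A := ρ⁻¹.toNNReal ^ j) hK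
      (lipschitzWith_truncInvConj hρ) (fun u _ => ?_) hle)⟩
    rw [norm_pow, NNReal.coe_pow]
    exact pow_le_pow_left₀ (norm_nonneg _) (hle u) j

lemma wirtingerDeriv_truncInvConj_pow (hρ : 0 ≤ ρ) (hz : z ∉ sphere a ρ) (j : ℕ) :
    wirtingerDeriv (fun z => truncInvConj ρ (z - a) ^ (j + 1)) z =
      (ball a ρ).indicator (fun z => (j + 1) * (z - a) ^ j / ρ ^ (2 * j + 2)) z := by
  rcases lt_or_gt_of_ne hz with hlt | hgt
  · have heq : (fun z => truncInvConj ρ (z - a) ^ (j + 1)) =ᶠ[𝓝 z]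
        fun z => ((z - a) / ρ ^ 2) ^ (j + 1) := by
      filter_upwards [isOpen_ball.mem_nhds (mem_ball.2 hlt)] with w hw
      rw [truncInvConj_of_le (mem_ball_iff_norm.1 hw).le]
    have hderiv := (((hasDerivAt_id' z).sub_const a).div_const ((ρ : ℂ) ^ 2)).fun_pow (j + 1)
    rw [Set.indicator_of_mem (mem_ball.2 hlt), wirtingerDeriv_congr heq,
      wirtingerDeriv_of_hasDerivAt hderiv]
    simp only [Nat.cast_add_one, add_tsub_cancel_right, div_pow, ← pow_mul]
    ring
  · have heq : (fun z => truncInvConj ρ (z - a) ^ (j + 1)) =ᶠ[𝓝 z]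
        fun z => conj ((z - a)⁻¹ ^ (j + 1)) := by
      filter_upwards [isClosed_closedBall.isOpen_compl.mem_nhds
        (not_le.2 hgt : z ∉ closedBall a ρ)] with w hw
      have hw' : ρ ≤ ‖w - a‖ := (not_le.1 fun h => hw (mem_closedBall_iff_norm.2 h)).le
      rw [truncInvConj_of_ge hw', map_pow]
    have hza : z ≠ a := dist_pos.1 (hρ.trans_lt hgt)
    have hdiff : DifferentiableAt ℂ (fun z => (z - a)⁻¹ ^ (j + 1)) z :=
      ((differentiableAt_id.sub_const a).inv (sub_ne_zero.2 hza)).pow _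
    have hzball : z ∉ ball a ρ := not_lt.2 hgt.le
    rw [Set.indicator_of_notMem hzball, wirtingerDeriv_congr heq,
      wirtingerDeriv_conj hdiff.hasDerivAt]

end TruncInvConj

section TaylorCoefficients

variable {Ω : Set ℂ} {h : ℂ → ℂ} {a : ℂ} {ρ : ℝ}

lemma integral_conj_mul_wirtingerDeriv_truncInvConj_pow (hh : DifferentiableOn ℂ h Ω)
    (hρ : 0 < ρ) (hb : closedBall a ρ ⊆ Ω) (j : ℕ) :
    ∫ z in Ω, conj (h z) * wirtingerDeriv (fun z => truncInvConj ρ (z - a) ^ (j + 1)) z =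
      Real.pi / j.factorial * conj (iteratedDeriv j h a) := by
  have hcongr : ∀ᵐ z ∂volume.restrict Ω,
      conj (h z) * wirtingerDeriv (fun z => truncInvConj ρ (z - a) ^ (j + 1)) z =
        (ball a ρ).indicator
          (fun z => (j + 1) / ρ ^ (2 * j + 2) * conj (h z * conj (z - a) ^ j)) z := by
    refine ae_restrict_of_ae ?_
    filter_upwards [measure_eq_zero_iff_ae_notMem.1
      (Measure.addHaar_sphere volume a ρ)] with z hz
    rw [wirtingerDeriv_truncInvConj_pow hρ.le hz]
    by_cases hball : z ∈ ball a ρ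
    · simp only [Set.indicator_of_mem hball, map_mul, map_pow, Complex.conj_conj]
      ring
    · simp only [Set.indicator_of_notMem hball, mul_zero]
  rw [integral_congr_ae hcongr, setIntegral_indicator measurableSet_ball,
    Set.inter_eq_right.2 (ball_subset_closedBall.trans hb), integral_const_mul, integral_conj,
    integral_ball_mul_conj_pow hρ.le j (hh.mono hb)]
  simp only [map_mul, map_div₀, map_pow, Complex.conj_ofReal, map_add, map_natCast, map_one]
  have : (j : ℂ) + 1 ≠ 0 := j.cast_add_one_ne_zero
  have : (ρ : ℂ) ≠ 0 := by exact_mod_cast hρ.ne'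
  field_simp

lemma integrableOn_conj (hi : IntegrableOn h Ω) : IntegrableOn (fun z => conj (h z)) Ω :=
  Complex.conjCLE.toContinuousLinearMap.integrable_comp hi

lemma norm_integral_mul_wirtingerDeriv_le {f ψ : ℂ → ℂ} {K : ℝ≥0} (hi : IntegrableOn f Ω)
    (hψ : LipschitzWith K ψ) :
    ‖∫ z in Ω, f z * wirtingerDeriv ψ z‖ ≤ K * ∫ z in Ω, ‖f z‖ := by
  rw [← integral_const_mul]
  refine norm_integral_le_of_norm_le (hi.norm.const_mul _) (ae_of_all _ fun z => ?_)
  rw [norm_mul, mul_comm]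
  gcongr
  exact norm_wirtingerDeriv_le_of_lipschitzWith hψ

lemma exists_norm_iteratedDeriv_le_of_closedBall_subset (hρ : 0 < ρ) (j : ℕ) :
    ∃ C : ℝ, 0 ≤ C ∧ ∀ (Ω : Set ℂ) (h : ℂ → ℂ) (a : ℂ), DifferentiableOn ℂ h Ω →
      IntegrableOn h Ω → closedBall a ρ ⊆ Ω →
        ‖iteratedDeriv j h a‖ ≤ C * ∫ z in Ω, ‖h z‖ := by
  obtain ⟨K, hK⟩ := exists_lipschitzWith_truncInvConj_pow hρ (j + 1)
  refine ⟨j.factorial / Real.pi * K, by positivity, fun Ω h a hh hi hb => ?_⟩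
  have hle := norm_integral_mul_wirtingerDeriv_le (integrableOn_conj hi) (hK a)
  simp only [integral_conj_mul_wirtingerDeriv_truncInvConj_pow hh hρ hb, norm_mul, norm_div,
    RCLike.norm_conj, Complex.norm_real, Complex.norm_natCast,
    Real.norm_of_nonneg Real.pi_pos.le] at hle
  rwa [mul_assoc, ← inv_div, ← div_eq_inv_mul, le_div_iff₀' (by positivity)]

end TaylorCoefficients

/-! ### The Cauchy transform and the reflection identity -/

section CauchyTransform

variable {Ω : Set ℂ} {f h : ℂ → ℂ} {w : ℂ}

/-- The Cauchy transform of `conj h`, the function `H` of the theorem. -/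
noncomputable def conjCauchyTransform (Ω : Set ℂ) (h : ℂ → ℂ) (w : ℂ) : ℂ :=
  ∫ z in Ω, conj (h z) / (z - w)

lemma exists_forall_le_norm_sub (hw : w ∉ closure Ω) :
    ∃ δ > 0, ∀ z ∈ closure Ω, δ ≤ ‖z - w‖ := by
  rw [← closure_closure, Metric.mem_closure_iff] at hw
  push Not at hw
  simpa only [dist_eq_norm, norm_sub_rev w] using hw

lemma aestronglyMeasurable_div_sub_pow (hf : IntegrableOn f Ω) (w : ℂ) (n : ℕ) :
    AEStronglyMeasurable (fun z => f z / (z - w) ^ n) (volume.restrict Ω) := by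
  have hker : Measurable fun z : ℂ => ((z - w) ^ n)⁻¹ := by fun_prop
  simp only [div_eq_mul_inv]
  exact hf.aestronglyMeasurable.mul hker.aestronglyMeasurable

lemma norm_div_sub_pow_le {δ : ℝ} {z : ℂ} (hδ : 0 < δ) (hz : δ ≤ ‖z - w‖) (n : ℕ) :
    ‖f z / (z - w) ^ n‖ ≤ ‖f z‖ / δ ^ n := by
  rw [norm_div, norm_pow]
  gcongr

lemma hasDerivAt_const_div_sub_pow {z : ℂ} (c : ℂ) (hz : z ≠ w) (n : ℕ) :
    HasDerivAt (fun w => c / (z - w) ^ (n + 1)) ((n + 1) * (c / (z - w) ^ (n + 2))) w := by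
  have hne : z - w ≠ 0 := sub_ne_zero.2 hz
  have hpow := ((hasDerivAt_id' w).const_sub z).fun_pow (n + 1)
  refine ((hasDerivAt_const w c).fun_div hpow (pow_ne_zero _ hne)).congr_deriv ?_
  push_cast [add_tsub_cancel_right]
  field_simp
  ring

lemma hasDerivAt_integral_div_sub_pow (hΩ : MeasurableSet Ω) (hf : IntegrableOn f Ω)
    (hw : w ∉ closure Ω) (n : ℕ) :
    HasDerivAt (fun w => ∫ z in Ω, f z / (z - w) ^ (n + 1))
      ((n + 1) * ∫ z in Ω, f z / (z - w) ^ (n + 2)) w := by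
  obtain ⟨δ, hδ, hfar⟩ := exists_forall_le_norm_sub hw
  have hfar' : ∀ z ∈ Ω, ∀ x ∈ ball w (δ / 2), δ / 2 ≤ ‖z - x‖ := fun z hz x hx => by
    have := norm_sub_le_norm_sub_add_norm_sub z x w
    linarith [hfar z (subset_closure hz), mem_ball_iff_norm.1 hx]
  have hw_mem : w ∈ ball w (δ / 2) := mem_ball_self (half_pos hδ)
  rw [← integral_const_mul]
  refine (hasDerivAt_integral_of_dominated_loc_of_deriv_le
    (F' := fun w z => (n + 1) * (f z / (z - w) ^ (n + 2)))
    (bound := fun z => (n + 1) * (‖f z‖ / (δ / 2) ^ (n + 2))) (ball_mem_nhds w (half_pos hδ))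
    (Eventually.of_forall fun x => aestronglyMeasurable_div_sub_pow hf x _) ?_
    ((aestronglyMeasurable_div_sub_pow hf w _).const_mul _) ?_
    ((hf.norm.div_const _).const_mul _) ?_).2
  · exact (hf.norm.div_const _).mono' (aestronglyMeasurable_div_sub_pow hf w _)
      ((ae_restrict_mem hΩ).mono fun z hz =>
        norm_div_sub_pow_le (half_pos hδ) (hfar' z hz w hw_mem) _)
  · filter_upwards [ae_restrict_mem hΩ] with z hz x hx
    rw [norm_mul, ← Nat.cast_add_one, Complex.norm_natCast, Nat.cast_add_one]
    gcongr
    exact norm_div_sub_pow_le (half_pos hδ) (hfar' z hz x hx) _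
  · filter_upwards [ae_restrict_mem hΩ] with z hz x hx
    exact hasDerivAt_const_div_sub_pow _
      (sub_ne_zero.1 (norm_pos_iff.1 ((half_pos hδ).trans_le (hfar' z hz x hx)))) n

lemma iteratedDeriv_conjCauchyTransform (hΩ : MeasurableSet Ω) (hi : IntegrableOn h Ω)
    (hw : w ∉ closure Ω) (n : ℕ) :
    iteratedDeriv n (conjCauchyTransform Ω h) w =
      n.factorial * ∫ z in Ω, conj (h z) / (z - w) ^ (n + 1) := by
  induction n generalizing w with
  | zero => simp [conjCauchyTransform]
  | succ n ih =>
    have heq : iteratedDeriv n (conjCauchyTransform Ω h) =ᶠ[𝓝 w]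
        fun w => n.factorial * ∫ z in Ω, conj (h z) / (z - w) ^ (n + 1) := by
      filter_upwards [isClosed_closure.isOpen_compl.mem_nhds hw] with x hx using ih hx
    have hderiv := hasDerivAt_integral_div_sub_pow hΩ (integrableOn_conj hi) hw n
    rw [iteratedDeriv_succ, heq.deriv_eq, (hderiv.const_mul _).deriv, Nat.factorial_succ]
    push_cast
    ring

end CauchyTransform

section BoundaryPairing

variable {Ω : Set ℂ} {f h ψ : ℂ → ℂ} {w : ℂ} {K : ℝ≥0}

lemma integrableOn_mul_wirtingerDeriv (hf : IntegrableOn f Ω) (hψ : LipschitzWith K ψ) :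
    IntegrableOn (fun z => f z * wirtingerDeriv ψ z) Ω := by
  refine (hf.norm.mul_const K).mono'
    (hf.aestronglyMeasurable.mul (measurable_wirtingerDeriv ψ).aestronglyMeasurable)
    (ae_of_all _ fun z => ?_)
  rw [norm_mul]
  gcongr
  exact norm_wirtingerDeriv_le_of_lipschitzWith hψ

lemma integral_mul_wirtingerDeriv_sub {φ : ℂ → ℂ} {K' : ℝ≥0} (hf : IntegrableOn f Ω)
    (hφ : LipschitzWith K' φ) (hψ : LipschitzWith K ψ) :
    ∫ z in Ω, f z * wirtingerDeriv (fun z => φ z - ψ z) z =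
      (∫ z in Ω, f z * wirtingerDeriv φ z) - ∫ z in Ω, f z * wirtingerDeriv ψ z := by
  rw [← integral_sub (integrableOn_mul_wirtingerDeriv hf hφ)
    (integrableOn_mul_wirtingerDeriv hf hψ)]
  refine integral_congr_ae (ae_restrict_of_ae ?_)
  filter_upwards [hφ.ae_differentiableAt, hψ.ae_differentiableAt] with z hφz hψz
  rw [wirtingerDeriv_sub hφz hψz, mul_sub]

lemma integral_mul_wirtingerDeriv_sum {ι : Type*} (s : Finset ι) {ψ : ι → ℂ → ℂ} {K : ι → ℝ≥0}
    (D : ι → ℂ) (hf : IntegrableOn f Ω) (hψ : ∀ j, LipschitzWith (K j) (ψ j)) :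
    ∫ z in Ω, f z * wirtingerDeriv (fun z => ∑ j ∈ s, D j * ψ j z) z =
      ∑ j ∈ s, D j * ∫ z in Ω, f z * wirtingerDeriv (ψ j) z := by
  simp_rw [← integral_const_mul]
  rw [← integral_finsetSum s fun j _ =>
    (integrableOn_mul_wirtingerDeriv hf (hψ j)).const_mul (D j)]
  refine integral_congr_ae (ae_restrict_of_ae ?_)
  filter_upwards [(eventually_all_finset s).2 fun j _ => (hψ j).ae_differentiableAt]
    with z hz
  rw [wirtingerDeriv_sum_const_mul s D hz, mul_sum]
  exact sum_congr rfl fun j _ => mul_left_comm _ _ _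

lemma lipschitzWith_sum_const_mul {ι : Type*} (s : Finset ι) {ψ : ι → ℂ → ℂ} {K : ι → ℝ≥0}
    (D : ι → ℂ) (hψ : ∀ j, LipschitzWith (K j) (ψ j)) :
    LipschitzWith (∑ j ∈ s, ‖D j‖₊ * K j) fun z => ∑ j ∈ s, D j * ψ j z := by
  classical
  induction s using Finset.induction_on with
  | empty => simp
  | insert j s hj ih =>
    simp only [sum_insert hj]
    exact ((lipschitzWith_smul (D j)).comp (hψ j)).add ih

lemma integral_conj_mul_wirtingerDeriv_congr_frontier {φ : ℂ → ℂ} {K' : ℝ≥0} (hΩ : IsOpen Ω)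
    (hb : Bornology.IsBounded Ω) (hh : DifferentiableOn ℂ h Ω) (hi : IntegrableOn h Ω)
    (hφ : LipschitzWith K' φ) (hψ : LipschitzWith K ψ) (heq : Set.EqOn φ ψ (frontier Ω)) :
    ∫ z in Ω, conj (h z) * wirtingerDeriv φ z = ∫ z in Ω, conj (h z) * wirtingerDeriv ψ z := by
  rw [← sub_eq_zero, ← integral_mul_wirtingerDeriv_sub (integrableOn_conj hi) hφ hψ]
  exact integral_conj_mul_wirtingerDeriv_eq_zero hΩ hb hh hi (hφ.sub hψ)
    fun z hz => sub_eq_zero.2 (heq hz)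

lemma exists_lipschitzWith_eq_inv_pow (hw : w ∉ closure Ω) (n : ℕ) :
    ∃ K φ, LipschitzWith K φ ∧ ∀ z ∈ closure Ω, φ z = ((z - w) ^ (n + 1))⁻¹ := by
  obtain ⟨δ, hδ, hfar⟩ := exists_forall_le_norm_sub hw
  obtain ⟨K, hK⟩ := exists_lipschitzWith_truncInvConj_pow hδ (n + 1)
  refine ⟨K, fun z => conj (truncInvConj δ (z - w) ^ (n + 1)), ?_, fun z hz => ?_⟩
  · exact LipschitzWith.of_dist_le_mul fun x y => by
      simpa only [Complex.dist_conj_conj] using (hK w).dist_le_mul x y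
  · simp only [truncInvConj_of_ge (hfar z hz), map_pow, Complex.conj_conj, inv_pow]

lemma integral_conj_mul_wirtingerDeriv_inv_pow {φ : ℂ → ℂ} (hΩ : IsOpen Ω)
    (hi : IntegrableOn h Ω) (hw : w ∉ closure Ω) (n : ℕ)
    (hφ : ∀ z ∈ closure Ω, φ z = ((z - w) ^ (n + 1))⁻¹) :
    ∫ z in Ω, conj (h z) * wirtingerDeriv φ z =
      -(iteratedDeriv (n + 1) (conjCauchyTransform Ω h) w / n.factorial) := by
  have hderiv : ∀ z ∈ Ω, wirtingerDeriv φ z = -(n + 1) / (z - w) ^ (n + 2) := fun z hz => by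
    have heq : φ =ᶠ[𝓝 z] fun z => ((z - w) ^ (n + 1))⁻¹ := by
      filter_upwards [hΩ.mem_nhds hz] with x hx using hφ x (subset_closure hx)
    have hne : z - w ≠ 0 := sub_ne_zero.2 fun hzw => hw (hzw ▸ subset_closure hz)
    have hpow := ((hasDerivAt_id' z).sub_const w).fun_pow (n + 1)
    rw [wirtingerDeriv_congr heq, wirtingerDeriv_of_hasDerivAt (hpow.fun_inv (pow_ne_zero _ hne))]
    push_cast [add_tsub_cancel_right]
    field_simp
    ring
  rw [iteratedDeriv_conjCauchyTransform hΩ.measurableSet hi hw, Nat.factorial_succ,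
    setIntegral_congr_fun (g := fun z => -(n + 1) * (conj (h z) / (z - w) ^ (n + 2)))
      hΩ.measurableSet fun z hz => by simp only [hderiv z hz]; ring, integral_const_mul]
  have : (n.factorial : ℂ) ≠ 0 := by exact_mod_cast n.factorial_ne_zero
  push_cast
  field_simp

end BoundaryPairing

section Reflection

/-- On the boundary of `Ω`, the holomorphic kernel `(z - w)⁻ᵐ⁻¹` with exterior pole `w` is a
combination of the antiholomorphic kernels `conj (z - a)⁻ʲ⁻¹`, `j ≤ m`, up to a function with
Lipschitz constant `C`; the coefficients are at most `C` and the leading one is at least `1 / C`. -/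
def IsReflectedKernel (Ω : Set ℂ) (m : ℕ) (C : ℝ≥0) (a w : ℂ) (D : ℕ → ℂ) : Prop :=
  (∀ j ≤ m, ‖D j‖ ≤ C) ∧ 1 ≤ C * ‖D m‖ ∧
    LipschitzOnWith C (fun z => ((z - w) ^ (m + 1))⁻¹ -
      ∑ j ∈ range (m + 1), D j * (conj (z - a)⁻¹) ^ (j + 1)) (frontier Ω)

/-- Points of `Ω` near its boundary have, for each order `m`, a mirror image outside `Ω` which
carries a reflected kernel, with a constant that does not depend on the point. -/
def HasReflectedKernels (Ω : Set ℂ) : Prop :=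
  ∀ m : ℕ, ∃ d > 0, ∃ C : ℝ≥0, ∀ a ∈ Ω, infDist a Ωᶜ < d →
    ∃ w ∉ closure Ω, ∃ D, IsReflectedKernel Ω m C a w D

variable {Ω : Set ℂ} {h : ℂ → ℂ} {a w : ℂ} {m : ℕ} {K C : ℝ≥0} {B : ℝ} {D : ℕ → ℂ}

lemma sum_mul_conj_iteratedDeriv {L : ℂ → ℂ} (hΩ : IsOpen Ω) (hb : Bornology.IsBounded Ω)
    (hh : DifferentiableOn ℂ h Ω) (hi : IntegrableOn h Ω) (ha : a ∈ Ω) (hw : w ∉ closure Ω)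
    (hL : LipschitzWith K L)
    (hLeq : ∀ z ∈ frontier Ω, ((z - w) ^ (m + 1))⁻¹ -
      ∑ j ∈ range (m + 1), D j * (conj (z - a)⁻¹) ^ (j + 1) = L z) :
    ∑ j ∈ range (m + 1), D j * (Real.pi / j.factorial * conj (iteratedDeriv j h a)) =
      -(iteratedDeriv (m + 1) (conjCauchyTransform Ω h) w / m.factorial) -
        ∫ z in Ω, conj (h z) * wirtingerDeriv L z := by
  obtain ⟨ρ, hρ, hρΩ⟩ := nhds_basis_closedBall.mem_iff.1 (hΩ.mem_nhds ha)
  have hfar : ∀ z ∈ frontier Ω, ρ ≤ ‖z - a‖ := fun z hz => not_lt.1 fun hlt => by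
    rw [hΩ.frontier_eq] at hz
    exact hz.2 (hρΩ (mem_closedBall_iff_norm.2 hlt.le))
  obtain ⟨Kw, φ, hφ, hφeq⟩ := exists_lipschitzWith_eq_inv_pow hw m
  choose Ka hKa using fun j : ℕ => exists_lipschitzWith_truncInvConj_pow hρ (j + 1)
  have hS := lipschitzWith_sum_const_mul (range (m + 1)) D fun j => hKa j a
  have hgreen := integral_conj_mul_wirtingerDeriv_congr_frontier hΩ hb hh hi (hφ.sub hS) hL
    fun z hz => by
      simp only [hφeq z (frontier_subset_closure hz), truncInvConj_of_ge (hfar z hz), hLeq z hz]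
  rw [integral_mul_wirtingerDeriv_sub (integrableOn_conj hi) hφ hS,
    integral_mul_wirtingerDeriv_sum (range (m + 1)) D (integrableOn_conj hi) fun j => hKa j a,
    integral_conj_mul_wirtingerDeriv_inv_pow hΩ hi hw m hφeq] at hgreen
  simp only [integral_conj_mul_wirtingerDeriv_truncInvConj_pow hh hρ hρΩ] at hgreen
  rw [← hgreen]
  ring

lemma norm_mul_pi_div_factorial_mul_conj (c u : ℂ) (j : ℕ) :
    ‖c * (Real.pi / j.factorial * conj u)‖ = ‖c‖ * (Real.pi / j.factorial * ‖u‖) := by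
  rw [norm_mul, norm_mul, norm_div, RCLike.norm_conj, Complex.norm_natCast, Complex.norm_real,
    Real.norm_of_nonneg Real.pi_pos.le]

lemma pi_div_factorial_mul_norm_iteratedDeriv_le (hΩ : IsOpen Ω) (hb : Bornology.IsBounded Ω)
    (hh : DifferentiableOn ℂ h Ω) (hi : IntegrableOn h Ω) (ha : a ∈ Ω) (hw : w ∉ closure Ω)
    (hD : IsReflectedKernel Ω m C a w D)
    (hB : ‖iteratedDeriv (m + 1) (conjCauchyTransform Ω h) w‖ ≤ B) :
    Real.pi / m.factorial * ‖iteratedDeriv m h a‖ ≤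
      C * (B + lipschitzExtensionConstant ℂ * C * ∫ z in Ω, ‖h z‖) +
        C * ∑ j ∈ range m, C * (Real.pi / j.factorial * ‖iteratedDeriv j h a‖) := by
  obtain ⟨hDle, hDm, hDlip⟩ := hD
  obtain ⟨L, hL, hLeq⟩ := hDlip.extend_finite_dimension
  have hid := sum_mul_conj_iteratedDeriv hΩ hb hh hi ha hw hL hLeq
  rw [sum_range_succ, ← eq_sub_iff_add_eq'] at hid
  have hBm : ‖iteratedDeriv (m + 1) (conjCauchyTransform Ω h) w / m.factorial‖ ≤ B := by
    rw [norm_div, Complex.norm_natCast]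
    exact (div_le_self (norm_nonneg _) (by exact_mod_cast m.factorial_pos)).trans hB
  have hLint := norm_integral_mul_wirtingerDeriv_le (integrableOn_conj hi) hL
  have hsum : ‖∑ j ∈ range m, D j * (Real.pi / j.factorial * conj (iteratedDeriv j h a))‖ ≤
      ∑ j ∈ range m, C * (Real.pi / j.factorial * ‖iteratedDeriv j h a‖) := by
    refine norm_sum_le_of_le _ fun j hj => ?_
    rw [norm_mul_pi_div_factorial_mul_conj]
    gcongr
    exact hDle j (mem_range.1 hj).le
  simp only [RCLike.norm_conj, NNReal.coe_mul] at hLint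
  calc Real.pi / m.factorial * ‖iteratedDeriv m h a‖
      ≤ C * ‖D m‖ * (Real.pi / m.factorial * ‖iteratedDeriv m h a‖) :=
        le_mul_of_one_le_left (by positivity) hDm
    _ = C * ‖D m * (Real.pi / m.factorial * conj (iteratedDeriv m h a))‖ := by
        rw [norm_mul_pi_div_factorial_mul_conj, mul_assoc]
    _ ≤ C * ((B + lipschitzExtensionConstant ℂ * C * ∫ z in Ω, ‖h z‖) +
          ∑ j ∈ range m, C * (Real.pi / j.factorial * ‖iteratedDeriv j h a‖)) := by
        gcongr
        rw [hid]
        refine (norm_sub_le _ _).trans (add_le_add ((norm_sub_le _ _).trans ?_) hsum)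
        exact add_le_add (by rwa [norm_neg]) hLint
    _ = _ := mul_add _ _ _

lemma nonneg_of_forall_norm_le {F : ℂ → ℂ} (hb : Bornology.IsBounded Ω)
    (hB : ∀ w ∉ closure Ω, ‖F w‖ ≤ B) : 0 ≤ B := by
  obtain ⟨w, hw⟩ := (Set.ne_univ_iff_exists_notMem _).1
    fun h : closure Ω = Set.univ => NormedSpace.unbounded_univ ℝ ℂ (h ▸ hb.closure)
  exact (norm_nonneg _).trans (hB w hw)

lemma closedBall_half_subset_of_le_infDist_compl {d : ℝ} (hd : 0 < d) (had : d ≤ infDist a Ωᶜ) :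
    closedBall a (d / 2) ⊆ Ω :=
  fun z hz => by_contra fun hzΩ => by
    have := infDist_le_dist_of_mem (x := a) (show z ∈ Ωᶜ from hzΩ)
    linarith [mem_closedBall'.1 hz]

lemma HasReflectedKernels.exists_norm_iteratedDeriv_le_of_lt (hG : HasReflectedKernels Ω)
    (hΩ : IsOpen Ω) (hb : Bornology.IsBounded Ω) (m : ℕ) {K : ℝ} (hK : 0 ≤ K) :
    ∃ K' : ℝ, ∀ h : ℂ → ℂ, DifferentiableOn ℂ h Ω → IntegrableOn h Ω → ∀ B : ℝ,
      (∀ w ∉ closure Ω, ‖iteratedDeriv (m + 1) (conjCauchyTransform Ω h) w‖ ≤ B) → ∀ a ∈ Ω,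
      (∀ j < m, ‖iteratedDeriv j h a‖ ≤ K * (B + ∫ z in Ω, ‖h z‖)) →
        ‖iteratedDeriv m h a‖ ≤ K' * (B + ∫ z in Ω, ‖h z‖) := by
  obtain ⟨d, hd, C, hrefl⟩ := hG m
  obtain ⟨K₁, hK₁, hint⟩ := exists_norm_iteratedDeriv_le_of_closedBall_subset (half_pos hd) m
  set c : ℝ := (lipschitzExtensionConstant ℂ : ℝ)
  set S : ℝ := ∑ j ∈ range m, C * (Real.pi / j.factorial * K)
  set K₂ : ℝ := m.factorial / Real.pi * (C * (1 + c * C) + C * S)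
  refine ⟨K₁ + K₂, fun h hh hi B hB a ha hlt => ?_⟩
  have hB0 := nonneg_of_forall_norm_le hb hB
  have hA0 : 0 ≤ ∫ z in Ω, ‖h z‖ := by positivity
  set A := ∫ z in Ω, ‖h z‖
  rw [add_mul]
  rcases lt_or_ge (infDist a Ωᶜ) d with hnear | hfar
  · obtain ⟨w, hw, D, hD⟩ := hrefl a ha hnear
    have hle := pi_div_factorial_mul_norm_iteratedDeriv_le hΩ hb hh hi ha hw hD (hB w hw)
    refine le_add_of_nonneg_of_le (by positivity) ?_
    simp only [K₂]
    rw [mul_assoc, ← inv_div, ← div_eq_inv_mul, le_div_iff₀' (by positivity), add_mul]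
    refine hle.trans (add_le_add ?_ ?_)
    · rw [mul_assoc (C : ℝ) _ (B + A)]
      gcongr
      linarith [mul_nonneg (by positivity : 0 ≤ c * C) hB0]
    · rw [mul_assoc (C : ℝ) S, sum_mul]
      refine mul_le_mul_of_nonneg_left (sum_le_sum fun j hj => ?_) C.2
      rw [mul_assoc (C : ℝ), mul_assoc _ K]
      gcongr
      exact hlt j (mem_range.1 hj)
  · refine le_add_of_le_of_nonneg ((hint Ω h a hh hi ?_).trans ?_) (by positivity)
    · exact closedBall_half_subset_of_le_infDist_compl hd hfar
    · gcongr
      exact le_add_of_nonneg_left hB0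

lemma HasReflectedKernels.exists_norm_iteratedDeriv_le (hG : HasReflectedKernels Ω)
    (hΩ : IsOpen Ω) (hb : Bornology.IsBounded Ω) (N : ℕ) :
    ∃ K : ℝ, 0 ≤ K ∧ ∀ h : ℂ → ℂ, DifferentiableOn ℂ h Ω → IntegrableOn h Ω → ∀ B : ℝ,
      (∀ w ∉ closure Ω, ∀ k ≤ N, ‖iteratedDeriv k (conjCauchyTransform Ω h) w‖ ≤ B) →
      ∀ a ∈ Ω, ∀ k < N, ‖iteratedDeriv k h a‖ ≤ K * (B + ∫ z in Ω, ‖h z‖) := by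
  induction N with
  | zero => exact ⟨0, le_rfl, fun _ _ _ _ _ _ _ k hk => absurd hk k.not_lt_zero⟩
  | succ n ih =>
    obtain ⟨K, hK, ih⟩ := ih
    obtain ⟨K', hstep⟩ := hG.exists_norm_iteratedDeriv_le_of_lt hΩ hb n hK
    refine ⟨max K K', le_max_of_le_left hK, fun h hh hi B hB a ha k hk => ?_⟩
    have hB0 := nonneg_of_forall_norm_le hb fun w hw => hB w hw 0 (Nat.zero_le _)
    have hlt := ih h hh hi B (fun w hw k hk => hB w hw k (hk.trans n.le_succ)) a ha
    rcases Nat.lt_succ_iff_lt_or_eq.1 hk with hk | rfl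
    · exact (hlt k hk).trans (by gcongr; exact le_max_left _ _)
    · exact (hstep h hh hi B (fun w hw => hB w hw _ le_rfl) a ha hlt).trans
        (by gcongr; exact le_max_right _ _)

end Reflection

/-! ### Duality with the Cauchy transform -/

section KernelIntegrability

variable {E : Type*} [NormedAddCommGroup E] [NormedSpace ℝ E] [FiniteDimensional ℝ E]
  [Nontrivial E] [MeasurableSpace E] [BorelSpace E] {μ : Measure E} [μ.IsAddHaarMeasure] {p : ℝ}

lemma integrableOn_norm_rpow_neg_ball (hp : p < Module.finrank ℝ E) :
    IntegrableOn (fun u : E => ‖u‖ ^ (-p)) (ball 0 1) μ := by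
  refine (integrableOn_fun_norm_addHaar μ (f := fun y : ℝ => y ^ (-p))).2 ?_
  have hrpow : IntegrableOn (fun y : ℝ => y ^ ((Module.finrank ℝ E - 1 : ℕ) - p))
      (Set.Ioo 0 1) := by
    rw [← intervalIntegrable_iff_integrableOn_Ioo_of_le zero_le_one]
    refine intervalIntegral.intervalIntegrable_rpow' ?_
    rw [Nat.cast_sub Module.finrank_pos]
    push_cast
    linarith
  refine hrpow.congr_fun (fun y hy => ?_) measurableSet_Ioo
  simp only [smul_eq_mul]
  rw [sub_eq_add_neg, Real.rpow_add hy.1, Real.rpow_natCast]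

lemma exists_forall_integral_norm_sub_rpow_neg_le {s : Set E} (hs : μ s ≠ ⊤) (hp₀ : 0 ≤ p)
    (hp : p < Module.finrank ℝ E) :
    ∃ K, 0 ≤ K ∧ ∀ w, IntegrableOn (fun z => ‖z - w‖ ^ (-p)) s μ ∧
      ∫ z in s, ‖z - w‖ ^ (-p) ∂μ ≤ K := by
  set g : E → ℝ := (ball 0 1).indicator fun u => ‖u‖ ^ (-p) with hg
  have hgi : Integrable g μ := (integrableOn_norm_rpow_neg_ball hp).integrable_indicator
    measurableSet_ball
  have hg0 : 0 ≤ g := Set.indicator_nonneg fun u _ => Real.rpow_nonneg (norm_nonneg u) _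
  have hle : ∀ u, ‖u‖ ^ (-p) ≤ g u + 1 := fun u => by
    by_cases hu : u ∈ ball (0 : E) 1
    · simp [hg, hu]
    · rw [hg, Set.indicator_of_notMem hu, zero_add]
      exact Real.rpow_le_one_of_one_le_of_nonpos (by simpa using hu) (neg_nonpos.2 hp₀)
  refine ⟨(∫ u, g u ∂μ) + μ.real s, add_nonneg (integral_nonneg hg0) measureReal_nonneg,
    fun w => ?_⟩
  have hgw : Integrable (fun z => g (z - w)) μ := hgi.comp_sub_right w
  have h1 : IntegrableOn (fun _ => (1 : ℝ)) s μ := integrableOn_const hs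
  have hi : IntegrableOn (fun z => ‖z - w‖ ^ (-p)) s μ := by
    refine (hgw.integrableOn.add h1).mono'
      (((measurable_id.sub_const w).norm.pow_const _).aestronglyMeasurable)
      (Eventually.of_forall fun z => ?_)
    rw [Real.norm_of_nonneg (by positivity)]
    exact hle _
  refine ⟨hi, ?_⟩
  calc ∫ z in s, ‖z - w‖ ^ (-p) ∂μ ≤ ∫ z in s, (g (z - w) + 1) ∂μ :=
        integral_mono hi (hgw.integrableOn.add h1) fun z => hle _
    _ = (∫ z in s, g (z - w) ∂μ) + μ.real s := by
        rw [integral_add hgw.integrableOn h1, setIntegral_const, smul_eq_mul, mul_one]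
    _ ≤ (∫ u, g u ∂μ) + μ.real s := by
        rw [← integral_sub_right_eq_self g w]
        gcongr
        · exact Eventually.of_forall fun z => hg0 (z - w)
        · exact Measure.restrict_le_self

end KernelIntegrability

lemma norm_inv_sub_inv_le {u v : ℂ} (hu : u ≠ 0) (hv : v ≠ 0) :
    ‖u⁻¹ - v⁻¹‖ ≤ √‖u - v‖ * (‖u‖ ^ (-(3 / 2) : ℝ) + ‖v‖ ^ (-(3 / 2) : ℝ)) := by
  have hrpow : ∀ w : ℂ, ‖w‖ ^ (-(3 / 2) : ℝ) = (√‖w‖ ^ 3)⁻¹ := fun w => by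
    rw [Real.rpow_neg (norm_nonneg w), Real.sqrt_eq_rpow, ← Real.rpow_mul_natCast (norm_nonneg w)]
    norm_num
  rw [hrpow, hrpow, inv_sub_inv' hu hv, norm_mul, norm_mul, norm_inv, norm_inv, norm_sub_rev v]
  have hs : 0 < √‖u‖ := Real.sqrt_pos.2 (norm_pos_iff.2 hu)
  have ht : 0 < √‖v‖ := Real.sqrt_pos.2 (norm_pos_iff.2 hv)
  have hsqrt : √‖u - v‖ ≤ √‖u‖ + √‖v‖ := by
    refine Real.sqrt_le_iff.2 ⟨by positivity, (norm_sub_le u v).trans ?_⟩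
    rw [add_sq, Real.sq_sqrt (norm_nonneg u), Real.sq_sqrt (norm_nonneg v)]
    linarith [mul_pos hs ht]
  rw [← Real.sq_sqrt (norm_nonneg u), ← Real.sq_sqrt (norm_nonneg v),
    ← Real.sq_sqrt (norm_nonneg (u - v))]
  simp only [Real.sqrt_sq (Real.sqrt_nonneg _)]
  set s := √‖u‖
  set t := √‖v‖
  calc (s ^ 2)⁻¹ * √‖u - v‖ ^ 2 * (t ^ 2)⁻¹ = √‖u - v‖ * (√‖u - v‖ / (s ^ 2 * t ^ 2)) := by
        field_simp
    _ ≤ √‖u - v‖ * ((s + t) / (s ^ 2 * t ^ 2)) := by gcongr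
    _ ≤ √‖u - v‖ * ((s + t) / (s ^ 2 * t ^ 2) + (s - t) ^ 2 * (s + t) / (s ^ 3 * t ^ 3)) := by
        gcongr
        exact le_add_of_nonneg_right (by positivity)
    _ = √‖u - v‖ * ((s ^ 3)⁻¹ + (t ^ 3)⁻¹) := by
        field_simp
        ring

section Duality

variable {Ω : Set ℂ} {h ψ : ℂ → ℂ} {S : ℝ} {K : ℝ≥0}

lemma integrableOn_conj_div_sub (hb : Bornology.IsBounded Ω) (hi : IntegrableOn h Ω)
    (hΩ : MeasurableSet Ω) (hS : ∀ z ∈ Ω, ‖h z‖ ≤ S) (w : ℂ) :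
    IntegrableOn (fun z => conj (h z) / (z - w)) Ω := by
  obtain ⟨K, -, hK⟩ := exists_forall_integral_norm_sub_rpow_neg_le (μ := volume) (p := 1)
    hb.measure_lt_top.ne zero_le_one (by simp)
  refine ((hK w).1.const_mul S).mono' ?_ ?_
  · simpa using aestronglyMeasurable_div_sub_pow (integrableOn_conj hi) w 1
  · filter_upwards [ae_restrict_mem hΩ] with z hz
    rw [norm_div, RCLike.norm_conj, div_eq_mul_inv, Real.rpow_neg_one]
    gcongr
    exact hS z hz

lemma exists_norm_conjCauchyTransform_sub_le (hb : Bornology.IsBounded Ω)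
    (hΩ : MeasurableSet Ω) :
    ∃ K, 0 ≤ K ∧ ∀ h S, IntegrableOn h Ω → 0 ≤ S → (∀ z ∈ Ω, ‖h z‖ ≤ S) → ∀ w w',
      ‖conjCauchyTransform Ω h w - conjCauchyTransform Ω h w'‖ ≤ K * S * √‖w - w'‖ := by
  obtain ⟨K, hK, hint⟩ := exists_forall_integral_norm_sub_rpow_neg_le (μ := volume)
    (p := 3 / 2) hb.measure_lt_top.ne (by norm_num) (by rw [Complex.finrank_real_complex]; norm_num)
  refine ⟨2 * K, by positivity, fun h S hi hS0 hS w w' => ?_⟩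
  rw [conjCauchyTransform, conjCauchyTransform,
    ← integral_sub (integrableOn_conj_div_sub hb hi hΩ hS w)
      (integrableOn_conj_div_sub hb hi hΩ hS w')]
  have hne : ∀ a : ℂ, ∀ᵐ z ∂volume.restrict Ω, z ≠ a := fun a =>
    ae_restrict_of_ae (compl_mem_ae_iff.2 (measure_singleton a))
  calc ‖∫ z in Ω, conj (h z) / (z - w) - conj (h z) / (z - w')‖
      ≤ ∫ z in Ω, S * √‖w - w'‖ * (‖z - w‖ ^ (-(3 / 2) : ℝ) + ‖z - w'‖ ^ (-(3 / 2) : ℝ)) := by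
        refine norm_integral_le_of_norm_le (((hint w).1.add (hint w').1).const_mul _) ?_
        filter_upwards [hne w, hne w', ae_restrict_mem hΩ] with z hz hz' hzΩ
        have hinv := norm_inv_sub_inv_le (sub_ne_zero.2 hz) (sub_ne_zero.2 hz')
        rw [sub_sub_sub_cancel_left, norm_sub_rev w'] at hinv
        rw [div_eq_mul_inv, div_eq_mul_inv, ← mul_sub, norm_mul, RCLike.norm_conj, mul_assoc]
        gcongr
        exact hS z hzΩ
    _ ≤ S * √‖w - w'‖ * (K + K) := by
        rw [integral_const_mul, integral_add (hint w).1 (hint w').1]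
        gcongr
        exacts [(hint w).2, (hint w').2]
    _ = 2 * K * S * √‖w - w'‖ := by ring

lemma norm_truncInvConj_le_norm_inv {ρ : ℝ} (hρ : 0 < ρ) (u : ℂ) :
    ‖truncInvConj ρ u‖ ≤ ‖u‖ ^ (-1 : ℝ) := by
  rw [Real.rpow_neg_one]
  rcases le_total ρ ‖u‖ with h | h
  · rw [truncInvConj_of_ge h, RCLike.norm_conj, norm_inv]
  · rcases eq_or_ne u 0 with rfl | hu
    · simp [truncInvConj]
    · refine (norm_truncInvConj_le hρ u).trans ?_
      have := norm_pos_iff.2 hu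
      gcongr

lemma integrable_wirtingerDeriv (hψ : LipschitzWith K ψ) (hc : HasCompactSupport ψ) :
    Integrable (wirtingerDeriv ψ) :=
  ((integrable_fderiv_apply_of_lipschitzWith hψ hc 1).sub
    ((integrable_fderiv_apply_of_lipschitzWith hψ hc Complex.I).const_mul _)).div_const 2

lemma integral_truncInvConj_mul_wirtingerDeriv (hψ : LipschitzWith K ψ)
    (hc : HasCompactSupport ψ) {ρ : ℝ} (hρ : 0 < ρ) (z : ℂ) :
    ∫ w, truncInvConj ρ (w - z) * wirtingerDeriv ψ w = -((∫ w in ball z ρ, ψ w) / ρ ^ 2) := by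
  obtain ⟨Kρ, hKρ⟩ := exists_lipschitzWith_truncInvConj_pow hρ 1
  have hlip : LipschitzWith Kρ fun w => truncInvConj ρ (w - z) := by simpa using hKρ z
  obtain ⟨K', hprod⟩ := exists_lipschitzWith_mul_of_hasCompactSupport
    hlip.locallyLipschitz.locallyLipschitzOn hψ hc
  have hzero := integral_wirtingerDeriv_eq_zero hprod hc.mul_left
  have hae : wirtingerDeriv (fun w => truncInvConj ρ (w - z) * ψ w) =ᵐ[volume] fun w =>
      truncInvConj ρ (w - z) * wirtingerDeriv ψ w +
        (ball z ρ).indicator (fun w => ψ w / ρ ^ 2) w := by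
    filter_upwards [hlip.ae_differentiableAt, hψ.ae_differentiableAt,
      measure_eq_zero_iff_ae_notMem.1 (Measure.addHaar_sphere volume z ρ)] with w hw hw' hsph
    have hker := wirtingerDeriv_truncInvConj_pow hρ.le hsph 0
    simp only [zero_add, pow_one, pow_zero, mul_one, mul_zero, Nat.cast_zero] at hker
    rw [wirtingerDeriv_mul hw hw', hker]
    by_cases hball : w ∈ ball z ρ
    · simp only [Set.indicator_of_mem hball]
      ring
    · simp only [Set.indicator_of_notMem hball, zero_mul]
  rw [integral_congr_ae hae, integral_add, integral_indicator measurableSet_ball,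
    integral_div] at hzero
  · exact eq_neg_of_add_eq_zero_left hzero
  · exact (integrable_wirtingerDeriv hψ hc).bdd_mul hlip.continuous.aestronglyMeasurable
      (Eventually.of_forall fun w => norm_truncInvConj_le hρ _)
  · exact ((hψ.continuous.integrable_of_hasCompactSupport hc).div_const _).indicator
      measurableSet_ball

lemma norm_integral_ball_div_sub_le (hψ : LipschitzWith K ψ) {ρ : ℝ} (hρ : 0 < ρ) (z : ℂ) :
    ‖(∫ w in ball z ρ, ψ w) / ρ ^ 2 - Real.pi * ψ z‖ ≤ Real.pi * K * ρ := by
  have hvol : volume.real (ball z ρ) = Real.pi * ρ ^ 2 := by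
    simp [Measure.real, Complex.volume_ball, hρ.le, mul_comm]
  have hi : IntegrableOn ψ (ball z ρ) :=
    (hψ.continuous.continuousOn.integrableOn_compact (isCompact_closedBall z ρ)).mono_set
      ball_subset_closedBall
  have hsub : (∫ w in ball z ρ, ψ w) - Real.pi * ρ ^ 2 * ψ z = ∫ w in ball z ρ, (ψ w - ψ z) := by
    rw [integral_sub hi (integrableOn_const measure_ball_lt_top.ne), setIntegral_const, hvol]
    simp
  have hle : ‖∫ w in ball z ρ, (ψ w - ψ z)‖ ≤ K * ρ * (Real.pi * ρ ^ 2) := by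
    rw [← hvol]
    refine norm_setIntegral_le_of_norm_le_const measure_ball_lt_top fun w hw => ?_
    rw [← dist_eq_norm]
    exact (hψ.dist_le_mul w z).trans (by gcongr; exact (mem_ball.1 hw).le)
  have hρ0 : (ρ : ℂ) ≠ 0 := by exact_mod_cast hρ.ne'
  rw [show (∫ w in ball z ρ, ψ w) / ρ ^ 2 - Real.pi * ψ z =
    ((∫ w in ball z ρ, ψ w) - Real.pi * ρ ^ 2 * ψ z) / ρ ^ 2 by field_simp, hsub, norm_div,
    norm_pow, Complex.norm_real, Real.norm_of_nonneg hρ.le, div_le_iff₀ (by positivity)]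
  linarith

lemma tendsto_integral_truncInvConj_mul_wirtingerDeriv (hψ : LipschitzWith K ψ)
    (hc : HasCompactSupport ψ) (z : ℂ) :
    Tendsto (fun ρ => ∫ w, truncInvConj ρ (w - z) * wirtingerDeriv ψ w) (𝓝[>] 0)
      (𝓝 (∫ w, conj (w - z)⁻¹ * wirtingerDeriv ψ w)) := by
  obtain ⟨Kz, -, hKz⟩ := exists_forall_integral_norm_sub_rpow_neg_le (μ := volume) (p := 1)
    (s := tsupport ψ) hc.isCompact.measure_lt_top.ne zero_le_one (by simp)
  have hdom : Integrable fun w => (tsupport ψ).indicator (fun w => ‖w - z‖ ^ (-1 : ℝ) * K) w :=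
    IntegrableOn.integrable_indicator ((hKz z).1.mul_const _) (isClosed_tsupport ψ).measurableSet
  refine tendsto_integral_filter_of_dominated_convergence _ ?_ ?_ hdom ?_
  · filter_upwards [self_mem_nhdsWithin] with ρ hρ
    exact ((lipschitzWith_truncInvConj hρ).continuous.comp
      (continuous_sub_right z)).aestronglyMeasurable.mul
      (measurable_wirtingerDeriv ψ).aestronglyMeasurable
  · filter_upwards [self_mem_nhdsWithin] with ρ hρ
    refine Eventually.of_forall fun w => ?_
    by_cases hw : w ∈ tsupport ψ
    · rw [Set.indicator_of_mem hw, norm_mul]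
      gcongr
      exacts [norm_truncInvConj_le_norm_inv hρ _, norm_wirtingerDeriv_le_of_lipschitzWith hψ]
    · simp [Set.indicator_of_notMem hw, wirtingerDeriv_of_notMem_tsupport hw]
  · filter_upwards [compl_mem_ae_iff.2 (measure_singleton z)] with w hw
    refine tendsto_const_nhds.congr' ?_
    filter_upwards [Ioc_mem_nhdsGT (norm_pos_iff.2 (sub_ne_zero.2 hw))] with ρ hρ
    rw [truncInvConj_of_ge hρ.2]

lemma tendsto_integral_ball_div (hψ : LipschitzWith K ψ) (z : ℂ) :
    Tendsto (fun ρ : ℝ => (∫ w in ball z ρ, ψ w) / ρ ^ 2) (𝓝[>] 0) (𝓝 (Real.pi * ψ z)) := by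
  rw [tendsto_iff_norm_sub_tendsto_zero]
  refine squeeze_zero' (Eventually.of_forall fun _ => norm_nonneg _)
    (by filter_upwards [self_mem_nhdsWithin] with ρ hρ
        exact norm_integral_ball_div_sub_le hψ hρ z) ?_
  exact ((continuous_const_mul (Real.pi * K)).tendsto' 0 0 (mul_zero _)).mono_left
    nhdsWithin_le_nhds

theorem integral_inv_conj_mul_wirtingerDeriv (hψ : LipschitzWith K ψ) (hc : HasCompactSupport ψ)
    (z : ℂ) : ∫ w, conj (z - w)⁻¹ * wirtingerDeriv ψ w = Real.pi * ψ z := by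
  have hpompeiu : ∀ᶠ ρ : ℝ in 𝓝[>] 0, ∫ w, truncInvConj ρ (w - z) * wirtingerDeriv ψ w =
      -((∫ w in ball z ρ, ψ w) / ρ ^ 2) := by
    filter_upwards [self_mem_nhdsWithin] with ρ hρ
    exact integral_truncInvConj_mul_wirtingerDeriv hψ hc hρ z
  have hlim := tendsto_nhds_unique
    ((tendsto_integral_truncInvConj_mul_wirtingerDeriv hψ hc z).congr' hpompeiu)
    (tendsto_integral_ball_div hψ z).neg
  rw [← neg_eq_iff_eq_neg.2 hlim, ← integral_neg]
  congr with w
  rw [← neg_sub w z, inv_neg, map_neg, neg_mul]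

end Duality

/-- The points of `Ω` at distance at most `ε` from the complement of `Ω`. -/
def innerLayer (Ω : Set ℂ) (ε : ℝ) : Set ℂ := Ω ∩ {z | infDist z Ωᶜ ≤ ε}

section BoundaryLayer

variable {Ω : Set ℂ} {h ψ : ℂ → ℂ} {S B ε : ℝ} {K : ℝ≥0} {w : ℂ}

lemma integrable_prod_mul_inv_conj_mul (hb : Bornology.IsBounded Ω) (hΩ : MeasurableSet Ω)
    (hi : IntegrableOn h Ω) (hS₀ : 0 ≤ S) (hS : ∀ z ∈ Ω, ‖h z‖ ≤ S) (hψ : Integrable ψ) :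
    Integrable (fun p : ℂ × ℂ => h p.1 * (conj (p.1 - p.2)⁻¹ * ψ p.2))
      ((volume.restrict Ω).prod volume) := by
  obtain ⟨C, -, hint⟩ := exists_forall_integral_norm_sub_rpow_neg_le (μ := volume) (p := 1)
    hb.measure_lt_top.ne zero_le_one (by simp)
  have hmeas : AEStronglyMeasurable (fun p : ℂ × ℂ => h p.1 * (conj (p.1 - p.2)⁻¹ * ψ p.2))
      ((volume.restrict Ω).prod volume) :=
    hi.aestronglyMeasurable.comp_fst.mul
      ((show Measurable fun p : ℂ × ℂ => conj (p.1 - p.2)⁻¹ by fun_prop).aestronglyMeasurable.mul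
        hψ.aestronglyMeasurable.comp_snd)
  have hnorm : ∀ w, ∀ᵐ z ∂volume.restrict Ω, ‖h z * (conj (z - w)⁻¹ * ψ w)‖ ≤
      S * ‖ψ w‖ * ‖z - w‖ ^ (-1 : ℝ) := fun w => by
    filter_upwards [ae_restrict_mem hΩ] with z hz
    rw [norm_mul, norm_mul, RCLike.norm_conj, norm_inv, Real.rpow_neg_one, mul_assoc,
      mul_comm ‖ψ w‖]
    gcongr
    exact hS z hz
  have hslice : ∀ w, IntegrableOn (fun z => h z * (conj (z - w)⁻¹ * ψ w)) Ω := fun w =>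
    ((hint w).1.const_mul _).mono' (by
      exact hi.aestronglyMeasurable.mul
        (show Measurable fun z => conj (z - w)⁻¹ * ψ w by fun_prop).aestronglyMeasurable) (hnorm w)
  refine (integrable_prod_iff' hmeas).2 ⟨Eventually.of_forall hslice, ?_⟩
  refine (hψ.norm.const_mul (S * C)).mono' hmeas.norm.prod_swap.integral_prod_right'
    (Eventually.of_forall fun w => ?_)
  rw [Real.norm_of_nonneg (by positivity)]
  calc ∫ z in Ω, ‖h z * (conj (z - w)⁻¹ * ψ w)‖
      ≤ ∫ z in Ω, S * ‖ψ w‖ * ‖z - w‖ ^ (-1 : ℝ) :=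
        integral_mono_ae (hslice w).norm ((hint w).1.const_mul _) (hnorm w)
    _ ≤ S * C * ‖ψ w‖ := by
        rw [integral_const_mul, mul_right_comm]
        gcongr
        exact (hint w).2

theorem pi_mul_integral_mul_eq (hb : Bornology.IsBounded Ω) (hΩ : MeasurableSet Ω)
    (hi : IntegrableOn h Ω) (hS₀ : 0 ≤ S) (hS : ∀ z ∈ Ω, ‖h z‖ ≤ S) (hψ : LipschitzWith K ψ)
    (hc : HasCompactSupport ψ) :
    Real.pi * ∫ z in Ω, h z * ψ z =
      ∫ w, conj (conjCauchyTransform Ω h w) * wirtingerDeriv ψ w := by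
  calc Real.pi * ∫ z in Ω, h z * ψ z
      = ∫ z in Ω, ∫ w, h z * (conj (z - w)⁻¹ * wirtingerDeriv ψ w) := by
        rw [← integral_const_mul]
        congr with z
        rw [integral_const_mul, integral_inv_conj_mul_wirtingerDeriv hψ hc z]
        ring
    _ = ∫ w, ∫ z in Ω, h z * (conj (z - w)⁻¹ * wirtingerDeriv ψ w) :=
        integral_integral_swap
          (integrable_prod_mul_inv_conj_mul hb hΩ hi hS₀ hS (integrable_wirtingerDeriv hψ hc))
    _ = _ := by
        congr with w
        rw [conjCauchyTransform, ← integral_conj, ← integral_mul_const]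
        congr with z
        rw [map_div₀, Complex.conj_conj, map_inv₀]
        ring

lemma exists_notMem_closure_norm_sub_le (hb : Bornology.IsBounded Ω)
    (hext : frontier Ω ⊆ closure (closure Ω)ᶜ) (hε : 0 < ε) (hw : w ∈ innerLayer Ω ε) :
    ∃ w' ∉ closure Ω, ‖w - w'‖ ≤ 2 * ε := by
  have hne : Ω ≠ Set.univ := fun h => NormedSpace.unbounded_univ ℝ ℂ (h ▸ hb)
  obtain ⟨y, hy, hwy⟩ := exists_mem_frontier_infDist_compl_eq_dist hw.1 hne
  obtain ⟨w', hw', hyw'⟩ := Metric.mem_closure_iff.1 (hext hy) ε hε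
  refine ⟨w', hw', ?_⟩
  have hwε : infDist w Ωᶜ ≤ ε := hw.2
  rw [← dist_eq_norm]
  linarith [dist_triangle w y w']

lemma norm_wirtingerDeriv_innerCutoff_le_indicator (hε : 0 < ε) (z : ℂ) :
    ‖wirtingerDeriv (innerCutoff Ω ε) z‖ ≤ (innerLayer Ω (2 * ε)).indicator (fun _ => ε⁻¹) z := by
  by_cases hz : z ∈ innerLayer Ω (2 * ε)
  · rw [Set.indicator_of_mem hz]
    exact norm_wirtingerDeriv_innerCutoff_le hε
  · rw [Set.indicator_of_notMem hz, norm_le_zero_iff]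
    by_cases hzΩ : z ∈ Ω
    · exact wirtingerDeriv_innerCutoff_eq_zero hε (not_le.1 fun h => hz ⟨hzΩ, h⟩)
    · exact wirtingerDeriv_of_notMem_tsupport fun h => hzΩ (tsupport_innerCutoff_subset hε h)

lemma measurableSet_innerLayer (hΩ : MeasurableSet Ω) : MeasurableSet (innerLayer Ω ε) :=
  hΩ.inter (isClosed_le (continuous_infDist_pt _) continuous_const).measurableSet

lemma norm_integral_mul_innerCutoff_le {L : ℝ} (hΩ : IsOpen Ω) (hb : Bornology.IsBounded Ω)
    (hext : frontier Ω ⊆ closure (closure Ω)ᶜ) (hh : DifferentiableOn ℂ h Ω)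
    (hi : IntegrableOn h Ω) (hS₀ : 0 ≤ S) (hS : ∀ z ∈ Ω, ‖h z‖ ≤ S) (hL₀ : 0 ≤ L)
    (hL : ∀ w w', ‖conjCauchyTransform Ω h w - conjCauchyTransform Ω h w'‖ ≤ L * √‖w - w'‖)
    (hB : ∀ w ∉ closure Ω, ‖conjCauchyTransform Ω h w‖ ≤ B) (hε : 0 < ε) :
    ‖Real.pi * ∫ z in Ω, h z * (conj (h z) * innerCutoff Ω ε z)‖ ≤
      volume.real (innerLayer Ω (2 * ε)) * ((B + L * √(2 * (2 * ε))) * (S * ε⁻¹)) := by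
  have hsupp := tsupport_innerCutoff_subset (Ω := Ω) hε
  have hcompact := hasCompactSupport_innerCutoff hb hε
  obtain ⟨K, hK⟩ := exists_lipschitzWith_mul_of_hasCompactSupport
    ((locallyLipschitzOn_conj hΩ hh).mono hsupp) (lipschitzWith_innerCutoff Ω ε) hcompact
  rw [pi_mul_integral_mul_eq hb hΩ.measurableSet hi hS₀ hS hK hcompact.mul_left, ← smul_eq_mul,
    ← setIntegral_const, ← integral_indicator (measurableSet_innerLayer hΩ.measurableSet)]
  refine norm_integral_le_of_norm_le ((integrable_indicator_iff
    (measurableSet_innerLayer hΩ.measurableSet)).2 (integrableOn_const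
      (measure_ne_top_of_subset Set.inter_subset_left hb.measure_lt_top.ne))) ?_
  filter_upwards [(lipschitzWith_innerCutoff Ω ε).ae_differentiableAt] with w hw
  rw [wirtingerDeriv_conj_mul hΩ hh hsupp hw]
  have hχ := norm_wirtingerDeriv_innerCutoff_le_indicator (Ω := Ω) hε w
  by_cases hwl : w ∈ innerLayer Ω (2 * ε)
  · rw [Set.indicator_of_mem hwl] at hχ ⊢
    obtain ⟨w', hw', hww'⟩ := exists_notMem_closure_norm_sub_le hb hext (by positivity) hwl
    have hTw : ‖conjCauchyTransform Ω h w‖ ≤ B + L * √(2 * (2 * ε)) :=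
      calc ‖conjCauchyTransform Ω h w‖ ≤ ‖conjCauchyTransform Ω h w'‖ +
            ‖conjCauchyTransform Ω h w - conjCauchyTransform Ω h w'‖ := norm_le_insert' _ _
        _ ≤ B + L * √‖w - w'‖ := add_le_add (hB w' hw') (hL w w')
        _ ≤ B + L * √(2 * (2 * ε)) := by gcongr
    rw [norm_mul, norm_mul, RCLike.norm_conj, RCLike.norm_conj]
    gcongr
    exacts [(norm_nonneg _).trans hTw, hS w hwl.1]
  · rw [Set.indicator_of_notMem hwl] at hχ ⊢
    simp [norm_le_zero_iff.1 hχ]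

lemma tendsto_integral_mul_innerCutoff (hΩ : IsOpen Ω) (hb : Bornology.IsBounded Ω)
    (hi : IntegrableOn h Ω) (hS₀ : 0 ≤ S) (hS : ∀ z ∈ Ω, ‖h z‖ ≤ S) :
    Tendsto (fun ε => ∫ z in Ω, h z * (conj (h z) * innerCutoff Ω ε z)) (𝓝[>] 0)
      (𝓝 (∫ z in Ω, ((‖h z‖ ^ 2 : ℝ) : ℂ))) := by
  have hne : Ωᶜ.Nonempty :=
    Set.nonempty_compl.2 fun h => NormedSpace.unbounded_univ ℝ ℂ (h ▸ hb)
  refine tendsto_integral_filter_of_dominated_convergence (fun z => S * ‖h z‖)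
    (Eventually.of_forall fun ε => hi.aestronglyMeasurable.mul
      ((Complex.continuous_conj.comp_aestronglyMeasurable hi.aestronglyMeasurable).mul
        (lipschitzWith_innerCutoff Ω ε).continuous.aestronglyMeasurable))
    (Eventually.of_forall fun ε => ?_) (hi.norm.const_mul S) ?_
  · filter_upwards [ae_restrict_mem hΩ.measurableSet] with z hz
    rw [norm_mul, norm_mul, RCLike.norm_conj]
    exact mul_le_mul (hS z hz)
      (mul_le_of_le_one_right (norm_nonneg _) norm_innerCutoff_le_one) (by positivity) hS₀
  · filter_upwards [ae_restrict_mem hΩ.measurableSet] with z hz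
    refine tendsto_const_nhds.congr' ?_
    filter_upwards [innerCutoff_eventually_eq_one hΩ hne hz] with ε hε
    rw [hε.self_of_nhds, mul_one, Complex.mul_conj']
    push_cast
    rfl

theorem pi_mul_integral_norm_sq_le (hΩ : IsOpen Ω) (hb : Bornology.IsBounded Ω)
    (hext : frontier Ω ⊆ closure (closure Ω)ᶜ) {c : ℝ}
    (hlayer : ∀ ε ∈ Set.Ioo (0 : ℝ) 1, volume.real (innerLayer Ω ε) ≤ c * ε)
    (hh : DifferentiableOn ℂ h Ω) (hi : IntegrableOn h Ω) (hS₀ : 0 ≤ S)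
    (hS : ∀ z ∈ Ω, ‖h z‖ ≤ S) (hB : ∀ w ∉ closure Ω, ‖conjCauchyTransform Ω h w‖ ≤ B) :
    Real.pi * ∫ z in Ω, ‖h z‖ ^ 2 ≤ 2 * c * S * B := by
  obtain ⟨K, hK₀, hK⟩ := exists_norm_conjCauchyTransform_sub_le hb hΩ.measurableSet
  have hB₀ := nonneg_of_forall_norm_le hb hB
  have hbound : ∀ᶠ ε in 𝓝[>] (0 : ℝ),
      ‖Real.pi * ∫ z in Ω, h z * (conj (h z) * innerCutoff Ω ε z)‖ ≤
        2 * c * S * (B + K * S * √(2 * (2 * ε))) := by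
    filter_upwards [Ioo_mem_nhdsGT (one_half_pos (α := ℝ))] with ε hε
    have hε₀ : 0 < ε := hε.1
    refine (norm_integral_mul_innerCutoff_le hΩ hb hext hh hi hS₀ hS (by positivity)
      (hK h S hi hS₀ hS) hB hε₀).trans ?_
    calc _ ≤ c * (2 * ε) * ((B + K * S * √(2 * (2 * ε))) * (S * ε⁻¹)) := by
          gcongr
          exact hlayer _ ⟨by linarith, by linarith [hε.2]⟩
      _ = _ := by field_simp
  have hcont : Continuous fun ε : ℝ => 2 * c * S * (B + K * S * √(2 * (2 * ε))) := by fun_prop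
  have hle := le_of_tendsto_of_tendsto
    ((tendsto_integral_mul_innerCutoff hΩ hb hi hS₀ hS).const_mul _).norm
    ((hcont.tendsto' 0 (2 * c * S * B) (by simp)).mono_left nhdsWithin_le_nhds) hbound
  rwa [integral_complex_ofReal, ← Complex.ofReal_mul, Complex.norm_of_nonneg] at hle
  positivity

end BoundaryLayer

section Absorption

lemma sq_integral_le_measureReal_univ_mul_integral_sq {α : Type*} [MeasurableSpace α]
    {μ : Measure α} [IsFiniteMeasure μ] {g : α → ℝ} (h1 : Integrable g μ)
    (h2 : Integrable (fun x => g x ^ 2) μ) :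
    (∫ x, g x ∂μ) ^ 2 ≤ μ.real Set.univ * ∫ x, g x ^ 2 ∂μ := by
  have hquad (t : ℝ) : 0 ≤ μ.real Set.univ * (t * t) + (-2 * ∫ x, g x ∂μ) * t +
      ∫ x, g x ^ 2 ∂μ :=
    calc 0 ≤ ∫ x, (g x - t) ^ 2 ∂μ := integral_nonneg fun x => sq_nonneg _
      _ = ∫ x, (g x ^ 2 + (-2 * t * g x + t * t)) ∂μ := by
          congr with x
          ring
      _ = _ := by
          have hlin : Integrable (fun x => -2 * t * g x + t * t) μ :=
            (h1.const_mul _).add (integrable_const _)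
          rw [integral_add h2 hlin, integral_add (h1.const_mul _) (integrable_const _),
            integral_const_mul, integral_const, smul_eq_mul]
          ring
  have hdiscrim := discrim_le_zero hquad
  rw [discrim] at hdiscrim
  linarith

lemma le_mul_of_sq_le_mul_add_mul {A B q : ℝ} (hA : 0 ≤ A) (hB : 0 ≤ B)
    (h : A ^ 2 ≤ q * (B + A) * B) : A ≤ (q + 1) * B := by
  rcases (add_nonneg hA hB).eq_or_lt with h0 | h0
  · simp [show A = 0 by linarith, show B = 0 by linarith]
  · refine sub_nonpos.1 (nonpos_of_mul_nonpos_left (b := A + B) ?_ h0)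
    linarith [sq_nonneg B, show (A - (q + 1) * B) * (A + B) =
      A ^ 2 - q * (B + A) * B - B ^ 2 by ring]

lemma integrableOn_norm_sq_of_norm_le {α : Type*} [MeasurableSpace α] {μ : Measure α} {s : Set α}
    {h : α → ℂ} {S : ℝ} (hs : MeasurableSet s) (hi : IntegrableOn h s μ)
    (hS : ∀ z ∈ s, ‖h z‖ ≤ S) : IntegrableOn (fun z => ‖h z‖ ^ 2) s μ := by
  refine (hi.norm.const_mul S).mono' (hi.aestronglyMeasurable.norm.pow 2) ?_
  filter_upwards [ae_restrict_mem hs] with z hz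
  rw [Real.norm_of_nonneg (by positivity), sq]
  gcongr
  exact hS z hz

theorem HasReflectedKernels.exists_norm_iteratedDeriv_le_mul {Ω : Set ℂ}
    (hG : HasReflectedKernels Ω) (hΩ : IsOpen Ω) (hb : Bornology.IsBounded Ω)
    (hext : frontier Ω ⊆ closure (closure Ω)ᶜ) {c : ℝ} (hc : 0 ≤ c)
    (hlayer : ∀ ε ∈ Set.Ioo (0 : ℝ) 1, volume.real (innerLayer Ω ε) ≤ c * ε) (N : ℕ) :
    ∃ C : ℝ, 0 < C ∧ ∀ h : ℂ → ℂ, DifferentiableOn ℂ h Ω → IntegrableOn h Ω → ∀ B : ℝ,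
      (∀ w ∉ closure Ω, ∀ k ≤ N + 1, ‖iteratedDeriv k (conjCauchyTransform Ω h) w‖ ≤ B) →
        ∀ a ∈ Ω, ∀ k ≤ N, ‖iteratedDeriv k h a‖ ≤ C * B := by
  obtain ⟨K, hK, hderiv⟩ := hG.exists_norm_iteratedDeriv_le hΩ hb (N + 1)
  set V := volume.real Ω
  set q : ℝ := V * (2 * c * K)
  refine ⟨K * (q + 2) + 1, by positivity, fun h hh hi B hB a ha k hk => ?_⟩
  have hT : ∀ w ∉ closure Ω, ‖conjCauchyTransform Ω h w‖ ≤ B := fun w hw => by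
    simpa only [iteratedDeriv_zero] using hB w hw 0 (Nat.zero_le _)
  have hB₀ := nonneg_of_forall_norm_le hb hT
  set A := ∫ z in Ω, ‖h z‖
  have hA₀ : 0 ≤ A := integral_nonneg fun z => norm_nonneg _
  have hsup : ∀ z ∈ Ω, ‖h z‖ ≤ K * (B + A) := fun z hz => by
    simpa only [iteratedDeriv_zero] using hderiv h hh hi B hB z hz 0 N.succ_pos
  have hL2 := pi_mul_integral_norm_sq_le hΩ hb hext hlayer hh hi (by positivity) hsup hT
  have hsq := integrableOn_norm_sq_of_norm_le hΩ.measurableSet hi hsup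
  have : IsFiniteMeasure (volume.restrict Ω) := ⟨by simpa using hb.measure_lt_top⟩
  have hA : A ≤ (q + 1) * B := by
    refine le_mul_of_sq_le_mul_add_mul hA₀ hB₀ ?_
    calc A ^ 2 ≤ V * ∫ z in Ω, ‖h z‖ ^ 2 := by
          simpa only [measureReal_restrict_apply_univ] using
            sq_integral_le_measureReal_univ_mul_integral_sq hi.norm hsq
      _ ≤ V * (2 * c * (K * (B + A)) * B) := by
          gcongr
          refine le_trans ?_ hL2
          exact le_mul_of_one_le_left (by positivity) (by linarith [Real.pi_gt_three])
      _ = q * (B + A) * B := by ring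
  calc ‖iteratedDeriv k h a‖ ≤ K * (B + A) := hderiv h hh hi B hB a ha k (Nat.lt_succ_of_le hk)
    _ ≤ K * (B + (q + 1) * B) := by gcongr
    _ ≤ (K * (q + 2) + 1) * B := by linarith

end Absorption

/-! ### Smooth Jordan curves and their normal coordinates -/

/-- A smooth regular parametrization, of period `2π`, of a simple closed curve in the plane. -/
structure IsSmoothJordanCurve (γ : ℝ → ℂ) : Prop where
  contDiff : ContDiff ℝ (⊤ : ℕ∞) γ
  periodic : Function.Periodic γ (2 * Real.pi)
  injOn : Set.InjOn γ (Set.Ico 0 (2 * Real.pi))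
  deriv_ne_zero : ∀ t, deriv γ t ≠ 0

/-- The point at signed distance `σ ‖γ' x‖` from `γ x` on the normal line to `γ` at `γ x`. -/
noncomputable def normalOffset (γ : ℝ → ℂ) (x σ : ℝ) : ℂ := γ x + Complex.I * σ * deriv γ x

section Periodic

variable {F : Type*} [NormedAddCommGroup F]

lemma exists_norm_le_of_periodic {f : ℝ → F} {T : ℝ} (hp : Function.Periodic f T) (hT : T ≠ 0)
    (hf : Continuous f) : ∃ C, 0 < C ∧ ∀ t, ‖f t‖ ≤ C := by
  obtain ⟨C, hC, h⟩ := (hp.isBounded_of_continuous hT hf).exists_pos_norm_le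
  exact ⟨C, hC, fun t => h _ ⟨t, rfl⟩⟩

variable [NormedSpace ℝ F] {f f' : ℝ → F}

lemma periodic_deriv {T : ℝ} (hf : Function.Periodic f T) : Function.Periodic (deriv f) T := by
  intro t
  rw [← deriv_comp_add_const, hf.funext]

lemma of_periodic_of_abs_sub_le {P : ℝ → Prop} {T : ℝ} (hP : Function.Periodic P T) (hT : 0 < T)
    (x : ℝ) (h : ∀ t, |t - x| ≤ T / 2 → P t) (t : ℝ) : P t := by
  have hround : |(t - x) / T - round ((t - x) / T)| ≤ 1 / 2 := abs_sub_round _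
  rw [← hP.sub_int_mul_eq (round ((t - x) / T))]
  refine h _ ?_
  calc |t - round ((t - x) / T) * T - x|
      = |(t - x) / T - round ((t - x) / T)| * T := by
        rw [← abs_of_pos hT, ← abs_mul, abs_of_pos hT]; field_simp; ring_nf
    _ ≤ T / 2 := by nlinarith

lemma norm_le_mul_abs_sub_pow_succ {M x : ℝ} {k : ℕ} (hM : 0 ≤ M)
    (hf : ∀ s, HasDerivAt f (f' s) s) (hb : ∀ s, ‖f' s‖ ≤ M * |s - x| ^ k) (h0 : f x = 0)
    (t : ℝ) : ‖f t‖ ≤ M * |t - x| ^ (k + 1) := by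
  have hmvt := Convex.norm_image_sub_le_of_norm_hasDerivWithin_le (s := Set.uIcc x t)
    (C := M * |t - x| ^ k) (fun s _ => (hf s).hasDerivWithinAt)
    (fun s hs => (hb s).trans (by gcongr M * ?_ ^ k; exact Set.abs_sub_left_of_mem_uIcc hs))
    (convex_uIcc x t) Set.left_mem_uIcc Set.right_mem_uIcc
  rwa [h0, sub_zero, Real.norm_eq_abs, mul_assoc, ← pow_succ] at hmvt

end Periodic

lemma abs_add_abs_div_two_le_norm (a b : ℝ) : (|a| + |b|) / 2 ≤ ‖(b - Complex.I * a : ℂ)‖ := by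
  have hre := Complex.abs_re_le_norm (b - Complex.I * a : ℂ)
  have him := Complex.abs_im_le_norm (b - Complex.I * a : ℂ)
  simp only [Complex.sub_re, Complex.sub_im, Complex.ofReal_re, Complex.ofReal_im, Complex.I_mul_re,
    Complex.I_mul_im, neg_zero, sub_zero, zero_sub, abs_neg] at hre him
  linarith

namespace IsSmoothJordanCurve

variable {γ : ℝ → ℂ}

lemma hasDerivAt (hγ : IsSmoothJordanCurve γ) (t : ℝ) : HasDerivAt γ (deriv γ t) t :=
  (hγ.contDiff.differentiable (by simp) t).hasDerivAt

lemma contDiff_deriv (hγ : IsSmoothJordanCurve γ) : ContDiff ℝ (⊤ : ℕ∞) (deriv γ) :=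
  hγ.contDiff.iterate_deriv 1

lemma exists_norm_deriv_le (hγ : IsSmoothJordanCurve γ) : ∃ C, 0 < C ∧ ∀ t, ‖deriv γ t‖ ≤ C :=
  exists_norm_le_of_periodic (periodic_deriv hγ.periodic) Real.two_pi_pos.ne'
    hγ.contDiff_deriv.continuous

lemma exists_le_norm_deriv (hγ : IsSmoothJordanCurve γ) : ∃ c, 0 < c ∧ ∀ t, c ≤ ‖deriv γ t‖ := by
  obtain ⟨C, hC, h⟩ := exists_norm_le_of_periodic
    (f := fun t => (deriv γ t)⁻¹) (fun t => congrArg Inv.inv (periodic_deriv hγ.periodic t))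
    Real.two_pi_pos.ne' (hγ.contDiff_deriv.continuous.inv₀ hγ.deriv_ne_zero)
  refine ⟨C⁻¹, inv_pos.2 hC, fun t => ?_⟩
  exact inv_le_of_inv_le₀ (norm_pos_iff.2 (hγ.deriv_ne_zero t)) (norm_inv (deriv γ t) ▸ h t)

lemma exists_norm_sub_sub_le (hγ : IsSmoothJordanCurve γ) :
    ∃ C, 0 < C ∧ ∀ x t, ‖γ t - γ x - (t - x : ℝ) * deriv γ x‖ ≤ C * |t - x| ^ 2 := by
  obtain ⟨C, hC, h⟩ := exists_norm_le_of_periodic (periodic_deriv (periodic_deriv hγ.periodic))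
    Real.two_pi_pos.ne' (hγ.contDiff_deriv.continuous_deriv (by simp))
  have hderiv : ∀ x s, ‖deriv γ s - deriv γ x‖ ≤ C * |s - x| ^ 1 := fun x s =>
    norm_le_mul_abs_sub_pow_succ (f := fun s => deriv γ s - deriv γ x) (f' := deriv (deriv γ))
      (k := 0) hC.le
      (fun s => (hγ.contDiff_deriv.differentiable (by simp) s).hasDerivAt.sub_const _)
      (fun s => by simpa using h s) (sub_self _) s
  refine ⟨C, hC, fun x t => norm_le_mul_abs_sub_pow_succ
    (f := fun t => γ t - γ x - (t - x : ℝ) * deriv γ x) hC.le (fun s => ?_) (hderiv x) (by simp) t⟩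
  have hlin : HasDerivAt (fun t : ℝ => ((t - x : ℝ) : ℂ)) 1 s := by
    simpa using ((hasDerivAt_id s).sub_const x).ofReal_comp
  exact ((hγ.hasDerivAt s).sub_const (γ x)).sub
    (by simpa only [one_mul] using hlin.mul_const (deriv γ x))

lemma eq_of_abs_sub_le_pi (hγ : IsSmoothJordanCurve γ) {s t : ℝ} (h : γ s = γ t)
    (hst : |t - s| ≤ Real.pi) : s = t := by
  have hp := Real.two_pi_pos
  have hmod : ∀ u, γ (toIcoMod hp 0 u) = γ u := fun u => hγ.periodic.sub_zsmul_eq _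
  obtain ⟨n, hn⟩ := (toIcoMod_eq_toIcoMod hp).1
    (hγ.injOn (toIcoMod_mem_Ico' hp s) (toIcoMod_mem_Ico' hp t) (by rw [hmod, hmod, h]))
  have hn0 : n = 0 := by
    by_contra hne
    have : (1 : ℝ) ≤ |(n : ℝ)| := by exact_mod_cast Int.one_le_abs hne
    rw [hn, zsmul_eq_mul, abs_mul, abs_of_pos hp] at hst
    nlinarith [Real.pi_pos]
  rw [hn0, zero_zsmul] at hn
  linarith

lemma exists_le_norm_sub_of_le_abs_sub (hγ : IsSmoothJordanCurve γ) {δ : ℝ} (hδ : 0 < δ) :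
    ∃ c, 0 < c ∧ ∀ x t, δ ≤ |t - x| → |t - x| ≤ Real.pi → c ≤ ‖γ t - γ x‖ := by
  let K : Set (ℝ × ℝ) := Set.Icc 0 (2 * Real.pi) ×ˢ (closedBall 0 Real.pi ∩ {u | δ ≤ |u|})
  have hK : IsCompact K := isCompact_Icc.prod
    ((isCompact_closedBall _ _).inter_right (isClosed_le continuous_const continuous_abs))
  have hcont : Continuous fun p : ℝ × ℝ => ‖γ (p.1 + p.2) - γ p.1‖ := by
    have := hγ.contDiff.continuous
    fun_prop
  obtain ⟨c, hc, h⟩ := hK.exists_forall_le' (a := 0) hcont.continuousOn (by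
    rintro ⟨x, u⟩ ⟨-, hu, hδu⟩
    rw [mem_closedBall_zero_iff, Real.norm_eq_abs] at hu
    rw [norm_pos_iff, sub_ne_zero]
    intro heq
    have hu0 : u = 0 := by simpa using (hγ.eq_of_abs_sub_le_pi heq.symm (by simpa using hu)).symm
    rw [Set.mem_ofPred_eq, hu0, abs_zero] at hδu
    linarith)
  refine ⟨c, hc, fun x t hδt hπ => ?_⟩
  obtain ⟨s, hs, hsx⟩ := Function.Periodic.exists_mem_Ico₀
    (f := fun s => ‖γ (s + (t - x)) - γ s‖)
    (fun s => by simp only [add_right_comm s, hγ.periodic _]) Real.two_pi_pos x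
  have hle := h (s, t - x)
    ⟨Set.Ico_subset_Icc_self hs, by rwa [mem_closedBall_zero_iff, Real.norm_eq_abs], hδt⟩
  rwa [← hsx, add_sub_cancel] at hle

lemma exists_mul_abs_sub_le_norm_sub (hγ : IsSmoothJordanCurve γ) :
    ∃ c, 0 < c ∧ ∀ x t, |t - x| ≤ Real.pi → c * |t - x| ≤ ‖γ t - γ x‖ := by
  obtain ⟨c₁, hc₁, hlow⟩ := hγ.exists_le_norm_deriv
  obtain ⟨C, hC, htaylor⟩ := hγ.exists_norm_sub_sub_le
  obtain ⟨c₂, hc₂, hfar⟩ := hγ.exists_le_norm_sub_of_le_abs_sub (δ := c₁ / (2 * C)) (by positivity)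
  refine ⟨min (c₁ / 2) (c₂ / Real.pi), by positivity, fun x t ht => ?_⟩
  rcases le_total (c₁ / (2 * C)) |t - x| with hd | hd
  · calc min (c₁ / 2) (c₂ / Real.pi) * |t - x| ≤ c₂ / Real.pi * Real.pi := by
          gcongr; exact min_le_right _ _
      _ = c₂ := by field_simp
      _ ≤ ‖γ t - γ x‖ := hfar x t hd ht
  · have hrev := norm_sub_norm_le ((t - x : ℝ) * deriv γ x) (γ t - γ x)
    rw [norm_sub_rev (_ * _), norm_mul, Complex.norm_real, Real.norm_eq_abs] at hrev
    have hquad : C * |t - x| ^ 2 ≤ c₁ / 2 * |t - x| := by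
      calc C * |t - x| ^ 2 = C * |t - x| * |t - x| := by ring
        _ ≤ C * (c₁ / (2 * C)) * |t - x| := by gcongr
        _ = c₁ / 2 * |t - x| := by field_simp
    have hlin : c₁ * |t - x| ≤ |t - x| * ‖deriv γ x‖ := by
      rw [mul_comm]; gcongr; exact hlow x
    calc min (c₁ / 2) (c₂ / Real.pi) * |t - x| ≤ c₁ / 2 * |t - x| := by
          gcongr; exact min_le_left _ _
      _ ≤ ‖γ t - γ x‖ := by linarith [htaylor x t]

end IsSmoothJordanCurve

section NormalOffset

variable {γ : ℝ → ℂ}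

lemma norm_normalOffset_sub (γ : ℝ → ℂ) (x σ : ℝ) :
    ‖normalOffset γ x σ - γ x‖ = |σ| * ‖deriv γ x‖ := by
  simp [normalOffset]

namespace IsSmoothJordanCurve

lemma contDiff_normalOffset (hγ : IsSmoothJordanCurve γ) :
    ContDiff ℝ 1 fun p : ℝ × ℝ => normalOffset γ p.1 p.2 := by
  have h₁ := hγ.contDiff.of_le (show (1 : WithTop ℕ∞) ≤ (⊤ : ℕ∞) by simp)
  have h₂ := hγ.contDiff_deriv.of_le (show (1 : WithTop ℕ∞) ≤ (⊤ : ℕ∞) by simp)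
  have hσ : ContDiff ℝ 1 fun p : ℝ × ℝ => (p.2 : ℂ) :=
    Complex.ofRealCLM.contDiff.comp contDiff_snd
  exact (h₁.comp contDiff_fst).add ((contDiff_const.mul hσ).mul (h₂.comp contDiff_fst))

lemma exists_mul_le_norm_sub_normalOffset_of_abs_sub_le (hγ : IsSmoothJordanCurve γ) :
    ∃ σ₀, 0 < σ₀ ∧ ∃ c, 0 < c ∧ ∀ x σ t, |σ| ≤ σ₀ → |t - x| ≤ Real.pi →
      c * |σ| ≤ ‖γ t - normalOffset γ x σ‖ := by
  obtain ⟨c₁, hc₁, hlow⟩ := hγ.exists_le_norm_deriv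
  obtain ⟨C₁, hC₁, hup⟩ := hγ.exists_norm_deriv_le
  obtain ⟨C, hC, htaylor⟩ := hγ.exists_norm_sub_sub_le
  obtain ⟨c₂, hc₂, hfar⟩ := hγ.exists_le_norm_sub_of_le_abs_sub (δ := c₁ / (2 * C)) (by positivity)
  refine ⟨c₂ / (C₁ + c₁), by positivity, c₁ / 2, by positivity, fun x σ t hσ ht => ?_⟩
  rcases le_total (c₁ / (2 * C)) |t - x| with hd | hd
  · have hrev := norm_sub_norm_le (γ t - γ x) (normalOffset γ x σ - γ x)
    rw [sub_sub_sub_cancel_right, norm_normalOffset_sub] at hrev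
    have hσ' : |σ| * (‖deriv γ x‖ + c₁) ≤ c₂ := by
      calc |σ| * (‖deriv γ x‖ + c₁) ≤ c₂ / (C₁ + c₁) * (C₁ + c₁) := by gcongr; exact hup x
        _ = c₂ := by field_simp
    nlinarith [hfar x t hd ht, abs_nonneg σ]
  · have hsplit : γ t - normalOffset γ x σ =
        (((t - x : ℝ) : ℂ) - Complex.I * σ) * deriv γ x
          + (γ t - γ x - (t - x : ℝ) * deriv γ x) := by
      unfold normalOffset; ring
    have hrev := norm_sub_le_norm_add ((((t - x : ℝ) : ℂ) - Complex.I * σ) * deriv γ x)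
      (γ t - γ x - (t - x : ℝ) * deriv γ x)
    rw [← hsplit, norm_mul] at hrev
    have hmain : (|σ| + |t - x|) / 2 * c₁ ≤
        ‖((t - x : ℝ) : ℂ) - Complex.I * σ‖ * ‖deriv γ x‖ :=
      mul_le_mul (abs_add_abs_div_two_le_norm _ _) (hlow x) hc₁.le (norm_nonneg _)
    have hquad : C * |t - x| ^ 2 ≤ c₁ / 2 * |t - x| := by
      calc C * |t - x| ^ 2 = C * |t - x| * |t - x| := by ring
        _ ≤ C * (c₁ / (2 * C)) * |t - x| := by gcongr
        _ = c₁ / 2 * |t - x| := by field_simp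
    linarith [htaylor x t]

lemma exists_mul_le_norm_sub_normalOffset (hγ : IsSmoothJordanCurve γ) :
    ∃ σ₀, 0 < σ₀ ∧ ∃ c, 0 < c ∧ ∀ x σ, |σ| ≤ σ₀ → ∀ t, c * |σ| ≤ ‖γ t - normalOffset γ x σ‖ := by
  obtain ⟨σ₀, hσ₀, c, hc, h⟩ := hγ.exists_mul_le_norm_sub_normalOffset_of_abs_sub_le
  refine ⟨σ₀, hσ₀, c, hc, fun x σ hσ => of_periodic_of_abs_sub_le (T := 2 * Real.pi)
    (fun t => by rw [hγ.periodic]) Real.two_pi_pos x fun t ht => h x σ t hσ (by linarith)⟩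

lemma exists_normalOffset_eq_of_forall_norm_le (hγ : IsSmoothJordanCurve γ) {a : ℂ} {x : ℝ}
    (hx : ∀ t, ‖a - γ x‖ ≤ ‖a - γ t‖) : ∃ σ, normalOffset γ x σ = a := by
  have hmin : IsLocalMin (fun t => ‖a - γ t‖ ^ 2) x :=
    Eventually.of_forall fun t => by dsimp only; gcongr; exact hx t
  have horth : 2 * inner ℝ (a - γ x) (-deriv γ x) = 0 :=
    hmin.hasDerivAt_eq_zero ((hγ.hasDerivAt x).const_sub a).norm_sq
  have hre : ((a - γ x) / deriv γ x).re = 0 := by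
    rw [inner_neg_right, Complex.inner, Complex.mul_re, Complex.conj_re, Complex.conj_im] at horth
    rw [Complex.div_re, ← add_div, div_eq_zero_iff]
    left; linarith
  have him : Complex.I * ((a - γ x) / deriv γ x).im = (a - γ x) / deriv γ x := by
    rw [mul_comm]
    simpa [hre] using Complex.re_add_im ((a - γ x) / deriv γ x)
  refine ⟨((a - γ x) / deriv γ x).im, ?_⟩
  rw [normalOffset, him, div_mul_cancel₀ _ (hγ.deriv_ne_zero x), add_sub_cancel]

lemma exists_normalOffset_eq (hγ : IsSmoothJordanCurve γ) :
    ∃ C, 0 < C ∧ ∀ a, ∃ x ∈ Set.Icc 0 (2 * Real.pi), ∃ σ, normalOffset γ x σ = a ∧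
      |σ| ≤ C * infDist a (Set.range γ) := by
  obtain ⟨c, hc, hlow⟩ := hγ.exists_le_norm_deriv
  refine ⟨c⁻¹, inv_pos.2 hc, fun a => ?_⟩
  obtain ⟨_, ⟨t, rfl⟩, ht⟩ := (hγ.periodic.compact_of_continuous Real.two_pi_pos.ne'
    hγ.contDiff.continuous).exists_infDist_eq_dist (Set.range_nonempty γ) a
  obtain ⟨x, hx, hxt⟩ := hγ.periodic.exists_mem_Ico₀ Real.two_pi_pos t
  rw [hxt, dist_eq_norm] at ht
  obtain ⟨σ, rfl⟩ := hγ.exists_normalOffset_eq_of_forall_norm_le (a := a) (x := x) fun s => by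
    rw [← ht, ← dist_eq_norm]
    exact infDist_le_dist_of_mem ⟨s, rfl⟩
  refine ⟨x, Set.Ico_subset_Icc_self hx, σ, rfl, ?_⟩
  rw [ht, norm_normalOffset_sub, inv_mul_eq_div, le_div_iff₀ hc]
  gcongr
  exact hlow x

end IsSmoothJordanCurve

end NormalOffset

/-! ### The two sides of the curve -/

section Sides

variable {Ω : Set ℂ}

lemma subset_or_subset_compl_closure {X : Type*} [TopologicalSpace X] {U S : Set X}
    (hU : IsOpen U) (hS : IsPreconnected S) (hd : Disjoint S (frontier U)) :
    S ⊆ U ∨ S ⊆ (closure U)ᶜ := by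
  refine isPreconnected_iff_subset_of_disjoint.1 hS U _ hU isClosed_closure.isOpen_compl
    (fun z hz => ?_) ?_
  · by_cases h : z ∈ U
    · exact Or.inl h
    · exact Or.inr fun hc => hd.notMem_of_mem_left hz (hU.frontier_eq ▸ ⟨hc, h⟩)
  · rw [(Set.disjoint_compl_right_iff_subset.2 subset_closure).inter_eq, Set.inter_empty]

lemma ne_univ_of_isBounded (hb : Bornology.IsBounded Ω) : Ω ≠ Set.univ := by
  rintro rfl
  exact NormedSpace.unbounded_univ ℝ ℂ hb

lemma infDist_frontier_eq_infDist_compl (hΩ : IsOpen Ω) (hb : Bornology.IsBounded Ω) {a : ℂ}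
    (ha : a ∈ Ω) : infDist a (frontier Ω) = infDist a Ωᶜ := by
  obtain ⟨y, hy, hay⟩ := exists_mem_frontier_infDist_compl_eq_dist ha (ne_univ_of_isBounded hb)
  refine le_antisymm (hay ▸ infDist_le_dist_of_mem hy) (infDist_le_infDist_of_subset ?_ ⟨y, hy⟩)
  rw [hΩ.frontier_eq]
  exact fun z hz => hz.2

variable {γ : ℝ → ℂ}

namespace IsSmoothJordanCurve

lemma normalOffset_mem_or_notMem_closure (hγ : IsSmoothJordanCurve γ) (hΩ : IsOpen Ω)
    (hbd : frontier Ω = Set.range γ) :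
    ∃ σ₀, 0 < σ₀ ∧ ∀ S : Set ℝ, IsPreconnected S → S ⊆ Set.Icc (-σ₀) σ₀ → 0 ∉ S →
      (∀ x, ∀ σ ∈ S, normalOffset γ x σ ∈ Ω) ∨ (∀ x, ∀ σ ∈ S, normalOffset γ x σ ∉ closure Ω) := by
  obtain ⟨σ₀, hσ₀, c, hc, h⟩ := hγ.exists_mul_le_norm_sub_normalOffset
  refine ⟨σ₀, hσ₀, fun S hS hSσ h0 => ?_⟩
  have hpre : IsPreconnected ((fun p : ℝ × ℝ => normalOffset γ p.1 p.2) '' (Set.univ ×ˢ S)) :=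
    (isPreconnected_univ.prod hS).image _ hγ.contDiff_normalOffset.continuous.continuousOn
  refine (subset_or_subset_compl_closure hΩ hpre ?_).imp
    (fun h x σ hσ => h ⟨(x, σ), ⟨trivial, hσ⟩, rfl⟩)
    (fun h x σ hσ => h ⟨(x, σ), ⟨trivial, hσ⟩, rfl⟩)
  rw [Set.disjoint_left, hbd]
  rintro _ ⟨⟨x, σ⟩, ⟨-, hσ⟩, rfl⟩ ⟨t, ht⟩
  have hle := h x σ (abs_le.2 (hSσ hσ)) t
  rw [ht, sub_self, norm_zero] at hle
  have hσ0 : 0 < |σ| := abs_pos.2 (ne_of_mem_of_not_mem hσ h0)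
  exact (mul_pos hc hσ0).not_ge hle

lemma exists_normalOffset_notMem_closure (hγ : IsSmoothJordanCurve γ) (hΩ : IsOpen Ω)
    (hb : Bornology.IsBounded Ω) (hbd : frontier Ω = Set.range γ) {σ₀ : ℝ} (hσ₀ : 0 < σ₀) :
    ∃ x σ, |σ| ≤ σ₀ ∧ normalOffset γ x σ ∉ closure Ω := by
  by_contra! hin
  obtain ⟨C, hC, hnear⟩ := hγ.exists_normalOffset_eq
  have hopen : IsOpen (closure Ω) := by
    refine isOpen_iff_mem_nhds.2 fun y hy => ?_
    by_cases hyΩ : y ∈ Ω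
    · exact mem_of_superset (hΩ.mem_nhds hyΩ) subset_closure
    refine mem_of_superset (ball_mem_nhds y (div_pos hσ₀ hC)) fun z hz => ?_
    obtain ⟨x, -, σ, rfl, hσ⟩ := hnear z
    have hyγ : y ∈ Set.range γ := hbd ▸ hΩ.frontier_eq ▸ ⟨hy, hyΩ⟩
    refine hin x σ (hσ.trans ?_)
    calc C * infDist (normalOffset γ x σ) (Set.range γ) ≤ C * (σ₀ / C) := by
          gcongr; exact (infDist_le_dist_of_mem hyγ).trans (mem_ball.1 hz).le
      _ = σ₀ := by field_simp
  have hne : (closure Ω).Nonempty :=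
    ⟨γ 0, frontier_subset_closure (hbd ▸ Set.mem_range_self 0)⟩
  exact ne_univ_of_isBounded hb.closure (IsClopen.eq_univ ⟨isClosed_closure, hopen⟩ hne)

lemma exists_one_sided_notMem_closure (hγ : IsSmoothJordanCurve γ) (hΩ : IsOpen Ω)
    (hb : Bornology.IsBounded Ω) (hbd : frontier Ω = Set.range γ) :
    ∃ σ₀, 0 < σ₀ ∧ ((∀ x, ∀ σ ∈ Set.Ioc 0 σ₀, normalOffset γ x σ ∉ closure Ω) ∨
      (∀ x, ∀ σ ∈ Set.Ico (-σ₀) 0, normalOffset γ x σ ∉ closure Ω)) := by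
  obtain ⟨σ₀, hσ₀, h⟩ := hγ.normalOffset_mem_or_notMem_closure hΩ hbd
  refine ⟨σ₀, hσ₀, ?_⟩
  rcases h (Set.Ioc 0 σ₀) isPreconnected_Ioc
    (fun σ hσ => ⟨by linarith [hσ.1], hσ.2⟩) (by simp) with hpos | hpos
  · rcases h (Set.Ico (-σ₀) 0) isPreconnected_Ico
      (fun σ hσ => ⟨hσ.1, by linarith [hσ.2]⟩) (by simp) with hneg | hneg
    · obtain ⟨x, σ, hσ, hout⟩ := hγ.exists_normalOffset_notMem_closure hΩ hb hbd hσ₀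
      rw [abs_le] at hσ
      refine absurd ?_ hout
      rcases lt_trichotomy σ 0 with hs | rfl | hs
      · exact subset_closure (hneg x σ ⟨hσ.1, hs⟩)
      · apply frontier_subset_closure
        simp [hbd, normalOffset]
      · exact subset_closure (hpos x σ ⟨hs, hσ.2⟩)
    · exact Or.inr hneg
  · exact Or.inl hpos

lemma frontier_subset_closure_compl_closure (hγ : IsSmoothJordanCurve γ) (hΩ : IsOpen Ω)
    (hb : Bornology.IsBounded Ω) (hbd : frontier Ω = Set.range γ) :
    frontier Ω ⊆ closure (closure Ω)ᶜ := by
  obtain ⟨σ₀, hσ₀, h⟩ := hγ.exists_one_sided_notMem_closure hΩ hb hbd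
  rw [hbd]
  rintro _ ⟨x, rfl⟩
  have hlim : Tendsto (normalOffset γ x) (𝓝 0) (𝓝 (γ x)) := by
    have : Continuous (normalOffset γ x) :=
      hγ.contDiff_normalOffset.continuous.comp (Continuous.prodMk_right x)
    simpa [normalOffset] using this.tendsto 0
  rcases h with h | h
  · exact mem_closure_of_tendsto (hlim.mono_left nhdsWithin_le_nhds)
      (mem_of_superset (Ioc_mem_nhdsGT hσ₀) (h x))
  · exact mem_closure_of_tendsto (hlim.mono_left nhdsWithin_le_nhds)
      (mem_of_superset (Ico_mem_nhdsLT (neg_lt_zero.2 hσ₀)) (h x))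

lemma exists_reflected_normalOffset_notMem_closure (hγ : IsSmoothJordanCurve γ) (hΩ : IsOpen Ω)
    (hb : Bornology.IsBounded Ω) (hbd : frontier Ω = Set.range γ) :
    ∃ σ₀, 0 < σ₀ ∧ ∃ c, 0 < c ∧ ∀ x σ, σ ≠ 0 → |σ| ≤ σ₀ → normalOffset γ x σ ∈ Ω →
      ∀ w, ‖w - normalOffset γ x (-σ)‖ < c * |σ| → w ∉ closure Ω := by
  obtain ⟨σ₁, hσ₁, hside⟩ := hγ.exists_one_sided_notMem_closure hΩ hb hbd
  obtain ⟨σ₂, hσ₂, c, hc, hfar⟩ := hγ.exists_mul_le_norm_sub_normalOffset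
  refine ⟨min σ₁ σ₂, lt_min hσ₁ hσ₂, c, hc, fun x σ hσ0 hσ hin w hw => ?_⟩
  have hσ₁' := abs_le.1 (hσ.trans (min_le_left _ _))
  have hcenter : normalOffset γ x (-σ) ∉ closure Ω := by
    rcases hside with h | h <;> rcases lt_or_gt_of_ne hσ0 with hs | hs
    · exact h x (-σ) ⟨by linarith, by linarith⟩
    · exact absurd (subset_closure hin) (h x σ ⟨hs, hσ₁'.2⟩)
    · exact absurd (subset_closure hin) (h x σ ⟨hσ₁'.1, hs⟩)
    · exact h x (-σ) ⟨by linarith, by linarith⟩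
  have hdisj : Disjoint (ball (normalOffset γ x (-σ)) (c * |σ|)) (frontier Ω) := by
    rw [Set.disjoint_left, hbd]
    rintro _ hz ⟨t, rfl⟩
    rw [mem_ball, dist_eq_norm] at hz
    have := hfar x (-σ) (by rw [abs_neg]; exact hσ.trans (min_le_right _ _)) t
    rw [abs_neg] at this
    linarith
  have hr : 0 < c * |σ| := mul_pos hc (abs_pos.2 hσ0)
  rcases subset_or_subset_compl_closure hΩ (convex_ball _ _).isPreconnected hdisj with h | h
  · exact absurd (subset_closure (h (mem_ball_self hr))) hcenter
  · exact h (by rwa [mem_ball, dist_eq_norm])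

lemma exists_normalOffset_eq_of_mem (hγ : IsSmoothJordanCurve γ) (hΩ : IsOpen Ω)
    (hb : Bornology.IsBounded Ω) (hbd : frontier Ω = Set.range γ) :
    ∃ C, 0 < C ∧ ∀ a ∈ Ω, ∃ x ∈ Set.Icc 0 (2 * Real.pi), ∃ σ, normalOffset γ x σ = a ∧ σ ≠ 0 ∧
      |σ| ≤ C * infDist a Ωᶜ := by
  obtain ⟨C, hC, h⟩ := hγ.exists_normalOffset_eq
  refine ⟨C, hC, fun a ha => ?_⟩
  obtain ⟨x, hx, σ, rfl, hσ⟩ := h a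
  rw [← hbd, infDist_frontier_eq_infDist_compl hΩ hb ha] at hσ
  refine ⟨x, hx, σ, rfl, ?_, hσ⟩
  rintro rfl
  have hfr : normalOffset γ x 0 ∈ frontier Ω := by simp [hbd, normalOffset]
  exact (hΩ.frontier_eq ▸ hfr).2 ha

end IsSmoothJordanCurve

end Sides

section Layer

lemma exists_measure_image_le_of_contDiff {E : Type*} [NormedAddCommGroup E] [NormedSpace ℝ E]
    [FiniteDimensional ℝ E] [MeasurableSpace E] [BorelSpace E] (μ : Measure E) [μ.IsAddHaarMeasure]
    {f : E → E} (hf : ContDiff ℝ 1 f) {K : Set E} (hK : IsCompact K) :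
    ∃ C : ℝ≥0, ∀ s ⊆ K, MeasurableSet s → μ (f '' s) ≤ C * μ s := by
  have hcont : Continuous fun x => (fderiv ℝ f x).det :=
    ContinuousLinearMap.continuous_det.comp (hf.continuous_fderiv one_ne_zero)
  obtain ⟨C, hC⟩ := hK.exists_bound_of_continuousOn hcont.continuousOn
  refine ⟨C.toNNReal, fun s hs hsm => ?_⟩
  calc μ (f '' s) ≤ ∫⁻ x in s, ENNReal.ofReal |(fderiv ℝ f x).det| ∂μ :=
        addHaar_image_le_lintegral_abs_det_fderiv μ hsm fun x _ =>
          (hf.differentiable one_ne_zero x).hasFDerivAt.hasFDerivWithinAt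
    _ ≤ ∫⁻ _ in s, ENNReal.ofReal C ∂μ :=
        setLIntegral_mono measurable_const fun x hx => ENNReal.ofReal_le_ofReal (hC x (hs hx))
    _ = C.toNNReal * μ s := by rw [setLIntegral_const]; rfl

lemma volume_reProdIm (s t : Set ℝ) : volume (s ×ℂ t) = volume s * volume t := by
  rw [← Measure.prod_prod, ← Measure.volume_eq_prod,
    ← Complex.volume_preserving_equiv_real_prod.measure_preimage_equiv]
  rfl

variable {Ω : Set ℂ} {γ : ℝ → ℂ}

lemma IsSmoothJordanCurve.exists_volume_innerLayer_le (hγ : IsSmoothJordanCurve γ)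
    (hΩ : IsOpen Ω) (hb : Bornology.IsBounded Ω) (hbd : frontier Ω = Set.range γ) :
    ∃ c, 0 ≤ c ∧ ∀ ε ∈ Set.Ioo (0 : ℝ) 1, volume.real (innerLayer Ω ε) ≤ c * ε := by
  obtain ⟨C, hC, hcoord⟩ := hγ.exists_normalOffset_eq_of_mem hΩ hb hbd
  let f : ℂ → ℂ := fun z => normalOffset γ z.re z.im
  have hf : ContDiff ℝ 1 f := hγ.contDiff_normalOffset.comp
    (Complex.reCLM.contDiff.prodMk Complex.imCLM.contDiff)
  let strip : ℝ → Set ℂ := fun r => Set.Icc 0 (2 * Real.pi) ×ℂ Set.Icc (-r) r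
  obtain ⟨c, hc⟩ := exists_measure_image_le_of_contDiff volume hf
    (show IsCompact (strip C) from isCompact_Icc.reProdIm isCompact_Icc)
  have hstrip : ∀ ε ∈ Set.Ioo (0 : ℝ) 1, strip (C * ε) ⊆ strip C := fun ε hε z hz => by
    have : C * ε ≤ C := mul_le_of_le_one_right hC.le hε.2.le
    exact ⟨hz.1, by linarith [hz.2.1], hz.2.2.trans this⟩
  refine ⟨c * (2 * Real.pi * (2 * C)), by positivity, fun ε hε => ?_⟩
  have hsub : innerLayer Ω ε ⊆ f '' strip (C * ε) := by
    rintro a ⟨ha, had⟩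
    obtain ⟨x, hx, σ, rfl, -, hσ⟩ := hcoord a ha
    exact ⟨⟨x, σ⟩, ⟨hx, abs_le.1 (hσ.trans (by gcongr; exact had))⟩, rfl⟩
  refine ENNReal.toReal_le_of_le_ofReal (by have := hε.1; positivity) ?_
  calc volume (innerLayer Ω ε) ≤ volume (f '' strip (C * ε)) := measure_mono hsub
    _ ≤ c * volume (strip (C * ε)) :=
        hc _ (hstrip ε hε) (isClosed_Icc.reProdIm isClosed_Icc).measurableSet
    _ = ENNReal.ofReal (c * (2 * Real.pi * (2 * C)) * ε) := by
        rw [volume_reProdIm, Real.volume_Icc, Real.volume_Icc,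
          ← ENNReal.ofReal_mul (by linarith [Real.two_pi_pos]), ← ENNReal.ofReal_coe_nnreal,
          ← ENNReal.ofReal_mul c.coe_nonneg]
        ring_nf

end Layer

/-! ### Truncated expansions in a commutative ring -/

section Expansions

variable {A : Type*} [CommRing A] {C S : Subring A} {y : A}

/-- The elements `c₀ + c₁ y + ⋯ + cₙ₋₁ yⁿ⁻¹ + yⁿ s` with coefficients `cⱼ` in `C` and remainder `s`
in `S`: the expansions of order `n` in powers of `y`. -/
def expansions (C S : Subring A) (y : A) : ℕ → AddSubgroup A
  | 0 => S.toAddSubgroup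
  | n + 1 => C.toAddSubgroup ⊔ (expansions C S y n).map (AddMonoidHom.mulLeft y)

lemma mem_expansions_zero {a : A} : a ∈ expansions C S y 0 ↔ a ∈ S := Iff.rfl

lemma mem_expansions_succ {a : A} {n : ℕ} :
    a ∈ expansions C S y (n + 1) ↔ ∃ c ∈ C, ∃ g ∈ expansions C S y n, c + y * g = a := by
  simp [expansions, AddSubgroup.mem_sup]

lemma mem_expansions_of_mem (hCS : C ≤ S) {c : A} (hc : c ∈ C) : ∀ n, c ∈ expansions C S y n
  | 0 => hCS hc
  | _ + 1 => mem_expansions_succ.2 ⟨c, hc, 0, zero_mem _, by ring⟩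

lemma self_mem_expansions (hCS : C ≤ S) (hy : y ∈ S) : ∀ n, y ∈ expansions C S y n
  | 0 => hy
  | n + 1 => mem_expansions_succ.2
      ⟨0, zero_mem C, 1, mem_expansions_of_mem hCS (one_mem C) n, by ring⟩

lemma pow_mul_mem_expansions {s : A} (hs : s ∈ S) : ∀ n, y ^ n * s ∈ expansions C S y n
  | 0 => by simpa using mem_expansions_zero.2 hs
  | n + 1 => mem_expansions_succ.2
      ⟨0, zero_mem C, y ^ n * s, pow_mul_mem_expansions hs n, by ring⟩

lemma expansions_succ_le (hCS : C ≤ S) (hy : y ∈ S) (n : ℕ) :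
    expansions C S y (n + 1) ≤ expansions C S y n := by
  intro a ha
  obtain ⟨c, hc, g, hg, rfl⟩ := mem_expansions_succ.1 ha
  induction n generalizing c g with
  | zero => exact S.add_mem (hCS hc) (S.mul_mem hy hg)
  | succ n ih =>
    obtain ⟨c', hc', g', hg', rfl⟩ := mem_expansions_succ.1 hg
    exact mem_expansions_succ.2 ⟨c, hc, _, ih c' hc' g' hg' hg, rfl⟩

lemma expansions_le (hCS : C ≤ S) (hy : y ∈ S) : ∀ n, expansions C S y n ≤ S.toAddSubgroup
  | 0 => le_rfl
  | n + 1 => (expansions_succ_le hCS hy n).trans (expansions_le hCS hy n)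

lemma mul_mem_expansions (hCS : C ≤ S) (hy : y ∈ S) (n : ℕ) {a b : A}
    (ha : a ∈ expansions C S y n) (hb : b ∈ expansions C S y n) :
    a * b ∈ expansions C S y n := by
  induction n generalizing a b with
  | zero => exact mul_mem (S := Subring A) ha hb
  | succ n ih =>
    have hb' := expansions_succ_le hCS hy n hb
    obtain ⟨c, hc, g, hg, rfl⟩ := mem_expansions_succ.1 ha
    obtain ⟨c', hc', g', hg', rfl⟩ := mem_expansions_succ.1 hb
    refine mem_expansions_succ.2 ⟨c * c', mul_mem hc hc', g * (c' + y * g') + c * g', ?_, by ring⟩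
    exact add_mem (ih hg hb') (ih (mem_expansions_of_mem hCS hc n) hg')

/-- The expansions of order `n` as a subring; this makes polynomial identities available inside
it. -/
def expansionSubring (hCS : C ≤ S) (hy : y ∈ S) (n : ℕ) : Subring A where
  __ := expansions C S y n
  mul_mem' := mul_mem_expansions hCS hy n
  one_mem' := mem_expansions_of_mem hCS (one_mem C) n

lemma inverse_mem_expansions (hCS : C ≤ S) (hy : y ∈ S) {n : ℕ} {c d g f : A}
    (hd : d ∈ C) (hcd : c * d = 1) (hg : g ∈ expansions C S y n) (hf : f ∈ S)
    (hgf : (c + y * g) * f = 1) : f ∈ expansions C S y (n + 1) := by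
  have hstep : ∀ k, g ∈ expansions C S y k → f ∈ expansions C S y k →
      f ∈ expansions C S y (k + 1) := fun k hgk hfk => by
    have hdk := mem_expansions_of_mem (y := y) hCS hd k
    refine mem_expansions_succ.2 ⟨d, hd, -(d * (g * f)), neg_mem
      (mul_mem_expansions hCS hy k hdk (mul_mem_expansions hCS hy k hgk hfk)), ?_⟩
    linear_combination f * hcd - d * hgf
  induction n with
  | zero => exact hstep 0 hg hf
  | succ n ih => exact hstep (n + 1) hg (ih (expansions_succ_le hCS hy n hg))

lemma exists_inverse_pow_eq (hCS : C ≤ S) (hy : y ∈ S) {n : ℕ} {c d g f : A}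
    (hd : d ∈ C) (hcd : c * d = 1) (hg : g ∈ expansions C S y n) (hf : f ∈ S)
    (hgf : (c + y * g) * f = 1) (k : ℕ) :
    ∃ q ∈ expansions C S y n, f ^ k = d ^ k + y * q := by
  let T := expansionSubring hCS hy n
  have hfT : f ∈ T := expansions_succ_le hCS hy n (inverse_mem_expansions hCS hy hd hcd hg hf hgf)
  have hdT : d ∈ T := mem_expansions_of_mem hCS hd n
  have hgT : g ∈ T := hg
  refine ⟨(∑ i ∈ range k, f ^ i * d ^ (k - 1 - i)) * -(d * g * f),
    T.mul_mem (sum_mem fun i _ => mul_mem (pow_mem hfT i) (pow_mem hdT _))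
      (neg_mem (mul_mem (mul_mem hdT hgT) hfT)), ?_⟩
  have hsub : f - d = y * -(d * g * f) := by linear_combination d * hgf - f * hcd
  rw [← sub_eq_iff_eq_add', ← geom_sum₂_mul, hsub]
  ring

lemma exists_mul_pow_sub_sum_mem {z g : A} (hzy : z * y = 1) {n : ℕ}
    (hg : g ∈ expansions C S y n) :
    ∃ D : ℕ → A, (∀ j, D j ∈ C) ∧ g * z ^ n - ∑ j ∈ range n, D j * z ^ (j + 1) ∈ S := by
  induction n generalizing g with
  | zero => exact ⟨0, fun _ => zero_mem C, by simpa using mem_expansions_zero.1 hg⟩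
  | succ n ih =>
    obtain ⟨c, hc, g', hg', rfl⟩ := mem_expansions_succ.1 hg
    obtain ⟨D, hD, hrem⟩ := ih hg'
    refine ⟨Function.update D n c, fun j => ?_, ?_⟩
    · rcases eq_or_ne j n with rfl | hj
      · rwa [Function.update_self]
      · rw [Function.update_of_ne hj]; exact hD j
    · convert hrem using 1
      rw [sum_range_succ, Function.update_self, sum_congr rfl fun j hj => by
        rw [Function.update_of_ne (mem_range.1 hj).ne]]
      linear_combination g' * z ^ n * hzy

theorem exists_inverse_pow_sub_sum_mem (hCS : C ≤ S) (hy : y ∈ S) {m : ℕ} {c d g f z : A}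
    (hd : d ∈ C) (hcd : c * d = 1) (hg : g ∈ expansions C S y m) (hf : f ∈ S)
    (hgf : (c + y * g) * f = 1) (hzy : z * y = 1) :
    ∃ D : ℕ → A, (∀ j, D j ∈ C) ∧ D m = d ^ (m + 1) ∧
      (z * f) ^ (m + 1) - ∑ j ∈ range (m + 1), D j * z ^ (j + 1) ∈ S := by
  obtain ⟨q, hq, hfq⟩ := exists_inverse_pow_eq hCS hy hd hcd hg hf hgf (m + 1)
  obtain ⟨D, hD, hrem⟩ := exists_mul_pow_sub_sum_mem hzy hq
  refine ⟨Function.update D m (d ^ (m + 1)), fun j => ?_, Function.update_self .., ?_⟩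
  · rcases eq_or_ne j m with rfl | hj
    · rw [Function.update_self]; exact pow_mem hd _
    · rw [Function.update_of_ne hj]; exact hD j
  · convert hrem using 1
    rw [sum_range_succ, Function.update_self, sum_congr rfl fun j hj => by
      rw [Function.update_of_ne (mem_range.1 hj).ne], mul_pow, hfq]
    linear_combination q * z ^ m * hzy

end Expansions

/-! ### Jets of the Schwarz function -/

section SchwarzJet

/-- The `k`-th derivative along the curve `γ` of the Schwarz function `S`, the holomorphic function
with `S (conj z) = z` on `γ`: each derivative is taken with respect to `conj γ`. Only the jets are
used, so the curve need not be analytic. -/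
noncomputable def schwarzJet (γ : ℝ → ℂ) : ℕ → ℝ → ℂ
  | 0 => γ
  | k + 1 => fun t => deriv (schwarzJet γ k) t / conj (deriv γ t)

/-- The Taylor polynomial of degree `L` of the `k`-th derivative of the Schwarz function at
`conj (γ x)`, as a function of the displacement `u` from `conj (γ x)`. -/
noncomputable def schwarzTaylor (γ : ℝ → ℂ) (k L : ℕ) (x : ℝ) (u : ℂ) : ℂ :=
  ∑ i ∈ range (L + 1), schwarzJet γ (k + i) x / i.factorial * u ^ i

/-- The Taylor remainder on the curve of the `k`-th derivative of the Schwarz function. -/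
noncomputable def schwarzRemainder (γ : ℝ → ℂ) (k L : ℕ) (x t : ℝ) : ℂ :=
  schwarzJet γ k t - schwarzTaylor γ k L x (conj (γ t - γ x))

/-- The Taylor approximation of order `L` to the Schwarz reflection of `normalOffset γ x σ` in the
curve `γ`. -/
noncomputable def schwarzReflection (γ : ℝ → ℂ) (L : ℕ) (x σ : ℝ) : ℂ :=
  schwarzTaylor γ 0 L x (conj (normalOffset γ x σ - γ x))

variable {γ : ℝ → ℂ}

lemma sum_schwarzJet_mul_deriv_pow (γ : ℝ → ℂ) (k L : ℕ) (x : ℝ) (u : ℂ) :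
    ∑ i ∈ range (L + 2), schwarzJet γ (k + i) x / i.factorial * (i * u ^ (i - 1)) =
      schwarzTaylor γ (k + 1) L x u := by
  rw [sum_range_succ', schwarzTaylor]
  simp only [Nat.cast_zero, zero_mul, mul_zero, add_zero]
  refine sum_congr rfl fun i _ => ?_
  have hi : (i.factorial : ℂ) ≠ 0 := by exact_mod_cast i.factorial_ne_zero
  have hi' : (i : ℂ) + 1 ≠ 0 := by exact_mod_cast i.succ_ne_zero
  rw [Nat.factorial_succ, Nat.add_sub_cancel, ← add_assoc, add_right_comm]
  push_cast
  field_simp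

lemma hasDerivAt_schwarzTaylor (γ : ℝ → ℂ) (k L : ℕ) (x : ℝ) (u : ℂ) :
    HasDerivAt (schwarzTaylor γ k (L + 1) x) (schwarzTaylor γ (k + 1) L x u) u :=
  (HasDerivAt.fun_sum fun i _ =>
    (hasDerivAt_pow i u).const_mul (schwarzJet γ (k + i) x / i.factorial)).congr_deriv
      (sum_schwarzJet_mul_deriv_pow γ k L x u)

lemma schwarzTaylor_zero (γ : ℝ → ℂ) (k L : ℕ) (x : ℝ) :
    schwarzTaylor γ k L x 0 = schwarzJet γ k x := by
  simp [schwarzTaylor, sum_range_succ']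

lemma schwarzRemainder_self (γ : ℝ → ℂ) (k L : ℕ) (x : ℝ) : schwarzRemainder γ k L x x = 0 := by
  simp [schwarzRemainder, schwarzTaylor_zero]

lemma schwarzTaylor_add_schwarzRemainder (γ : ℝ → ℂ) (L : ℕ) (x t : ℝ) :
    schwarzTaylor γ 0 L x (conj (γ t - γ x)) + schwarzRemainder γ 0 L x t = γ t := by
  simp [schwarzRemainder, schwarzJet]

namespace IsSmoothJordanCurve

lemma contDiff_schwarzJet (hγ : IsSmoothJordanCurve γ) :
    ∀ k, ContDiff ℝ (⊤ : ℕ∞) (schwarzJet γ k)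
  | 0 => hγ.contDiff
  | k + 1 => by
    have hconj : ContDiff ℝ (⊤ : ℕ∞) fun t => conj (deriv γ t) :=
      Complex.conjCLE.contDiff.comp hγ.contDiff_deriv
    simp only [schwarzJet, div_eq_mul_inv]
    exact ((hγ.contDiff_schwarzJet k).iterate_deriv 1).mul
      (hconj.inv fun t => (map_ne_zero (starRingEnd ℂ)).2 (hγ.deriv_ne_zero t))

lemma periodic_schwarzJet (hγ : IsSmoothJordanCurve γ) :
    ∀ k, Function.Periodic (schwarzJet γ k) (2 * Real.pi)
  | 0 => hγ.periodic
  | k + 1 => fun t => by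
    simp only [schwarzJet, periodic_deriv (hγ.periodic_schwarzJet k) t,
      periodic_deriv hγ.periodic t]

lemma hasDerivAt_schwarzJet (hγ : IsSmoothJordanCurve γ) (k : ℕ) (t : ℝ) :
    HasDerivAt (schwarzJet γ k) (conj (deriv γ t) * schwarzJet γ (k + 1) t) t := by
  refine ((hγ.contDiff_schwarzJet k).differentiable (by simp) t).hasDerivAt.congr_deriv ?_
  exact (mul_div_cancel₀ _ ((map_ne_zero _).2 (hγ.deriv_ne_zero t))).symm

lemma norm_schwarzJet_one (hγ : IsSmoothJordanCurve γ) (t : ℝ) : ‖schwarzJet γ 1 t‖ = 1 := by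
  simp [schwarzJet, hγ.deriv_ne_zero t]

lemma exists_norm_schwarzJet_le (hγ : IsSmoothJordanCurve γ) (k : ℕ) :
    ∃ C, 0 < C ∧ ∀ t, ‖schwarzJet γ k t‖ ≤ C :=
  exists_norm_le_of_periodic (hγ.periodic_schwarzJet k) Real.two_pi_pos.ne'
    (hγ.contDiff_schwarzJet k).continuous

lemma periodic_schwarzRemainder (hγ : IsSmoothJordanCurve γ) (k L : ℕ) (x : ℝ) :
    Function.Periodic (schwarzRemainder γ k L x) (2 * Real.pi) := fun t => by
  simp only [schwarzRemainder, hγ.periodic_schwarzJet k t, hγ.periodic t]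

lemma hasDerivAt_schwarzRemainder (hγ : IsSmoothJordanCurve γ) (k L : ℕ) (x t : ℝ) :
    HasDerivAt (schwarzRemainder γ k (L + 1) x)
      (conj (deriv γ t) * schwarzRemainder γ (k + 1) L x t) t := by
  have hconj : HasDerivAt (fun t => conj (γ t - γ x)) (conj (deriv γ t)) t :=
    ((hγ.hasDerivAt t).sub_const (γ x)).star
  refine ((hγ.hasDerivAt_schwarzJet k t).sub
    ((hasDerivAt_schwarzTaylor γ k L x _).comp t hconj)).congr_deriv ?_
  rw [schwarzRemainder]
  ring

lemma exists_norm_schwarzRemainder_le (hγ : IsSmoothJordanCurve γ) (k L : ℕ) :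
    ∃ C, 0 < C ∧ ∀ x t, ‖schwarzRemainder γ k L x t‖ ≤ C * |t - x| ^ (L + 1) := by
  obtain ⟨C₁, hC₁, hderiv⟩ := hγ.exists_norm_deriv_le
  induction L generalizing k with
  | zero =>
    obtain ⟨C, hC, h⟩ := hγ.exists_norm_schwarzJet_le (k + 1)
    refine ⟨C₁ * C, by positivity, fun x => norm_le_mul_abs_sub_pow_succ
      (f := schwarzRemainder γ k 0 x) (f' := fun s => conj (deriv γ s) * schwarzJet γ (k + 1) s)
      (by positivity) (fun s => ?_) (fun s => ?_)
      (schwarzRemainder_self γ k 0 x)⟩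
    · have hrem : schwarzRemainder γ k 0 x = fun t => schwarzJet γ k t - schwarzJet γ k x := by
        ext t; simp [schwarzRemainder, schwarzTaylor]
      rw [hrem]
      exact (hγ.hasDerivAt_schwarzJet k s).sub_const _
    · rw [norm_mul, RCLike.norm_conj, pow_zero, mul_one]
      gcongr
      exacts [hderiv s, h s]
  | succ L ih =>
    obtain ⟨C, hC, h⟩ := ih (k + 1)
    refine ⟨C₁ * C, by positivity, fun x => norm_le_mul_abs_sub_pow_succ
      (f := schwarzRemainder γ k (L + 1) x) (by positivity)
      (hγ.hasDerivAt_schwarzRemainder k L x) (fun s => ?_) (schwarzRemainder_self γ k (L + 1) x)⟩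
    rw [norm_mul, RCLike.norm_conj, mul_assoc]
    gcongr
    exacts [hderiv s, h x s]

lemma exists_mul_abs_sub_le_norm_sub_normalOffset (hγ : IsSmoothJordanCurve γ) :
    ∃ σ₀, 0 < σ₀ ∧ ∃ c, 0 < c ∧ ∀ x σ t, |σ| ≤ σ₀ → |t - x| ≤ Real.pi →
      c * |t - x| ≤ ‖γ t - normalOffset γ x σ‖ := by
  obtain ⟨σ₀, hσ₀, c₁, hc₁, hσ⟩ := hγ.exists_mul_le_norm_sub_normalOffset
  obtain ⟨c₂, hc₂, harc⟩ := hγ.exists_mul_abs_sub_le_norm_sub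
  obtain ⟨C, hC, hderiv⟩ := hγ.exists_norm_deriv_le
  refine ⟨σ₀, hσ₀, c₂ / (1 + C / c₁), by positivity, fun x σ t hσσ₀ ht => ?_⟩
  rw [div_mul_eq_mul_div, div_le_iff₀ (by positivity)]
  calc c₂ * |t - x| ≤ ‖γ t - γ x‖ := harc x t ht
    _ ≤ ‖γ t - normalOffset γ x σ‖ + |σ| * ‖deriv γ x‖ := by
      rw [← norm_normalOffset_sub]; exact norm_sub_le_norm_sub_add_norm_sub _ _ _
    _ ≤ ‖γ t - normalOffset γ x σ‖ + ‖γ t - normalOffset γ x σ‖ / c₁ * C := by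
      gcongr
      · rw [le_div_iff₀ hc₁, mul_comm]; exact hσ x σ hσσ₀ t
      · exact hderiv x
    _ = ‖γ t - normalOffset γ x σ‖ * (1 + C / c₁) := by ring

lemma exists_norm_schwarzRemainder_le_mul_norm_sub_normalOffset (hγ : IsSmoothJordanCurve γ)
    (k L : ℕ) : ∃ σ₀, 0 < σ₀ ∧ ∃ C, 0 < C ∧ ∀ x σ, |σ| ≤ σ₀ → ∀ t,
      ‖schwarzRemainder γ k L x t‖ ≤ C * ‖γ t - normalOffset γ x σ‖ ^ (L + 1) := by
  obtain ⟨σ₀, hσ₀, c, hc, hlow⟩ := hγ.exists_mul_abs_sub_le_norm_sub_normalOffset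
  obtain ⟨C, hC, hrem⟩ := hγ.exists_norm_schwarzRemainder_le k L
  refine ⟨σ₀, hσ₀, C / c ^ (L + 1), by positivity, fun x σ hσ => of_periodic_of_abs_sub_le
    (T := 2 * Real.pi) (fun t => by rw [hγ.periodic, hγ.periodic_schwarzRemainder])
    Real.two_pi_pos x fun t ht => ?_⟩
  calc ‖schwarzRemainder γ k L x t‖ ≤ C * |t - x| ^ (L + 1) := hrem x t
    _ = C / c ^ (L + 1) * (c * |t - x|) ^ (L + 1) := by rw [mul_pow]; field_simp
    _ ≤ C / c ^ (L + 1) * ‖γ t - normalOffset γ x σ‖ ^ (L + 1) := by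
      gcongr; exact hlow x σ t hσ (by linarith)

end IsSmoothJordanCurve

lemma norm_sum_mul_pow_succ_le {b : ℕ → ℂ} {u : ℂ} (hu : ‖u‖ ≤ 1) (n : ℕ) :
    ‖∑ i ∈ range n, b i * u ^ (i + 1)‖ ≤ (∑ i ∈ range n, ‖b i‖) * ‖u‖ := by
  rw [sum_mul]
  refine norm_sum_le_of_le _ fun i _ => ?_
  rw [norm_mul, norm_pow]
  gcongr
  exact pow_le_of_le_one (norm_nonneg u) hu i.succ_ne_zero

lemma conj_normalOffset_sub (γ : ℝ → ℂ) (x σ : ℝ) :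
    conj (normalOffset γ x σ - γ x) = -(Complex.I * σ * conj (deriv γ x)) := by
  simp [normalOffset]

namespace IsSmoothJordanCurve

lemma schwarzJet_zero_add_schwarzJet_one_mul (hγ : IsSmoothJordanCurve γ) (x σ : ℝ) :
    schwarzJet γ 0 x + schwarzJet γ 1 x * conj (normalOffset γ x σ - γ x) =
      normalOffset γ x (-σ) := by
  have hderiv := (map_ne_zero (starRingEnd ℂ)).2 (hγ.deriv_ne_zero x)
  rw [conj_normalOffset_sub]
  simp only [schwarzJet, normalOffset, Complex.ofReal_neg]
  field_simp

lemma exists_norm_schwarzTaylor_sub_le (hγ : IsSmoothJordanCurve γ) (k L : ℕ) :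
    ∃ K, 0 < K ∧ ∀ x u, ‖u‖ ≤ 1 →
      ‖schwarzTaylor γ k L x u - schwarzJet γ k x‖ ≤ K * ‖u‖ := by
  obtain ⟨K, hK, h⟩ := exists_norm_le_of_periodic
    (f := fun x => ∑ i ∈ range L, ‖schwarzJet γ (k + (i + 1)) x / (i + 1).factorial‖)
    (fun x => by simp only [hγ.periodic_schwarzJet _ x]) Real.two_pi_pos.ne'
    (continuous_finsetSum _ fun i _ =>
      ((hγ.contDiff_schwarzJet _).continuous.div_const _).norm)
  refine ⟨K, hK, fun x u hu => ?_⟩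
  have hsum : schwarzTaylor γ k L x u - schwarzJet γ k x =
      ∑ i ∈ range L, schwarzJet γ (k + (i + 1)) x / (i + 1).factorial * u ^ (i + 1) := by
    simp [schwarzTaylor, sum_range_succ']
  rw [hsum]
  refine (norm_sum_mul_pow_succ_le hu L).trans ?_
  gcongr
  exact (le_abs_self _).trans (h x)

lemma exists_norm_schwarzTaylor_sub_sub_le (hγ : IsSmoothJordanCurve γ) (k L : ℕ) :
    ∃ K, 0 < K ∧ ∀ x u, ‖u‖ ≤ 1 →
      ‖schwarzTaylor γ k (L + 1) x u - (schwarzJet γ k x + schwarzJet γ (k + 1) x * u)‖ ≤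
        K * ‖u‖ ^ 2 := by
  obtain ⟨K, hK, h⟩ := hγ.exists_norm_schwarzTaylor_sub_le (k + 1) L
  refine ⟨K, hK, fun x u hu => ?_⟩
  have hmvt := (convex_closedBall (0 : ℂ) ‖u‖).norm_image_sub_le_of_norm_hasDerivWithin_le
    (f := fun v => schwarzTaylor γ k (L + 1) x v - schwarzJet γ (k + 1) x * v)
    (f' := fun v => schwarzTaylor γ (k + 1) L x v - schwarzJet γ (k + 1) x * 1) (C := K * ‖u‖)
    (fun v _ => ((hasDerivAt_schwarzTaylor γ k L x v).sub
      ((hasDerivAt_id v).const_mul _)).hasDerivWithinAt)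
    (fun v hv => by
      rw [mem_closedBall_zero_iff] at hv
      rw [mul_one]
      exact (h x v (hv.trans hu)).trans (by gcongr))
    (mem_closedBall_self (norm_nonneg u)) (mem_closedBall_zero_iff.2 le_rfl)
  rw [schwarzTaylor_zero, mul_zero, sub_zero, sub_zero, mul_assoc, ← sq] at hmvt
  rwa [add_comm (schwarzJet γ k x), ← sub_sub]

lemma exists_norm_schwarzReflection_sub_le (hγ : IsSmoothJordanCurve γ) (L : ℕ) :
    ∃ σ₀, 0 < σ₀ ∧ ∃ K, 0 < K ∧ ∀ x σ, |σ| ≤ σ₀ →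
      ‖schwarzReflection γ (L + 1) x σ - normalOffset γ x (-σ)‖ ≤ K * |σ| ^ 2 := by
  obtain ⟨C, hC, hderiv⟩ := hγ.exists_norm_deriv_le
  obtain ⟨K, hK, h⟩ := hγ.exists_norm_schwarzTaylor_sub_sub_le 0 L
  refine ⟨C⁻¹, by positivity, K * C ^ 2, by positivity, fun x σ hσ => ?_⟩
  have hη : ‖conj (normalOffset γ x σ - γ x)‖ ≤ |σ| * C := by
    rw [RCLike.norm_conj, norm_normalOffset_sub]
    gcongr
    exact hderiv x
  have hη1 : ‖conj (normalOffset γ x σ - γ x)‖ ≤ 1 :=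
    hη.trans ((le_div_iff₀ hC).1 (by rwa [one_div]))
  rw [← hγ.schwarzJet_zero_add_schwarzJet_one_mul]
  calc _ ≤ K * ‖conj (normalOffset γ x σ - γ x)‖ ^ 2 := h x _ hη1
    _ ≤ K * (|σ| * C) ^ 2 := by gcongr
    _ = K * C ^ 2 * |σ| ^ 2 := by ring

lemma exists_half_le_norm_schwarzTaylor_one (hγ : IsSmoothJordanCurve γ) (L : ℕ) :
    ∃ σ₀, 0 < σ₀ ∧ ∀ x σ, |σ| ≤ σ₀ →
      1 / 2 ≤ ‖schwarzTaylor γ 1 L x (conj (normalOffset γ x σ - γ x))‖ := by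
  obtain ⟨C, hC, hderiv⟩ := hγ.exists_norm_deriv_le
  obtain ⟨K, hK, h⟩ := hγ.exists_norm_schwarzTaylor_sub_le 1 L
  refine ⟨min 1 (1 / (2 * K)) / C, by positivity, fun x σ hσ => ?_⟩
  have hη : ‖conj (normalOffset γ x σ - γ x)‖ ≤ min 1 (1 / (2 * K)) := by
    rw [RCLike.norm_conj, norm_normalOffset_sub]
    exact (mul_le_mul_of_nonneg_left (hderiv x) (abs_nonneg σ)).trans ((le_div_iff₀ hC).1 hσ)
  have hdist : ‖schwarzTaylor γ 1 L x (conj (normalOffset γ x σ - γ x)) - schwarzJet γ 1 x‖ ≤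
      1 / 2 :=
    calc _ ≤ K * ‖conj (normalOffset γ x σ - γ x)‖ := h x _ (hη.trans (min_le_left _ _))
      _ ≤ K * (1 / (2 * K)) := by gcongr; exact hη.trans (min_le_right _ _)
      _ = 1 / 2 := by field_simp
  have hrev := norm_sub_norm_le (schwarzJet γ 1 x)
    (schwarzTaylor γ 1 L x (conj (normalOffset γ x σ - γ x)))
  rw [norm_sub_rev, hγ.norm_schwarzJet_one] at hrev
  linarith

lemma exists_norm_sub_normalOffset_le_mul (hγ : IsSmoothJordanCurve γ) :
    ∃ σ₀, 0 < σ₀ ∧ ∃ C, 0 < C ∧ ∀ x σ, |σ| ≤ σ₀ → ∀ t,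
      ‖γ t - normalOffset γ x σ‖ ≤ C * ‖γ t - normalOffset γ x (-σ)‖ := by
  obtain ⟨C, hC, hderiv⟩ := hγ.exists_norm_deriv_le
  obtain ⟨σ₀, hσ₀, c, hc, hlow⟩ := hγ.exists_mul_le_norm_sub_normalOffset
  refine ⟨σ₀, hσ₀, 1 + 2 * C / c, by positivity, fun x σ hσ t => ?_⟩
  have hdiff : normalOffset γ x (-σ) - normalOffset γ x σ = -(2 * (Complex.I * σ * deriv γ x)) := by
    simp only [normalOffset, Complex.ofReal_neg]
    ring
  calc ‖γ t - normalOffset γ x σ‖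
      ≤ ‖γ t - normalOffset γ x (-σ)‖ + ‖normalOffset γ x (-σ) - normalOffset γ x σ‖ :=
        norm_sub_le_norm_sub_add_norm_sub _ _ _
    _ = ‖γ t - normalOffset γ x (-σ)‖ + 2 * (|σ| * ‖deriv γ x‖) := by rw [hdiff]; simp
    _ ≤ ‖γ t - normalOffset γ x (-σ)‖ + 2 * (‖γ t - normalOffset γ x (-σ)‖ / c * C) := by
      gcongr
      · rw [le_div_iff₀' hc, ← abs_neg]
        exact hlow x (-σ) (by rwa [abs_neg]) t
      · exact hderiv x
    _ = (1 + 2 * C / c) * ‖γ t - normalOffset γ x (-σ)‖ := by ring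

lemma exists_mul_norm_sub_normalOffset_le (hγ : IsSmoothJordanCurve γ) (L : ℕ) :
    ∃ σ₀, 0 < σ₀ ∧ ∃ δ, 0 < δ ∧ ∀ x σ, |σ| ≤ σ₀ → ∀ t,
      δ * ‖γ t - normalOffset γ x σ‖ ≤ ‖γ t - schwarzReflection γ (L + 1) x σ‖ := by
  obtain ⟨σ₀, hσ₀, C, hC, hmirror⟩ := hγ.exists_norm_sub_normalOffset_le_mul
  obtain ⟨σ₁, hσ₁, c, hc, hlow⟩ := hγ.exists_mul_le_norm_sub_normalOffset
  obtain ⟨σ₂, hσ₂, K, hK, hrefl⟩ := hγ.exists_norm_schwarzReflection_sub_le L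
  refine ⟨min σ₀ (min σ₁ (min σ₂ (c / (2 * K)))), by positivity, 1 / (2 * C), by positivity,
    fun x σ hσ t => ?_⟩
  simp only [le_min_iff] at hσ
  obtain ⟨h₀, h₁, h₂, h₃⟩ := hσ
  have hclose : ‖schwarzReflection γ (L + 1) x σ - normalOffset γ x (-σ)‖ ≤
      ‖γ t - normalOffset γ x (-σ)‖ / 2 :=
    calc _ ≤ K * |σ| ^ 2 := hrefl x σ h₂
      _ = K * |σ| * |σ| := by ring
      _ ≤ K * (c / (2 * K)) * |σ| := by gcongr
      _ = c * |-σ| / 2 := by rw [abs_neg]; field_simp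
      _ ≤ ‖γ t - normalOffset γ x (-σ)‖ / 2 := by
        gcongr; exact hlow x (-σ) (by rwa [abs_neg]) t
  have htriangle := norm_sub_le_norm_sub_add_norm_sub (γ t) (schwarzReflection γ (L + 1) x σ)
    (normalOffset γ x (-σ))
  calc 1 / (2 * C) * ‖γ t - normalOffset γ x σ‖
      ≤ 1 / (2 * C) * (C * ‖γ t - normalOffset γ x (-σ)‖) := by
        gcongr; exact hmirror x σ h₀ t
    _ = ‖γ t - normalOffset γ x (-σ)‖ / 2 := by field_simp
    _ ≤ ‖γ t - schwarzReflection γ (L + 1) x σ‖ := by linarith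

end IsSmoothJordanCurve

end SchwarzJet

/-! ### Construction of the reflected kernels -/

section Families

variable {ι : Type*}

/-- Families of functions on the line which, together with their derivatives, are bounded uniformly
in the index: the remainders in the expansions of the kernels. -/
def boundedDerivFamilies (ι : Type*) : Subring (ι → ℝ → ℂ) where
  carrier := {E | ∃ B : ℝ, ∃ E' : ι → ℝ → ℂ, ∀ i t,
    HasDerivAt (E i) (E' i t) t ∧ ‖E i t‖ ≤ B ∧ ‖E' i t‖ ≤ B}
  mul_mem' := by
    rintro E F ⟨B, E', hE⟩ ⟨B', F', hF⟩
    refine ⟨max (B * B') (B * B' + B * B'), E' * F + E * F', fun i t => ?_⟩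
    obtain ⟨hE, hEB, hEB'⟩ := hE i t
    obtain ⟨hF, hFB, hFB'⟩ := hF i t
    refine ⟨hE.mul hF, le_max_of_le_left ?_, le_max_of_le_right (norm_add_le_of_le ?_ ?_)⟩ <;>
      exact norm_mul_le_of_le ‹_› ‹_›
  one_mem' := ⟨1, 0, fun _ t => ⟨hasDerivAt_const t 1, by simp, by simp⟩⟩
  add_mem' := by
    rintro E F ⟨B, E', hE⟩ ⟨B', F', hF⟩
    exact ⟨B + B', E' + F', fun i t => ⟨(hE i t).1.add (hF i t).1,
      norm_add_le_of_le (hE i t).2.1 (hF i t).2.1, norm_add_le_of_le (hE i t).2.2 (hF i t).2.2⟩⟩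
  zero_mem' := ⟨0, 0, fun _ t => ⟨hasDerivAt_const t 0, by simp, by simp⟩⟩
  neg_mem' := by
    rintro E ⟨B, E', hE⟩
    exact ⟨B, -E', fun i t => ⟨(hE i t).1.neg, by simpa using (hE i t).2.1,
      by simpa using (hE i t).2.2⟩⟩

/-- Uniformly bounded families of constant functions on the line: the coefficients in the
expansions of the kernels. -/
def constFamilies (ι : Type*) : Subring (ι → ℝ → ℂ) where
  carrier := {E | ∃ B : ℝ, ∃ c : ι → ℂ, ∀ i, ‖c i‖ ≤ B ∧ ∀ t, E i t = c i}
  mul_mem' := by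
    rintro E F ⟨B, c, hE⟩ ⟨B', c', hF⟩
    exact ⟨B * B', c * c', fun i => ⟨norm_mul_le_of_le (hE i).1 (hF i).1,
      fun t => congrArg₂ (· * ·) ((hE i).2 t) ((hF i).2 t)⟩⟩
  one_mem' := ⟨1, 1, fun _ => ⟨by simp, fun _ => rfl⟩⟩
  add_mem' := by
    rintro E F ⟨B, c, hE⟩ ⟨B', c', hF⟩
    exact ⟨B + B', c + c', fun i => ⟨norm_add_le_of_le (hE i).1 (hF i).1,
      fun t => congrArg₂ (· + ·) ((hE i).2 t) ((hF i).2 t)⟩⟩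
  zero_mem' := ⟨0, 0, fun _ => ⟨by simp, fun _ => rfl⟩⟩
  neg_mem' := by
    rintro E ⟨B, c, hE⟩
    exact ⟨B, -c, fun i => ⟨by simpa using (hE i).1, fun t => congrArg Neg.neg ((hE i).2 t)⟩⟩

lemma constFamilies_le_boundedDerivFamilies : constFamilies ι ≤ boundedDerivFamilies ι := by
  rintro E ⟨B, c, hE⟩
  refine ⟨B, 0, fun i t => ⟨?_, (hE i).2 t ▸ (hE i).1, ?_⟩⟩
  · rw [show E i = fun _ => c i from funext (hE i).2]
    exact hasDerivAt_const t (c i)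
  · simpa using (norm_nonneg _).trans (hE i).1

lemma inv_mem_boundedDerivFamilies {E : ι → ℝ → ℂ} (hE : E ∈ boundedDerivFamilies ι) {δ : ℝ}
    (hδ : 0 < δ) (h : ∀ i t, δ ≤ ‖E i t‖) : E⁻¹ ∈ boundedDerivFamilies ι := by
  obtain ⟨B, E', hE⟩ := hE
  refine ⟨max δ⁻¹ (B / δ ^ 2), fun i t => -E' i t / E i t ^ 2, fun i t => ?_⟩
  obtain ⟨hderiv, -, hB⟩ := hE i t
  refine ⟨hderiv.inv (norm_pos_iff.1 (hδ.trans_le (h i t))), le_max_of_le_left ?_,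
    le_max_of_le_right ?_⟩
  · rw [Pi.inv_apply, Pi.inv_apply, norm_inv]
    gcongr
    exact h i t
  · rw [norm_div, norm_neg, norm_pow]
    have hB0 := (norm_nonneg _).trans hB
    gcongr
    exact h i t

lemma inv_mem_constFamilies {E : ι → ℝ → ℂ} (hE : E ∈ constFamilies ι) {δ : ℝ}
    (hδ : 0 < δ) (h : ∀ i t, δ ≤ ‖E i t‖) : E⁻¹ ∈ constFamilies ι := by
  obtain ⟨B, c, hE⟩ := hE
  refine ⟨δ⁻¹, c⁻¹, fun i => ⟨?_, fun t => congrArg Inv.inv ((hE i).2 t)⟩⟩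
  rw [Pi.inv_apply, norm_inv, ← (hE i).2 0]
  gcongr
  exact h i 0

lemma div_pow_mem_boundedDerivFamilies {y y' r r' : ι → ℝ → ℂ} {B K : ℝ} {n : ℕ}
    (hy : ∀ i t, HasDerivAt (y i) (y' i t) t) (hy0 : ∀ i t, y i t ≠ 0)
    (hyB : ∀ i t, ‖y i t‖ ≤ B) (hyB' : ∀ i t, ‖y' i t‖ ≤ B)
    (hr : ∀ i t, HasDerivAt (r i) (r' i t) t)
    (hrK : ∀ i t, ‖r i t‖ ≤ K * ‖y i t‖ ^ (n + 1)) (hrK' : ∀ i t, ‖r' i t‖ ≤ K * ‖y i t‖ ^ n) :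
    (fun i t => r i t / y i t ^ n) ∈ boundedDerivFamilies ι := by
  refine ⟨max (K * B) (K + K * (n * B)),
    fun i t => r' i t / y i t ^ n - r i t / y i t ^ (n + 1) * (n * y' i t), fun i t => ?_⟩
  have hpos : 0 < ‖y i t‖ := norm_pos_iff.2 (hy0 i t)
  have hquot : ‖r i t / y i t ^ (n + 1)‖ ≤ K := by
    rw [norm_div, norm_pow]
    exact div_le_of_le_mul₀ (by positivity) (nonneg_of_mul_nonneg_left
      ((norm_nonneg _).trans (hrK i t)) (by positivity)) (hrK i t)
  refine ⟨((hr i t).fun_div ((hy i t).fun_pow n) (pow_ne_zero n (hy0 i t))).congr_deriv ?_,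
    le_max_of_le_left ?_, le_max_of_le_right (norm_sub_le_of_le ?_ (norm_mul_le_of_le hquot ?_))⟩
  · have := hy0 i t
    cases n with
    | zero => simp
    | succ n => rw [Nat.add_sub_cancel]; field_simp; ring
  · have hfactor : r i t / y i t ^ n = r i t / y i t ^ (n + 1) * y i t := by
      rw [pow_succ, ← div_div, div_mul_cancel₀ _ (hy0 i t)]
    exact (congrArg norm hfactor).trans_le (norm_mul_le_of_le hquot (hyB i t))
  · rw [norm_div, norm_pow]
    exact div_le_of_le_mul₀ (by positivity) ((norm_nonneg _).trans hquot) (hrK' i t)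
  · exact norm_mul_le_of_le (by simp) (hyB' i t)

lemma exists_norm_le_of_mem_constFamilies {D : ℕ → ι → ℝ → ℂ} (hD : ∀ j, D j ∈ constFamilies ι)
    (n : ℕ) : ∃ B, ∀ j ≤ n, ∀ i t, ‖D j i t‖ ≤ B := by
  choose B c hB using hD
  refine ⟨∑ j ∈ range (n + 1), |B j|, fun j hj i t => ?_⟩
  rw [(hB j i).2 t]
  exact ((hB j i).1.trans (le_abs_self _)).trans
    (single_le_sum (f := fun j => |B j|) (fun _ _ => abs_nonneg _) (mem_range_succ_iff.2 hj))

lemma exists_lipschitzWith_of_mem_boundedDerivFamilies {E : ι → ℝ → ℂ}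
    (hE : E ∈ boundedDerivFamilies ι) : ∃ K : ℝ≥0, ∀ i, LipschitzWith K (E i) := by
  obtain ⟨B, E', hE⟩ := hE
  refine ⟨B.toNNReal, fun i => lipschitzWith_of_nnnorm_deriv_le
    (fun t => (hE i t).1.differentiableAt) fun t => ?_⟩
  rw [(hE i t).1.deriv]
  exact NNReal.le_toNNReal_of_coe_le (hE i t).2.2

lemma exists_inv_pow_sub_sum_mem_boundedDerivFamilies {y v c g : ι → ℝ → ℂ} {m : ℕ} {δ ε : ℝ}
    (hy : y ∈ boundedDerivFamilies ι) (hy0 : ∀ i t, y i t ≠ 0) (hc : c ∈ constFamilies ι)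
    (hδ : 0 < δ) (hcδ : ∀ i t, δ ≤ ‖c i t‖)
    (hg : g ∈ expansions (constFamilies ι) (boundedDerivFamilies ι) y m)
    (hv : v = y * (c + y * g)) (hε : 0 < ε) (hvε : ∀ i t, ε * ‖y i t‖ ≤ ‖v i t‖) :
    ∃ D : ℕ → ι → ℝ → ℂ, (∀ j, D j ∈ constFamilies ι) ∧ (D m)⁻¹ ∈ constFamilies ι ∧
      (∀ i t, D m i t ≠ 0) ∧
      (v ^ (m + 1))⁻¹ - ∑ j ∈ range (m + 1), D j * y⁻¹ ^ (j + 1) ∈ boundedDerivFamilies ι := by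
  have hCS := constFamilies_le_boundedDerivFamilies (ι := ι)
  have hc0 : ∀ i t, c i t ≠ 0 := fun i t => norm_pos_iff.1 (hδ.trans_le (hcδ i t))
  have hquot : ∀ i t, ε ≤ ‖(c + y * g) i t‖ := fun i t => by
    refine le_of_mul_le_mul_right ?_ (norm_pos_iff.2 (hy0 i t))
    rw [mul_comm ‖_‖, ← norm_mul]
    exact (hvε i t).trans_eq (by rw [hv]; rfl)
  have hquot0 : ∀ i t, (c + y * g) i t ≠ 0 := fun i t =>
    norm_pos_iff.1 (hε.trans_le (hquot i t))
  obtain ⟨D, hD, hDm, hrem⟩ := exists_inverse_pow_sub_sum_mem hCS hy (z := y⁻¹)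
    (inv_mem_constFamilies hc hδ hcδ) (by ext i t; exact mul_inv_cancel₀ (hc0 i t)) hg
    (inv_mem_boundedDerivFamilies
      (add_mem (hCS hc) (mul_mem hy (expansions_le hCS hy m hg))) hε hquot)
    (by ext i t; exact mul_inv_cancel₀ (hquot0 i t))
    (by ext i t; exact inv_mul_cancel₀ (hy0 i t))
  refine ⟨D, hD, ?_, fun i t => ?_, ?_⟩
  · rw [hDm, inv_pow, inv_inv]
    exact pow_mem hc _
  · rw [hDm]
    exact pow_ne_zero _ (inv_ne_zero (hc0 i t))
  · rwa [hv, ← inv_pow, mul_inv]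

end Families

lemma exists_sum_mul_add_pow_eq {R : Type*} [CommRing R] (b : ℕ → R) (x y : R) (n : ℕ) :
    ∃ k, ∑ i ∈ range n, b i * (x + y) ^ i = ∑ i ∈ range n, b i * x ^ i +
      (∑ i ∈ range n, b i * (i * x ^ (i - 1))) * y + k * y ^ 2 := by
  refine ⟨∑ i ∈ range n, b i * (Polynomial.powAddExpansion x y i).1, ?_⟩
  simp only [sum_mul, ← sum_add_distrib]
  refine sum_congr rfl fun i _ => ?_
  linear_combination b i * (Polynomial.powAddExpansion x y i).2

section KernelExpansion

variable {γ : ℝ → ℂ} {ι : Type*} {x σ : ι → ℝ}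

/-- The displacements, in the conjugate variable, of the curve `γ` from the points
`normalOffset γ (x i) (σ i)`: the small quantity in which the kernels are expanded. -/
noncomputable def conjDisplacement (γ : ℝ → ℂ) (x σ : ι → ℝ) : ι → ℝ → ℂ :=
  fun i t => conj (γ t - normalOffset γ (x i) (σ i))

namespace IsSmoothJordanCurve

lemma hasDerivAt_conjDisplacement (hγ : IsSmoothJordanCurve γ) (i : ι) (t : ℝ) :
    HasDerivAt (conjDisplacement γ x σ i) (conj (deriv γ t)) t :=
  ((hγ.hasDerivAt t).sub_const _).star

lemma exists_norm_conjDisplacement_le (hγ : IsSmoothJordanCurve γ) {σ₀ : ℝ}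
    (hσ : ∀ i, |σ i| ≤ σ₀) : ∃ B, ∀ i t, ‖conjDisplacement γ x σ i t‖ ≤ B := by
  obtain ⟨C₀, -, h₀⟩ := exists_norm_le_of_periodic hγ.periodic Real.two_pi_pos.ne'
    hγ.contDiff.continuous
  obtain ⟨C₁, -, h₁⟩ := hγ.exists_norm_deriv_le
  refine ⟨C₀ + (C₀ + σ₀ * C₁), fun i t => ?_⟩
  rw [conjDisplacement, RCLike.norm_conj]
  refine norm_sub_le_of_le (h₀ t) (norm_add_le_of_le (h₀ _) ?_)
  simpa using mul_le_mul (hσ i) (h₁ (x i)) (norm_nonneg _) ((abs_nonneg _).trans (hσ i))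

lemma conjDisplacement_mem (hγ : IsSmoothJordanCurve γ) {σ₀ : ℝ} (hσ : ∀ i, |σ i| ≤ σ₀) :
    conjDisplacement γ x σ ∈ boundedDerivFamilies ι := by
  obtain ⟨B, hB⟩ := hγ.exists_norm_conjDisplacement_le (x := x) hσ
  obtain ⟨C, -, hC⟩ := hγ.exists_norm_deriv_le
  exact ⟨max B C, fun _ t => conj (deriv γ t), fun i t => ⟨hγ.hasDerivAt_conjDisplacement i t,
    le_max_of_le_left (hB i t), le_max_of_le_right (by rw [RCLike.norm_conj]; exact hC t)⟩⟩

lemma normalDisplacement_mem_constFamilies (hγ : IsSmoothJordanCurve γ) {σ₀ : ℝ}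
    (hσ : ∀ i, |σ i| ≤ σ₀) :
    (fun i _ => conj (normalOffset γ (x i) (σ i) - γ (x i))) ∈ constFamilies ι := by
  obtain ⟨C, -, hC⟩ := hγ.exists_norm_deriv_le
  refine ⟨σ₀ * C, _, fun i => ⟨?_, fun _ => rfl⟩⟩
  rw [RCLike.norm_conj, norm_normalOffset_sub]
  exact mul_le_mul (hσ i) (hC _) (norm_nonneg _) ((abs_nonneg _).trans (hσ i))

lemma schwarzCoefficient_mem_constFamilies (hγ : IsSmoothJordanCurve γ) (x : ι → ℝ) (k j : ℕ) :
    (fun i _ => schwarzJet γ (k + j) (x i) / j.factorial) ∈ constFamilies ι := by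
  obtain ⟨C, -, hC⟩ := hγ.exists_norm_schwarzJet_le (k + j)
  refine ⟨C / j.factorial, _, fun i => ⟨?_, fun _ => rfl⟩⟩
  rw [norm_div, Complex.norm_natCast]
  gcongr
  exact hC _

lemma schwarzTaylor_mem_constFamilies (hγ : IsSmoothJordanCurve γ) {σ₀ : ℝ}
    (hσ : ∀ i, |σ i| ≤ σ₀) (k L : ℕ) :
    (fun i _ => schwarzTaylor γ k L (x i) (conj (normalOffset γ (x i) (σ i) - γ (x i)))) ∈
      constFamilies ι := by
  convert sum_mem fun j (_ : j ∈ range (L + 1)) =>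
    mul_mem (hγ.schwarzCoefficient_mem_constFamilies x k j)
      (pow_mem (hγ.normalDisplacement_mem_constFamilies (x := x) hσ) j) using 1
  ext i t
  simp [schwarzTaylor]

lemma exists_conjDisplacement_ne_zero (hγ : IsSmoothJordanCurve γ) :
    ∃ σ₀, 0 < σ₀ ∧ ∀ {ι : Type*} {x σ : ι → ℝ}, (∀ i, σ i ≠ 0) → (∀ i, |σ i| ≤ σ₀) →
      ∀ i t, conjDisplacement γ x σ i t ≠ 0 := by
  obtain ⟨σ₀, hσ₀, c, hc, hlow⟩ := hγ.exists_mul_le_norm_sub_normalOffset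
  refine ⟨σ₀, hσ₀, fun h0 hσ i t => (map_ne_zero _).2 (norm_pos_iff.1 ?_)⟩
  have := abs_pos.2 (h0 i)
  exact (by positivity : 0 < c * |_|).trans_le (hlow _ _ (hσ i) t)

lemma exists_schwarzRemainder_eq_pow_mul (hγ : IsSmoothJordanCurve γ) (L : ℕ) :
    ∃ σ₀, 0 < σ₀ ∧ ∀ {ι : Type*} {x σ : ι → ℝ}, (∀ i, σ i ≠ 0) → (∀ i, |σ i| ≤ σ₀) →
      ∃ r ∈ boundedDerivFamilies ι, ∀ i t, schwarzRemainder γ 0 (L + 1) (x i) t =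
        conjDisplacement γ x σ i t ^ (L + 1) * r i t := by
  obtain ⟨σ₁, hσ₁, hne⟩ := hγ.exists_conjDisplacement_ne_zero
  obtain ⟨σ₂, hσ₂, K₀, -, hR₀⟩ :=
    hγ.exists_norm_schwarzRemainder_le_mul_norm_sub_normalOffset 0 (L + 1)
  obtain ⟨σ₃, hσ₃, K₁, -, hR₁⟩ :=
    hγ.exists_norm_schwarzRemainder_le_mul_norm_sub_normalOffset 1 L
  obtain ⟨C, -, hderiv⟩ := hγ.exists_norm_deriv_le
  refine ⟨min σ₁ (min σ₂ σ₃), by positivity, fun {ι x σ} h0 hσ => ?_⟩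
  simp only [le_min_iff] at hσ
  have hy0 : ∀ i t, conjDisplacement γ x σ i t ≠ 0 := hne h0 fun i => (hσ i).1
  obtain ⟨B, hB⟩ := hγ.exists_norm_conjDisplacement_le (x := x) fun i => (hσ i).1
  refine ⟨_, div_pow_mem_boundedDerivFamilies (B := max B C) (K := max K₀ (C * K₁)) (n := L + 1)
    hγ.hasDerivAt_conjDisplacement hy0 (fun i t => le_max_of_le_left (hB i t))
    (fun _ t => le_max_of_le_right (by rw [RCLike.norm_conj]; exact hderiv t))
    (fun i => hγ.hasDerivAt_schwarzRemainder 0 L (x i)) (fun i t => ?_) fun i t => ?_,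
    fun i t => (mul_div_cancel₀ _ (pow_ne_zero _ (hy0 i t))).symm⟩
  · rw [conjDisplacement, RCLike.norm_conj]
    exact (hR₀ (x i) (σ i) (hσ i).2.1 t).trans (by gcongr; exact le_max_left _ _)
  · rw [conjDisplacement, RCLike.norm_conj]
    exact (norm_mul_le_of_le ((RCLike.norm_conj _).trans_le (hderiv t))
      (hR₁ (x i) (σ i) (hσ i).2.2 t)).trans
        (by rw [← mul_assoc]; gcongr; exact le_max_right _ _)

lemma exists_schwarzTaylor_eq (hγ : IsSmoothJordanCurve γ) {σ₀ : ℝ} (hσ : ∀ i, |σ i| ≤ σ₀)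
    (L n : ℕ) :
    ∃ k ∈ expansions (constFamilies ι) (boundedDerivFamilies ι) (conjDisplacement γ x σ) n,
      ∀ i t, schwarzTaylor γ 0 (L + 1) (x i) (conj (γ t - γ (x i))) =
        schwarzReflection γ (L + 1) (x i) (σ i) +
          schwarzTaylor γ 1 L (x i) (conj (normalOffset γ (x i) (σ i) - γ (x i))) *
            conjDisplacement γ x σ i t + k i t * conjDisplacement γ x σ i t ^ 2 := by
  have hCS := constFamilies_le_boundedDerivFamilies (ι := ι)
  have hy := hγ.conjDisplacement_mem (x := x) hσ
  let T := expansionSubring hCS hy n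
  have hC : ∀ {E}, E ∈ constFamilies ι → E ∈ T := fun hE => mem_expansions_of_mem hCS hE n
  let b : ℕ → T := fun j => ⟨_, hC (hγ.schwarzCoefficient_mem_constFamilies x 0 j)⟩
  let η : T := ⟨_, hC (hγ.normalDisplacement_mem_constFamilies (x := x) hσ)⟩
  obtain ⟨k, hk⟩ := exists_sum_mul_add_pow_eq b η ⟨_, self_mem_expansions hCS hy n⟩ (L + 2)
  refine ⟨k, k.2, fun i t => ?_⟩
  have hpoint : conj (γ t - γ (x i)) =
      conj (normalOffset γ (x i) (σ i) - γ (x i)) + conjDisplacement γ x σ i t := by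
    rw [conjDisplacement, ← map_add]
    congr 1
    ring
  have hkit := congrFun (congrFun (congrArg Subtype.val hk) i) t
  rw [hpoint, ← sum_schwarzJet_mul_deriv_pow, schwarzReflection, schwarzTaylor, schwarzTaylor]
  simpa [b, η, T] using hkit

lemma exists_sub_schwarzReflection_eq (hγ : IsSmoothJordanCurve γ) (m : ℕ) :
    ∃ σ₀, 0 < σ₀ ∧ ∀ {ι : Type*} {x σ : ι → ℝ}, (∀ i, σ i ≠ 0) → (∀ i, |σ i| ≤ σ₀) →
      ∃ g ∈ expansions (constFamilies ι) (boundedDerivFamilies ι) (conjDisplacement γ x σ) m,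
        ∀ i t, γ t - schwarzReflection γ (m + 2) (x i) (σ i) = conjDisplacement γ x σ i t *
          (schwarzTaylor γ 1 (m + 1) (x i) (conj (normalOffset γ (x i) (σ i) - γ (x i))) +
            conjDisplacement γ x σ i t * g i t) := by
  obtain ⟨σ₀, hσ₀, hrem⟩ := hγ.exists_schwarzRemainder_eq_pow_mul (m + 1)
  refine ⟨σ₀, hσ₀, fun {ι x σ} h0 hσ => ?_⟩
  obtain ⟨r, hr, hRr⟩ := hrem (x := x) h0 hσ
  obtain ⟨k, hk, htaylor⟩ := hγ.exists_schwarzTaylor_eq (x := x) hσ (m + 1) m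
  refine ⟨_, add_mem hk (pow_mul_mem_expansions hr m), fun i t => ?_⟩
  simp only [Pi.add_apply, Pi.mul_apply, Pi.pow_apply]
  linear_combination htaylor i t + hRr i t -
    schwarzTaylor_add_schwarzRemainder γ (m + 2) (x i) t

lemma exists_inv_pow_sub_sum_mem (hγ : IsSmoothJordanCurve γ) (m : ℕ) :
    ∃ σ₀, 0 < σ₀ ∧ ∀ {ι : Type*} {x σ : ι → ℝ}, (∀ i, σ i ≠ 0) → (∀ i, |σ i| ≤ σ₀) →
      ∃ D : ℕ → ι → ℝ → ℂ, (∀ j, D j ∈ constFamilies ι) ∧ (D m)⁻¹ ∈ constFamilies ι ∧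
        (∀ i t, D m i t ≠ 0) ∧
        ((fun i t => γ t - schwarzReflection γ (m + 2) (x i) (σ i)) ^ (m + 1))⁻¹ -
          ∑ j ∈ range (m + 1), D j * (conjDisplacement γ x σ)⁻¹ ^ (j + 1) ∈
            boundedDerivFamilies ι := by
  obtain ⟨σ₁, hσ₁, hne⟩ := hγ.exists_conjDisplacement_ne_zero
  obtain ⟨σ₂, hσ₂, hexp⟩ := hγ.exists_sub_schwarzReflection_eq m
  obtain ⟨σ₃, hσ₃, hhalf⟩ := hγ.exists_half_le_norm_schwarzTaylor_one (m + 1)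
  obtain ⟨σ₄, hσ₄, δ, hδ, hlow⟩ := hγ.exists_mul_norm_sub_normalOffset_le (m + 1)
  refine ⟨min (min σ₁ σ₂) (min σ₃ σ₄), by positivity, fun {ι x σ} h0 hσ => ?_⟩
  simp only [le_min_iff] at hσ
  have hσ₁ : ∀ i, |σ i| ≤ σ₁ := fun i => (hσ i).1.1
  obtain ⟨g, hg, hv⟩ := hexp (x := x) h0 fun i => (hσ i).1.2
  refine exists_inv_pow_sub_sum_mem_boundedDerivFamilies (hγ.conjDisplacement_mem hσ₁)
    (hne h0 hσ₁) (hγ.schwarzTaylor_mem_constFamilies hσ₁ 1 (m + 1)) one_half_pos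
    (fun i _ => hhalf (x i) (σ i) (hσ i).2.1) hg (funext₂ hv) hδ fun i t => ?_
  exact (congrArg _ (RCLike.norm_conj _)).trans_le (hlow (x i) (σ i) (hσ i).2.2 t)

end IsSmoothJordanCurve

end KernelExpansion

namespace IsSmoothJordanCurve

variable {γ : ℝ → ℂ} {Ω : Set ℂ}

lemma exists_lipschitzOnWith_range (hγ : IsSmoothJordanCurve γ) :
    ∃ K : ℝ≥0, ∀ (F : ℂ → ℂ) (B : ℝ≥0), LipschitzWith B (F ∘ γ) →
      LipschitzOnWith (B * K) F (Set.range γ) := by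
  obtain ⟨c, hc, hchord⟩ := hγ.exists_mul_abs_sub_le_norm_sub
  refine ⟨c⁻¹.toNNReal, fun F B hF => LipschitzOnWith.of_dist_le_mul ?_⟩
  rintro _ ⟨t, rfl⟩ _ ⟨s, rfl⟩
  have hperiodic : Function.Periodic (fun t => dist (F (γ t)) (F (γ s)) ≤
      (B * c⁻¹.toNNReal : ℝ≥0) * dist (γ t) (γ s)) (2 * Real.pi) := fun t => by
    simp only [hγ.periodic t]
  refine of_periodic_of_abs_sub_le hperiodic Real.two_pi_pos s (fun t ht => ?_) t
  calc dist (F (γ t)) (F (γ s)) ≤ B * |t - s| := hF.dist_le_mul t s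
    _ ≤ B * (c⁻¹ * ‖γ t - γ s‖) := by
      gcongr
      rw [inv_mul_eq_div, le_div_iff₀' hc]
      exact hchord s t (ht.trans_eq (by ring))
    _ = _ := by rw [NNReal.coe_mul, Real.coe_toNNReal _ (by positivity), dist_eq_norm, mul_assoc]

lemma exists_isReflectedKernel_schwarzReflection (hγ : IsSmoothJordanCurve γ)
    (hbd : frontier Ω = Set.range γ) (m : ℕ) :
    ∃ σ₀, 0 < σ₀ ∧ ∃ C : ℝ≥0, ∀ x σ, σ ≠ 0 → |σ| ≤ σ₀ →
      ∃ D, IsReflectedKernel Ω m C (normalOffset γ x σ) (schwarzReflection γ (m + 2) x σ) D := by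
  obtain ⟨σ₀, hσ₀, hexp⟩ := hγ.exists_inv_pow_sub_sum_mem m
  obtain ⟨K, hK⟩ := hγ.exists_lipschitzOnWith_range
  let ι := {p : ℝ × ℝ // p.2 ≠ 0 ∧ |p.2| ≤ σ₀}
  obtain ⟨D, hD, hDinv, hD0, hrem⟩ := hexp (ι := ι) (x := fun p => p.1.1) (σ := fun p => p.1.2)
    (fun p => p.2.1) fun p => p.2.2
  obtain ⟨B, hB⟩ := exists_norm_le_of_mem_constFamilies hD m
  obtain ⟨B', hB'⟩ := exists_norm_le_of_mem_constFamilies (fun _ : ℕ => hDinv) 0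
  obtain ⟨L, hL⟩ := exists_lipschitzWith_of_mem_boundedDerivFamilies hrem
  refine ⟨σ₀, hσ₀, max (L * K) (max B.toNNReal B'.toNNReal), fun x σ h0 hσ => ?_⟩
  let p : ι := ⟨(x, σ), h0, hσ⟩
  have hconst : ∀ j t, D j p t = D j p 0 := fun j t => by
    obtain ⟨_, _, hc⟩ := hD j
    rw [(hc p).2, (hc p).2]
  refine ⟨fun j => D j p 0, fun j hj => ?_, ?_, ?_⟩
  · exact (hB j hj p 0).trans ((Real.le_coe_toNNReal B).trans
      (NNReal.coe_le_coe.2 ((le_max_left _ _).trans (le_max_right _ _))))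
  · have hle : ‖(D m p 0)⁻¹‖ ≤ _ := (hB' 0 le_rfl p 0).trans ((Real.le_coe_toNNReal B').trans
      (NNReal.coe_le_coe.2 ((le_max_right _ _).trans
        (le_max_right (L * K) (max B.toNNReal _)))))
    rwa [norm_inv, inv_le_iff_one_le_mul₀ (norm_pos_iff.2 (hD0 p 0))] at hle
  · rw [hbd]
    refine (hK _ L ?_).weaken (le_max_left _ _)
    convert hL p using 1
    ext t
    simp [hconst _ t, conjDisplacement, p]

lemma exists_schwarzReflection_notMem_closure (hγ : IsSmoothJordanCurve γ) (hΩ : IsOpen Ω)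
    (hb : Bornology.IsBounded Ω) (hbd : frontier Ω = Set.range γ) (L : ℕ) :
    ∃ σ₀, 0 < σ₀ ∧ ∀ x σ, σ ≠ 0 → |σ| ≤ σ₀ → normalOffset γ x σ ∈ Ω →
      schwarzReflection γ (L + 1) x σ ∉ closure Ω := by
  obtain ⟨σ₁, hσ₁, c, hc, hout⟩ := hγ.exists_reflected_normalOffset_notMem_closure hΩ hb hbd
  obtain ⟨σ₂, hσ₂, K, hK, hnear⟩ := hγ.exists_norm_schwarzReflection_sub_le L
  refine ⟨min (min σ₁ σ₂) (c / (2 * K)), by positivity, fun x σ h0 hσ ha => ?_⟩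
  simp only [le_min_iff] at hσ
  refine hout x σ h0 hσ.1.1 ha _ ((hnear x σ hσ.1.2).trans_lt ?_)
  calc K * |σ| ^ 2 = K * |σ| * |σ| := by ring
    _ ≤ K * (c / (2 * K)) * |σ| := by gcongr; exact hσ.2
    _ = c / 2 * |σ| := by field_simp
    _ < c * |σ| := by gcongr; exact half_lt_self hc

theorem hasReflectedKernels (hγ : IsSmoothJordanCurve γ) (hΩ : IsOpen Ω)
    (hb : Bornology.IsBounded Ω) (hbd : frontier Ω = Set.range γ) : HasReflectedKernels Ω := by
  intro m
  obtain ⟨σ₁, hσ₁, C, hkernel⟩ := hγ.exists_isReflectedKernel_schwarzReflection hbd m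
  obtain ⟨σ₂, hσ₂, hout⟩ := hγ.exists_schwarzReflection_notMem_closure hΩ hb hbd (m + 1)
  obtain ⟨K, hK, hfoot⟩ := hγ.exists_normalOffset_eq_of_mem hΩ hb hbd
  refine ⟨min σ₁ σ₂ / K, by positivity, C, fun a ha hdist => ?_⟩
  obtain ⟨x, -, σ, rfl, h0, hσ⟩ := hfoot a ha
  have hsmall : |σ| ≤ min σ₁ σ₂ := hσ.trans ((lt_div_iff₀' hK).1 hdist).le
  exact ⟨_, hout x σ h0 (hsmall.trans (min_le_right _ _)) ha,
    hkernel x σ h0 (hsmall.trans (min_le_left _ _))⟩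

end IsSmoothJordanCurve

lemma iteratedDeriv_eq_conjCauchyTransform {Ω : Set ℂ} {h H : ℂ → ℂ}
    (hH : ∀ w ∉ closure Ω, conj (H w) = ∫ z in Ω, h z / (conj z - conj w)) {w : ℂ}
    (hw : w ∉ closure Ω) (k : ℕ) :
    iteratedDeriv k H w = iteratedDeriv k (conjCauchyTransform Ω h) w := by
  refine EventuallyEq.iteratedDeriv_eq k ?_
  filter_upwards [isClosed_closure.isOpen_compl.mem_nhds hw] with w hw
  rw [conjCauchyTransform, ← Complex.conj_conj (H w), hH w hw, ← integral_conj]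
  simp only [map_div₀, map_sub, Complex.conj_conj]

lemma integrableOn_of_integrableOn_norm_sq {α E : Type*} [MeasurableSpace α]
    [NormedAddCommGroup E] {μ : Measure α} {s : Set α} {h : α → E} (hs : μ s ≠ ⊤)
    (hm : AEStronglyMeasurable h (μ.restrict s)) (h2 : IntegrableOn (fun z => ‖h z‖ ^ 2) s μ) :
    IntegrableOn h s μ := by
  have : IsFiniteMeasure (μ.restrict s) := isFiniteMeasure_restrict.2 hs
  exact ((memLp_two_iff_integrable_sq_norm hm).2 h2).integrable one_le_two

end ExteriorCauchy

theorem sup_derivative_bound_inside_from_outside_general {Ω : Set ℂ} (hΩ : IsOpen Ω)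
    (hb : Bornology.IsBounded Ω) {γ : ℝ → ℂ} (hγ : ExteriorCauchy.IsSmoothJordanCurve γ)
    (hbd : frontier Ω = Set.range γ) (N : ℕ) :
    ∃ C : ℝ, 0 < C ∧ ∀ h H : ℂ → ℂ, DifferentiableOn ℂ h Ω → IntegrableOn h Ω →
      (∀ w ∉ closure Ω, (starRingEnd ℂ) (H w)
        = ∫ z in Ω, h z / ((starRingEnd ℂ) z - (starRingEnd ℂ) w)) →
      ∀ B : ℝ, (∀ w ∉ closure Ω, ∀ k ≤ N + 1, ‖iteratedDeriv k H w‖ ≤ B) →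
        ∀ z ∈ Ω, ∀ k ≤ N, ‖iteratedDeriv k h z‖ ≤ C * B := by
  obtain ⟨c, hc, hlayer⟩ := hγ.exists_volume_innerLayer_le hΩ hb hbd
  obtain ⟨C, hC, hbound⟩ := (hγ.hasReflectedKernels hΩ hb hbd).exists_norm_iteratedDeriv_le_mul
    hΩ hb (hγ.frontier_subset_closure_compl_closure hΩ hb hbd) hc hlayer N
  refine ⟨C, hC, fun h H hh hi hH B hB => hbound h hh hi B fun w hw k hk => ?_⟩
  rw [← ExteriorCauchy.iteratedDeriv_eq_conjCauchyTransform hH hw]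
  exact hB w hw k hk

/-- Theorem 4.1: let `Ω` be a bounded simply connected domain whose boundary is a
simple closed `C^∞`-smooth curve. For `h` holomorphic and square-integrable on `Ω`,
let `H` be the holomorphic function on the exterior of `Ω` defined by
`conj (H w) = ∬_{z∈Ω} h(z)/(z̄ − w̄) dA_z`. Then for every positive integer `N`
there are a positive integer `M` and `C > 0`, depending only on `Ω` and `N`, such
that if the `C^M`-norm of `H` on the exterior is finite (bounded by `B`), then the
`C^N`-norm of `h` on `Ω` is bounded by `C·B`. -/
theorem sup_derivative_bound_inside_from_outside
    (Ω : Set ℂ) (hΩopen : IsOpen Ω) (hΩconn : IsConnected Ω)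
    (hΩbdd : Bornology.IsBounded Ω) (hΩsc : SimplyConnectedSpace Ω)
    (γ : ℝ → ℂ) (hγsmooth : ContDiff ℝ (⊤ : ℕ∞) γ)
    (hγper : Function.Periodic γ (2 * Real.pi))
    (hγinj : Set.InjOn γ (Set.Ico 0 (2 * Real.pi)))
    (hγreg : ∀ t, deriv γ t ≠ 0)
    (hγbd : frontier Ω = Set.range γ)
    (N : ℕ) (hN : 0 < N) :
    ∃ M : ℕ, 0 < M ∧ ∃ C : ℝ, 0 < C ∧
      ∀ h H : ℂ → ℂ,
        DifferentiableOn ℂ h Ω →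
        IntegrableOn (fun z => ‖h z‖ ^ 2) Ω volume →
        DifferentiableOn ℂ H (closure Ω)ᶜ →
        (∀ w ∉ closure Ω,
          (starRingEnd ℂ) (H w)
            = ∫ z in Ω, h z / ((starRingEnd ℂ) z - (starRingEnd ℂ) w)) →
        ∀ B : ℝ,
          (∀ w ∉ closure Ω, ∀ k ≤ M, ‖iteratedDeriv k H w‖ ≤ B) →
          ∀ z ∈ Ω, ∀ k ≤ N, ‖iteratedDeriv k h z‖ ≤ C * B := by
  obtain ⟨C, hC, hbound⟩ := sup_derivative_bound_inside_from_outside_general hΩopen hΩbdd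
    ⟨hγsmooth, hγper, hγinj, hγreg⟩ hγbd N
  refine ⟨N + 1, N.succ_pos, C, hC, fun h H hh h2 _ hH => hbound h H hh ?_ hH⟩
  exact ExteriorCauchy.integrableOn_of_integrableOn_norm_sq hΩbdd.measure_lt_top.ne
    (hh.continuousOn.aestronglyMeasurable hΩopen.measurableSet) h2
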